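/- arXiv:1904.10815 — 17 statements merged into one kernel-verified Lean document; each statement's English description precedes it below -/
import Mathlib

section
/- Let f : ℝ_{≥0} → ℝ_{≥0} be strictly increasing and α ∈ [0,1). If the set X(f,α) = { f(n)·e^{2πi n α} : n ∈ ℕ } ⊂ ℂ is r-relatively dense, then limsup_{n→∞} f(n)/√n ≤ 2r. -/
/-- The spiral point set `X(f,α) = { f(n)·e^{2πi n α} : n ∈ ℕ } ⊆ ℂ` for
`f : ℝ≥0 → ℝ≥0` and angle `α`. -/
noncomputable def spiralSet (f : NNReal → NNReal) (α : ℝ) : Set ℂ :=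
  {z : ℂ | ∃ n : ℕ, z = (f n : ℝ) * Complex.exp (2 * Real.pi * Complex.I * (n * α))}

/-- If `f : ℝ≥0 → ℝ≥0` is strictly increasing, `α ∈ [0,1)`, and
`X(f,α)` is `r`-relatively dense (every open ball of radius `r` meets it), then
`limsup_{n→∞} f(n)/√n ≤ 2r`. -/
theorem limsup_le_of_relatively_dense
    (f : NNReal → NNReal) (hf : StrictMono f)
    (α : ℝ) (hα : α ∈ Set.Ico (0 : ℝ) 1) (r : ℝ) (hr : 0 < r)
    (hdense : ∀ x : ℂ, ∃ z ∈ spiralSet f α, z ∈ Metric.ball x r) :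
    Filter.limsup (fun n : ℕ => (((f n : ℝ) / Real.sqrt n : ℝ) : EReal))
      Filter.atTop ≤ ((2 * r : ℝ) : EReal) := by
  refine Filter.limsup_le_of_le (h := ?_)
  filter_upwards [Filter.eventually_ge_atTop 1] with n hn
  rw [EReal.coe_le_coe_iff]
  have hn1 : (1 : ℝ) ≤ n := by exact_mod_cast hn
  have hs : 1 ≤ Real.sqrt n := Real.one_le_sqrt.mpr hn1
  rw [div_le_iff₀ (by linarith)]
  by_cases hfr : (f n : ℝ) < r
  · nlinarith
  push Not at hfr
  let p : ℕ → ℂ := fun k => (f k : ℝ) * Complex.exp (2 * Real.pi * Complex.I * (k * α))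
  have hp : ∀ k, ‖p k‖ = f k := by
    intro k
    have h : (2 * Real.pi * Complex.I * (k * α) : ℂ)
        = ((2 * Real.pi * (k * α) : ℝ) : ℂ) * Complex.I := by
      push_cast; ring
    simp only [p]
    rw [h, norm_mul, Complex.norm_exp_ofReal_mul_I, Complex.norm_real, mul_one]
    simp
  have hsub : Metric.ball (0 : ℂ) (f n - r) ⊆ ⋃ k ∈ Finset.range n, Metric.ball (p k) r := by
    intro x hx
    obtain ⟨z, ⟨k, hk⟩, hz⟩ := hdense x
    change z = p k at hk
    subst hk
    rw [Metric.mem_ball, dist_zero_right] at hx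
    rw [Metric.mem_ball] at hz
    have h1 : ‖p k‖ ≤ ‖x‖ + dist (p k) x := by
      rw [dist_eq_norm]
      calc ‖p k‖ = ‖x + (p k - x)‖ := by congr 1; ring
        _ ≤ _ := norm_add_le _ _
    rw [hp] at h1
    have h2 : (f k : ℝ) < f n := by linarith
    have h3 : (k : NNReal) < n := hf.lt_iff_lt.mp (by exact_mod_cast h2)
    have h4 : k < n := by exact_mod_cast h3
    simp only [Set.mem_iUnion, Finset.mem_range]
    exact ⟨k, h4, by rw [Metric.mem_ball, dist_comm]; exact hz⟩
  have hm := (MeasureTheory.measure_mono (μ := MeasureTheory.volume) hsub).trans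
    (MeasureTheory.measure_biUnion_finset_le _ _)
  simp only [Complex.volume_ball, Finset.sum_const, Finset.card_range, nsmul_eq_mul] at hm
  rw [← mul_assoc] at hm
  have hm2 := (ENNReal.mul_le_mul_iff_left (by simp [NNReal.pi_ne_zero]) (by simp)).mp hm
  rw [← ENNReal.ofReal_pow (by linarith), ← ENNReal.ofReal_pow hr.le,
    ← ENNReal.ofReal_natCast, ← ENNReal.ofReal_mul (by positivity),
    ENNReal.ofReal_le_ofReal_iff (by positivity)] at hm2
  have h5 : (f n : ℝ) - r ≤ Real.sqrt n * r := by
    refine (sq_le_sq₀ (by linarith) (by positivity)).mp ?_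
    rw [mul_pow, Real.sq_sqrt (by positivity)]
    exact hm2
  nlinarith
end

section
/- Let f : ℝ_{≥0} → ℝ_{≥0} be strictly increasing and α ∈ [0,1). If the set X(f,α) = { f(n)·e^{2πi n α} : n ∈ ℕ } ⊂ ℂ is s-uniformly discrete, then liminf_{n→∞} f(n)/√n ≥ s/2. -/
theorem liminf_ge_of_uniformly_discrete
    (f : NNReal → NNReal) (hf : StrictMono f)
    (α : ℝ) (hα : α ∈ Set.Ico (0 : ℝ) 1) (s : ℝ) (hs : 0 < s)
    (hdisc : ∀ x : ℂ, Set.Subsingleton (spiralSet f α ∩ Metric.ball x s)) :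
    ((s / 2 : ℝ) : EReal) ≤
      Filter.liminf (fun n : ℕ => (((f n : ℝ) / Real.sqrt n : ℝ) : EReal))
        Filter.atTop := by
  obtain ⟨z, hz⟩ : ∃ z : ℕ → ℂ, ∀ n : ℕ, z n = ((f n : ℝ) : ℂ) *
      Complex.exp (2 * Real.pi * Complex.I * (n * α)) := ⟨_, fun _ => rfl⟩
  have hnorm : ∀ n, ‖z n‖ = f n := by
    intro n
    have h1 : (2 * Real.pi * Complex.I * (n * α) : ℂ)
        = ((2 * Real.pi * (n * α) : ℝ) : ℂ) * Complex.I := by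
      push_cast
      ring
    rw [hz, norm_mul, h1, Complex.norm_exp_ofReal_mul_I, mul_one]
    simp
  have hinj : ∀ i j, z i = z j → i = j := by
    intro i j h
    have h2 : ((f i : NNReal) : ℝ) = f j := by rw [← hnorm, ← hnorm, h]
    exact_mod_cast hf.injective (NNReal.coe_injective h2)
  have hdisj : ∀ i j, i ≠ j → Disjoint (Metric.ball (z i) s) (Metric.ball (z j) s) := by
    intro i j hij
    rw [Set.disjoint_left]
    intro y hy hy'
    rw [Metric.mem_ball_comm] at hy hy'
    exact hij (hinj _ _ (hdisc y ⟨⟨i, hz i⟩, hy⟩ ⟨⟨j, hz j⟩, hy'⟩))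
  have key : ∀ n : ℕ, (n : ℝ) * s ^ 2 ≤ ((f n : ℝ) + s) ^ 2 := by
    intro n
    have hsub : (⋃ i ∈ Finset.range n, Metric.ball (z i) s) ⊆ Metric.ball 0 ((f n : ℝ) + s) := by
      refine Set.iUnion₂_subset fun i hi => ?_
      apply Metric.ball_subset_ball'
      rw [dist_zero_right, hnorm]
      have hle : f i ≤ f n := hf.monotone (by exact_mod_cast (Finset.mem_range.1 hi).le)
      have hle' : (f i : ℝ) ≤ f n := by exact_mod_cast hle
      linarith
    have hm := MeasureTheory.measure_mono (μ := MeasureTheory.volume) hsub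
    rw [MeasureTheory.measure_biUnion_finset (fun i _ j _ hij => hdisj i j hij)
      (fun i _ => measurableSet_ball)] at hm
    simp only [Complex.volume_ball, Finset.sum_const, Finset.card_range, nsmul_eq_mul] at hm
    have h3 := ENNReal.toReal_mono (by finiteness) hm
    have hp : (0:ℝ) ≤ f n + s := by positivity
    simp only [ENNReal.toReal_mul, ENNReal.toReal_pow, ENNReal.toReal_ofReal hs.le,
      ENNReal.toReal_ofReal hp, ENNReal.toReal_natCast, ENNReal.coe_toReal,
      NNReal.coe_real_pi] at h3
    rw [← mul_assoc] at h3
    exact le_of_mul_le_mul_right h3 Real.pi_pos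
  refine Filter.le_liminf_of_le (by isBoundedDefault) ?_
  filter_upwards [Filter.eventually_ge_atTop 4] with n hn
  rw [EReal.coe_le_coe_iff]
  have hn' : (4:ℝ) ≤ n := by exact_mod_cast hn
  have hsq : 2 ≤ Real.sqrt n := Real.le_sqrt_of_sq_le (by linarith)
  rw [le_div_iff₀ (by linarith)]
  have h4 : Real.sqrt n * s ≤ f n + s := by
    refine le_of_pow_le_pow_left₀ two_ne_zero (by positivity) ?_
    rw [mul_pow, Real.sq_sqrt (by linarith)]
    exact key n
  nlinarith
end

section
/- Let α ∈ [0,1) be irrational. The set X(√t, α) = { √n · e^{2πi n α} : n ∈ ℕ } ⊂ ℂ is relatively dense if and only if α is badly approximable. -/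
/-- The Fermat-spiral point set `X(√t, α) = { √n·e^{2πi n α} : n ∈ ℕ } ⊆ ℂ`. -/
noncomputable def fermatSpiral (α : ℝ) : Set ℂ :=
  {z : ℂ | ∃ n : ℕ, z = Real.sqrt n * Complex.exp (2 * Real.pi * Complex.I * (n * α))}

/-- `X ⊆ ℂ` is relatively dense: some radius `r > 0` such that every open ball of
radius `r` meets `X`. -/
def IsRelativelyDense (X : Set ℂ) : Prop :=
  ∃ r : ℝ, 0 < r ∧ ∀ x : ℂ, ∃ z ∈ X, z ∈ Metric.ball x r

/-- `α` is badly approximable: `q·|qα − p| ≥ C > 0` for all `p ∈ ℤ`, `q ∈ ℕ`, `q ≥ 1`. -/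
def IsBadlyApproximable (α : ℝ) : Prop :=
  ∃ C : ℝ, 0 < C ∧ ∀ (p : ℤ) (q : ℕ), 1 ≤ q → C ≤ (q : ℝ) * |(q : ℝ) * α - (p : ℝ)|

/-- The additive character `t ↦ e^{2πit}`. -/
noncomputable def fsE (t : ℝ) : ℂ := Complex.exp (Complex.I * ((2 * Real.pi * t : ℝ) : ℂ))

lemma fsE_norm (t : ℝ) : ‖fsE t‖ = 1 := by
  unfold fsE
  rw [mul_comm]
  exact Complex.norm_exp_ofReal_mul_I _

lemma fsE_add (s t : ℝ) : fsE (s + t) = fsE s * fsE t := by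
  unfold fsE
  rw [← Complex.exp_add]
  congr 1
  push_cast
  ring

lemma fsE_int (k : ℤ) : fsE k = 1 := by
  unfold fsE
  rw [Complex.exp_eq_one_iff]
  exact ⟨k, by push_cast; ring⟩

lemma fsE_sub_norm (s t : ℝ) : ‖fsE s - fsE t‖ = ‖fsE (s - t) - 1‖ := by
  have h : fsE s - fsE t = fsE t * (fsE (s - t) - 1) := by
    rw [mul_sub, ← fsE_add]
    simp
  rw [h, norm_mul, fsE_norm, one_mul]

lemma fsE_upper (s t : ℝ) (k : ℤ) : ‖fsE s - fsE t‖ ≤ 2 * Real.pi * |s - t - k| := by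
  have h1 : fsE s = fsE (s - k) := by
    have := fsE_add (s - k) k
    rw [fsE_int, mul_one] at this
    rw [← this]
    congr 1
    ring
  rw [h1, fsE_sub_norm]
  unfold fsE
  rw [Complex.norm_exp_I_mul_ofReal_sub_one]
  have h := Real.abs_sin_le_abs (x := 2 * Real.pi * (s - k - t) / 2)
  rw [norm_mul, Real.norm_eq_abs, Real.norm_eq_abs, abs_of_pos (by norm_num : (0:ℝ) < 2)]
  have h2 : |2 * Real.pi * (s - k - t) / 2| = Real.pi * |s - t - k| := by
    rw [← abs_of_pos Real.pi_pos, ← abs_mul, abs_of_pos Real.pi_pos]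
    congr 1
    ring
  rw [h2] at h
  linarith

lemma fsE_lower (s t : ℝ) : ∃ k : ℤ, 4 * |s - t - k| ≤ ‖fsE s - fsE t‖ := by
  refine ⟨round (s - t), ?_⟩
  set k := round (s - t) with hk
  have hu : |s - t - k| ≤ 1 / 2 := abs_sub_round _
  have h1 : fsE s = fsE (s - k) := by
    have := fsE_add (s - k) k
    rw [fsE_int, mul_one] at this
    rw [← this]
    congr 1
    ring
  rw [h1, fsE_sub_norm]
  unfold fsE
  rw [Complex.norm_exp_I_mul_ofReal_sub_one]
  rw [norm_mul, Real.norm_eq_abs, Real.norm_eq_abs, abs_of_pos (by norm_num : (0:ℝ) < 2)]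
  have h2 : |2 * Real.pi * (s - k - t) / 2| = Real.pi * |s - t - k| := by
    rw [← abs_of_pos Real.pi_pos, ← abs_mul, abs_of_pos Real.pi_pos]
    congr 1
    ring
  have hpi := Real.pi_pos
  have h3 := Real.mul_abs_le_abs_sin (x := 2 * Real.pi * (s - k - t) / 2)
    (by rw [h2]; nlinarith)
  rw [h2] at h3
  have h4 : 2 / Real.pi * (Real.pi * |s - t - k|) = 2 * |s - t - k| := by
    field_simp
  rw [h4] at h3
  linarith

lemma fsE_spiral (α : ℝ) (n : ℕ) :
    Complex.exp (2 * Real.pi * Complex.I * (n * α)) = fsE (n * α) := by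
  unfold fsE
  congr 1
  push_cast
  ring

lemma fs_forward (α : ℝ) (h : IsRelativelyDense (fermatSpiral α)) :
    IsBadlyApproximable α := by
  obtain ⟨r, hr, h⟩ := h
  obtain ⟨A, hA⟩ := exists_nat_ge (2 * r + 1)
  have hA0 : (0:ℝ) < A := by linarith
  refine ⟨1 / (12 * r * A), by positivity, fun p q hq => ?_⟩
  by_contra! hlt
  have hq1 : (1:ℝ) ≤ q := by exact_mod_cast hq
  have hq0 : (0:ℝ) < q := by linarith
  set R : ℝ := A * q with hR
  set M : ℕ := A ^ 2 * q ^ 2 with hM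
  have hMR : (M : ℝ) = R ^ 2 := by rw [hM, hR]; push_cast; ring
  have hR0 : 0 < R := by positivity
  have hRr : r ≤ R := by nlinarith
  set θ : ℝ := M * α + 1 / (2 * q) with hθ
  obtain ⟨z, ⟨n, rfl⟩, hz⟩ := h (R * fsE θ)
  rw [fsE_spiral, mem_ball_iff_norm] at hz
  have hs0 := Real.sqrt_nonneg (n:ℝ)
  have hs2 := Real.sq_sqrt (Nat.cast_nonneg (α := ℝ) n)
  set s := Real.sqrt (n:ℝ) with hs
  have hd : |s - R| < r := by
    have h1 := abs_norm_sub_norm_le ((s:ℂ) * fsE (n * α)) (R * fsE θ)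
    rw [norm_mul, norm_mul, fsE_norm, fsE_norm, Complex.norm_real, Complex.norm_real,
      Real.norm_eq_abs, Real.norm_eq_abs, abs_of_nonneg hs0, abs_of_pos hR0, mul_one, mul_one] at h1
    linarith
  have hang : R * ‖fsE (n * α) - fsE θ‖ < 2 * r := by
    have e1 : (R:ℂ) * (fsE (n * α) - fsE θ)
        = ((s:ℂ) * fsE (n * α) - R * fsE θ) - ((s - R : ℝ) : ℂ) * fsE (n * α) := by
      push_cast
      ring
    have e2 := congrArg norm e1
    rw [norm_mul, Complex.norm_real, Real.norm_eq_abs, abs_of_pos hR0] at e2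
    have e3 := norm_sub_le ((s:ℂ) * fsE (n * α) - R * fsE θ) (((s - R : ℝ) : ℂ) * fsE (n * α))
    rw [norm_mul ((s - R : ℝ) : ℂ), fsE_norm, Complex.norm_real, Real.norm_eq_abs] at e3
    linarith
  obtain ⟨k, hk⟩ := fsE_lower (n * α) θ
  have hk2 : 2 * R * |n * α - θ - k| < r := by nlinarith
  have hnM : |(n:ℝ) - M| ≤ 3 * r * R := by
    have : (n:ℝ) - M = (s - R) * (s + R) := by rw [hMR, ← hs2]; ring
    rw [this, abs_mul]
    have h1 : |s + R| ≤ 3 * R := by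
      rw [abs_of_nonneg (by linarith)]
      have := (abs_lt.mp hd).2
      linarith
    calc |s - R| * |s + R| ≤ r * (3 * R) := by gcongr
      _ = _ := by ring
  have hodd : (1:ℝ) ≤ |((2 * ((n:ℤ) - M) * p - 1 - 2 * q * k : ℤ) : ℝ)| := by
    rw [← Int.cast_abs]
    have : (2 * ((n:ℤ) - M) * p - 1 - 2 * q * k : ℤ) ≠ 0 := by
      intro h0
      have : (2:ℤ) * (((n:ℤ) - M) * p - q * k) = 1 := by linarith
      omega
    exact_mod_cast Int.one_le_abs this
  have hid : ((2 * ((n:ℤ) - M) * p - 1 - 2 * q * k : ℤ) : ℝ)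
      = 2 * q * (n * α - θ - k) - 2 * (n - M) * (q * α - p) := by
    rw [hθ]
    push_cast
    field_simp
    ring
  rw [hid] at hodd
  have htri := abs_sub (2 * q * (n * α - θ - k)) (2 * ((n:ℝ) - M) * (q * α - p))
  rw [abs_mul, abs_mul (2 * ((n:ℝ) - M)), abs_mul 2 ((n:ℝ) - M), abs_of_pos (by positivity : (0:ℝ) < 2 * q),
    abs_of_pos (by norm_num : (0:ℝ) < 2)] at htri
  have t1 : 2 * q * |n * α - θ - k| < 1 / 2 := by
    have : (A:ℝ) * (2 * q * |n * α - θ - k|) < A * (1 / 2) := by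
      rw [hR] at hk2
      linarith
    exact lt_of_mul_lt_mul_left this hA0.le
  have t2 : 2 * |(n:ℝ) - M| * |q * α - p| ≤ 1 / 2 := by
    calc 2 * |(n:ℝ) - M| * |q * α - p| ≤ 2 * (3 * r * R) * |q * α - p| := by gcongr
      _ = 6 * r * A * (q * |q * α - p|) := by rw [hR]; ring
      _ ≤ 6 * r * A * (1 / (12 * r * A)) := by gcongr
      _ = 1 / 2 := by field_simp; norm_num
  linarith

lemma fs_backward (α : ℝ) (h : IsBadlyApproximable α) :
    IsRelativelyDense (fermatSpiral α) := by
  obtain ⟨C, hC, h⟩ := h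
  have hpi := Real.pi_pos
  refine ⟨3 + 2 * Real.pi * (1 + 1 / C), by positivity, fun x => ?_⟩
  set R := ‖x‖ with hR
  have hR0 : 0 ≤ R := norm_nonneg x
  set θ : ℝ := Complex.arg x / (2 * Real.pi) with hθ
  have hx : x = R * fsE θ := by
    rw [← Complex.norm_mul_exp_arg_mul_I x]
    unfold fsE
    simp only [hR, hθ]
    congr 2
    rw [mul_comm]
    congr 2
    field_simp
  set N := ⌈R⌉₊ + 1 with hN
  set M := ⌈R ^ 2⌉₊ with hM
  have hN1 : R + 1 ≤ N := by rw [hN]; push_cast; linarith [Nat.le_ceil R]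
  have hN2 : (N:ℝ) ≤ R + 2 := by rw [hN]; push_cast; linarith [Nat.ceil_lt_add_one hR0]
  have hM1 : R ^ 2 ≤ M := Nat.le_ceil _
  have hM2 : (M:ℝ) ≤ R ^ 2 + 1 := (Nat.ceil_lt_add_one (by positivity)).le
  obtain ⟨a, ha, had⟩ := Real.exists_rat_abs_sub_le_and_den_le α (n := N) (by omega)
  set q := a.den with hq
  set p := a.num with hp
  have hqpos : 0 < q := a.den_pos
  have hq0 : (0:ℝ) < q := by exact_mod_cast hqpos
  have haq : (a : ℝ) = p / q := by rw [hp, hq]; exact Rat.cast_def a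
  have hN0 : (0:ℝ) < N + 1 := by positivity
  have hCq : C ≤ q / (N + 1) := by
    have h1 := h p q hqpos
    have h2 : |(q:ℝ) * α - p| = q * |α - a| := by
      rw [haq, ← abs_of_pos hq0, ← abs_mul, abs_of_pos hq0]
      congr 1
      field_simp
    rw [h2] at h1
    calc C ≤ _ := h1
      _ ≤ q * (q * (1 / ((N + 1) * q))) := by gcongr
      _ = _ := by field_simp
  set t : ℤ := round (q * (θ - M * α)) with ht
  have hcop : IsCoprime p (q:ℤ) := Int.isCoprime_iff_nat_coprime.mpr (by simpa using a.reduced)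
  obtain ⟨u, v, huv⟩ := hcop
  -- j = (t * u) mod q
  obtain ⟨j, hj⟩ : ∃ j : ℕ, (j:ℤ) = (t * u) % q :=
    ⟨((t * u) % q).toNat, Int.toNat_of_nonneg (Int.emod_nonneg _ (by omega))⟩
  have hjq : j < q := by
    have := Int.emod_lt_of_pos (t * u) (b := (q:ℤ)) (by omega)
    omega
  obtain ⟨k, hk⟩ : ∃ k : ℤ, (j:ℤ) * p - t = k * q := by
    refine ⟨-((t * u) / q) * p - t * v, ?_⟩
    have h1 := Int.emod_add_mul_ediv (t * u) q
    rw [← hj] at h1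
    linear_combination p * h1 + t * huv
  have hkR : (j:ℝ) * p - t = k * q := by exact_mod_cast hk
  refine ⟨_, ⟨M + j, rfl⟩, ?_⟩
  rw [fsE_spiral, mem_ball_iff_norm]
  set n := M + j with hn
  have hnc : (n:ℝ) = M + j := by rw [hn]; push_cast; ring
  have hjN : (j:ℝ) ≤ N := by exact_mod_cast (by omega : j ≤ N)
  have hjqR : (j:ℝ) ≤ q := by exact_mod_cast hjq.le
  have hs1 : R ≤ Real.sqrt n := Real.le_sqrt_of_sq_le (by rw [hnc]; linarith [Nat.cast_nonneg (α := ℝ) j])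
  have hs2 : Real.sqrt n ≤ R + 2 := by
    apply Real.sqrt_le_iff.mpr ⟨by linarith, ?_⟩
    rw [hnc]
    nlinarith
  have hang : |n * α - θ - k| ≤ (1 + 1 / C) / (N + 1) := by
    have hr := abs_sub_round ((q:ℝ) * (θ - M * α))
    rw [← ht] at hr
    have e : n * α - θ - k = j * (α - a) - (q * (θ - M * α) - t) / q := by
      rw [hnc, haq]
      have : (k:ℝ) = (j * p - t) / q := by rw [hkR]; field_simp
      rw [this]
      field_simp
      ring
    rw [e]
    have b1 : |(j:ℝ) * (α - a)| ≤ 1 / (N + 1) := by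
      rw [abs_mul, abs_of_nonneg (Nat.cast_nonneg j)]
      calc (j:ℝ) * |α - a| ≤ q * (1 / ((N + 1) * q)) := by gcongr
        _ = _ := by field_simp
    have b2 : |(q * (θ - M * α) - t) / q| ≤ 1 / C / (N + 1) := by
      rw [abs_div, abs_of_pos hq0, div_div]
      rw [le_div_iff₀ hN0] at hCq
      apply div_le_div₀ zero_le_one (by linarith) (by positivity) hCq
    calc _ ≤ _ := abs_sub _ _
      _ ≤ 1 / (N + 1) + 1 / C / (N + 1) := add_le_add b1 b2
      _ = _ := by ring
  have hE := fsE_upper (n * α) θ k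
  have hE2 : R * ‖fsE (n * α) - fsE θ‖ ≤ 2 * Real.pi * (1 + 1 / C) := by
    calc R * ‖fsE (n * α) - fsE θ‖ ≤ (N + 1) * (2 * Real.pi * ((1 + 1 / C) / (N + 1))) := by
          apply mul_le_mul (by linarith) _ (norm_nonneg _) hN0.le
          exact hE.trans (by gcongr)
      _ = _ := by field_simp
  have e1 : (Real.sqrt n : ℂ) * fsE (n * α) - x
      = ((Real.sqrt n - R : ℝ) : ℂ) * fsE (n * α) + R * (fsE (n * α) - fsE θ) := by
    conv_lhs => rw [hx]
    push_cast
    ring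
  rw [e1]
  refine (norm_add_le _ _).trans_lt ?_
  rw [norm_mul, norm_mul, fsE_norm, Complex.norm_real, Complex.norm_real, Real.norm_eq_abs,
    Real.norm_eq_abs, abs_of_nonneg hR0, abs_of_nonneg (by linarith)]
  linarith

/-- For irrational `α ∈ [0,1)`, the set `X(√t, α)` is relatively
dense if and only if `α` is badly approximable. -/
theorem fermatSpiral_relativelyDense_iff_badlyApproximable
    (α : ℝ) (hα : α ∈ Set.Ico (0 : ℝ) 1) (hirr : Irrational α) :
    IsRelativelyDense (fermatSpiral α) ↔ IsBadlyApproximable α :=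
  ⟨fs_forward α, fs_backward α⟩
end

section
/- Let α ∈ [0,1) be irrational. The set X(√t, α) = { √n · e^{2πi n α} : n ∈ ℕ } ⊂ ℂ is uniformly discrete if and only if α is badly approximable. -/
/-- `X ⊆ ℂ` is uniformly discrete: some radius `s > 0` such that every open ball of
radius `s` contains at most one point of `X`. -/
def IsUniformlyDiscrete (X : Set ℂ) : Prop :=
  ∃ s : ℝ, 0 < s ∧ ∀ x : ℂ, Set.Subsingleton (X ∩ Metric.ball x s)

theorem fs_dist_sq (a b x y : ℝ) :
    ‖(a : ℂ) * Complex.exp (x * Complex.I) - b * Complex.exp (y * Complex.I)‖ ^ 2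
      = (a - b) ^ 2 + 2 * (a * b) * (1 - Real.cos (x - y)) := by
  rw [← Complex.normSq_eq_norm_sq, Complex.normSq_apply]
  simp only [Complex.sub_re, Complex.sub_im, Complex.re_ofReal_mul, Complex.im_ofReal_mul,
    Complex.exp_ofReal_mul_I_re, Complex.exp_ofReal_mul_I_im, Real.cos_sub]
  linear_combination a ^ 2 * Real.sin_sq_add_cos_sq x + b ^ 2 * Real.sin_sq_add_cos_sq y

/-- The n-th point of the spiral. -/
noncomputable def fsPt (α : ℝ) (n : ℕ) : ℂ :=
  Real.sqrt n * Complex.exp (2 * Real.pi * Complex.I * (n * α))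

theorem fsPt_dist_sq (α : ℝ) (n q : ℕ) (p : ℤ) :
    dist (fsPt α (n + q)) (fsPt α n) ^ 2
      = (Real.sqrt ((n : ℝ) + q) - Real.sqrt n) ^ 2
        + 2 * (Real.sqrt ((n : ℝ) + q) * Real.sqrt n)
          * (1 - Real.cos (2 * Real.pi * (q * α - p))) := by
  have e : ∀ k : ℕ, fsPt α k
      = (Real.sqrt k : ℂ) * Complex.exp (((2 * Real.pi * (k * α) : ℝ) : ℂ) * Complex.I) := by
    intro k
    unfold fsPt
    congr 2
    push_cast
    ring
  rw [dist_eq_norm, e, e, fs_dist_sq]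
  have h : Real.cos (2 * Real.pi * (((n + q : ℕ) : ℝ) * α) - 2 * Real.pi * (n * α))
      = Real.cos (2 * Real.pi * (q * α - p)) := by
    rw [← Real.cos_sub_int_mul_two_pi _ p]
    congr 1
    push_cast
    ring
  rw [h]
  push_cast
  rfl

theorem fs_lower (α C : ℝ) (hC : 0 < C)
    (h : ∀ (p : ℤ) (q : ℕ), 1 ≤ q → C ≤ (q : ℝ) * |(q : ℝ) * α - (p : ℝ)|)
    (n q : ℕ) (hq : 1 ≤ q) : min 1 C ≤ dist (fsPt α (n + q)) (fsPt α n) := by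
  have hm0 : 0 < min 1 C := lt_min one_pos hC
  refine (pow_le_pow_iff_left₀ (by positivity) (by positivity) two_ne_zero).1 ?_
  have hq1 : (1 : ℝ) ≤ q := by exact_mod_cast hq
  set p := round ((q : ℝ) * α) with hp
  have hCp := h p q hq
  rw [fsPt_dist_sq α n q p]
  set t := (q : ℝ) * α - p with ht
  have hthalf : |t| ≤ 1 / 2 := abs_sub_round _
  have hcos : 8 * t ^ 2 ≤ 1 - Real.cos (2 * Real.pi * t) := by
    have h1 : |2 * Real.pi * t| ≤ Real.pi := by
      rw [abs_mul, abs_of_pos (by positivity)]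
      nlinarith [Real.pi_pos]
    have h2 := Real.cos_le_one_sub_mul_cos_sq h1
    have h3 : 2 / Real.pi ^ 2 * (2 * Real.pi * t) ^ 2 = 8 * t ^ 2 := by
      field_simp
      ring
    linarith
  have hqt : C ^ 2 ≤ (q : ℝ) ^ 2 * t ^ 2 := by
    have := pow_le_pow_left₀ hC.le hCp 2
    rwa [mul_pow, sq_abs] at this
  have hb0 := Real.sqrt_nonneg (n : ℝ)
  have ha0 := Real.sqrt_nonneg ((n : ℝ) + q)
  have hb2 := Real.sq_sqrt (Nat.cast_nonneg n : (0 : ℝ) ≤ n)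
  have ha2 := Real.sq_sqrt (by positivity : (0 : ℝ) ≤ (n : ℝ) + q)
  have hab : Real.sqrt n ≤ Real.sqrt ((n : ℝ) + q) := Real.sqrt_le_sqrt (by linarith)
  set a := Real.sqrt ((n : ℝ) + q)
  set b := Real.sqrt (n : ℝ)
  have hlow : (a - b) ^ 2 + 2 * (a * b) * (8 * t ^ 2)
      ≤ (a - b) ^ 2 + 2 * (a * b) * (1 - Real.cos (2 * Real.pi * t)) := by
    gcongr
  refine le_trans ?_ hlow
  by_cases hd : 1 ≤ a - b
  · have h1 : min 1 C ^ 2 ≤ 1 := pow_le_one₀ hm0.le (min_le_left _ _)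
    have h2 : 0 ≤ 2 * (a * b) * (8 * t ^ 2) := by positivity
    nlinarith
  · push Not at hd
    have hn : 1 ≤ n := by
      by_contra hn
      have : n = 0 := by omega
      subst this
      have hb : b = 0 := by simp [b]
      rw [hb] at hd
      simp only [Nat.cast_zero] at ha2
      nlinarith
    have hn1 : (1 : ℝ) ≤ n := by exact_mod_cast hn
    have hb1 : 1 ≤ b := by nlinarith
    have hqb : (q : ℝ) ≤ 3 * b := by nlinarith
    have hq2 : (q : ℝ) ^ 2 ≤ 9 * b ^ 2 := by nlinarith
    have h1 : min 1 C ^ 2 ≤ C ^ 2 := pow_le_pow_left₀ hm0.le (min_le_right _ _) 2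
    have h2 : C ^ 2 ≤ 9 * b ^ 2 * t ^ 2 :=
      hqt.trans (mul_le_mul_of_nonneg_right hq2 (sq_nonneg t))
    have h3 : b ^ 2 * t ^ 2 ≤ a * b * t ^ 2 :=
      mul_le_mul_of_nonneg_right (by nlinarith) (sq_nonneg t)
    nlinarith [sq_nonneg (a - b)]

theorem fs_upper (α s : ℝ) (hs : 0 < s) (k : ℕ) (hk : 1 ≤ k) (hks : 1 ≤ k * s)
    (h : ∀ n q : ℕ, 1 ≤ q → s ≤ dist (fsPt α (n + q)) (fsPt α n))
    (p : ℤ) (q : ℕ) (hq : 1 ≤ q) : s / (16 * k) ≤ (q : ℝ) * |(q : ℝ) * α - (p : ℝ)| := by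
  have hq1 : (1 : ℝ) ≤ q := by exact_mod_cast hq
  have hk1 : (1 : ℝ) ≤ k := by exact_mod_cast hk
  have h0 := pow_le_pow_left₀ hs.le (h ((k * q) ^ 2) q hq) 2
  rw [fsPt_dist_sq α _ q p] at h0
  have hb : Real.sqrt (((k * q) ^ 2 : ℕ) : ℝ) = k * q := by
    push_cast
    exact Real.sqrt_sq (by positivity)
  rw [hb] at h0
  push_cast at h0
  set t := (q : ℝ) * α - p with ht
  have ha0 := Real.sqrt_nonneg (((k : ℝ) * q) ^ 2 + q)
  have ha2 := Real.sq_sqrt (by positivity : (0 : ℝ) ≤ ((k : ℝ) * q) ^ 2 + q)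
  have hab : (k : ℝ) * q ≤ Real.sqrt (((k : ℝ) * q) ^ 2 + q) :=
    Real.le_sqrt_of_sq_le (by linarith)
  set a := Real.sqrt (((k : ℝ) * q) ^ 2 + q)
  have hcos : 1 - Real.cos (2 * Real.pi * t) ≤ 32 * t ^ 2 := by
    have h1 := Real.one_sub_sq_div_two_le_cos (x := 2 * Real.pi * t)
    have h2 : Real.pi ^ 2 ≤ 16 := by nlinarith [Real.pi_pos, Real.pi_le_four]
    nlinarith [mul_le_mul_of_nonneg_right h2 (sq_nonneg t)]
  have hkq : (1 : ℝ) ≤ k * q := by nlinarith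
  have hqkq : (q : ℝ) ≤ k * q := by nlinarith
  have ha' : a ≤ 2 * (k * q) := by nlinarith
  have hd : (a - k * q) * (2 * k) ≤ 1 := by
    have e : (a - k * q) * (a + k * q) = q := by linear_combination ha2
    have h1 : (a - k * q) * (2 * (k * q)) ≤ q := by nlinarith
    have h2 : ((a - k * q) * (2 * k)) * q ≤ 1 * q := by linarith
    exact le_of_mul_le_mul_right h2 (by linarith)
  have hds : a - k * q ≤ s / 2 := by
    have : (a - k * q) * (2 * k) ≤ (s / 2) * (2 * k) := by linarith
    exact le_of_mul_le_mul_right this (by linarith)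
  have hds2 : (a - k * q) ^ 2 ≤ s ^ 2 / 4 := by nlinarith
  have h3 : 2 * (a * (k * q)) * (1 - Real.cos (2 * Real.pi * t))
      ≤ 2 * (2 * (k * q) * (k * q)) * (32 * t ^ 2) := by
    have := Real.cos_le_one (2 * Real.pi * t)
    gcongr
  rw [div_le_iff₀ (by positivity)]
  refine (pow_le_pow_iff_left₀ (by positivity) (by positivity) two_ne_zero).1 ?_
  have h4 : (q * |t| * (16 * k)) ^ 2 = 256 * (k ^ 2 * q ^ 2 * t ^ 2) := by
    rw [mul_pow, mul_pow, sq_abs]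
    ring
  rw [h4]
  nlinarith

theorem fsPt_ne (α : ℝ) (n q : ℕ) (hq : 1 ≤ q) : fsPt α (n + q) ≠ fsPt α n := by
  intro h
  have e : ∀ k : ℕ, ‖fsPt α k‖ = Real.sqrt k := by
    intro k
    have : fsPt α k
      = (Real.sqrt k : ℂ) * Complex.exp (((2 * Real.pi * (k * α) : ℝ) : ℂ) * Complex.I) := by
      unfold fsPt
      congr 2
      push_cast
      ring
    rw [this, norm_mul, Complex.norm_exp_ofReal_mul_I, mul_one, Complex.norm_real,
      Real.norm_of_nonneg (Real.sqrt_nonneg _)]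
  have h1 := congrArg norm h
  rw [e, e, Real.sqrt_inj (Nat.cast_nonneg _) (Nat.cast_nonneg _)] at h1
  have h2 : n + q = n := by exact_mod_cast h1
  omega

/-- For irrational `α ∈ [0,1)`, the set `X(√t, α)` is uniformly
discrete if and only if `α` is badly approximable. -/
theorem fermatSpiral_uniformlyDiscrete_iff_badlyApproximable
    (α : ℝ) (hα : α ∈ Set.Ico (0 : ℝ) 1) (hirr : Irrational α) :
    IsUniformlyDiscrete (fermatSpiral α) ↔ IsBadlyApproximable α := by
  constructor
  · rintro ⟨s, hs, hX⟩
    obtain ⟨k, hk⟩ := exists_nat_ge (max 1 (1 / s))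
    have hk1 : (1 : ℝ) ≤ k := (le_max_left _ _).trans hk
    have hks : 1 ≤ k * s := (div_le_iff₀ hs).1 ((le_max_right _ _).trans hk)
    refine ⟨s / (16 * k), by positivity, ?_⟩
    refine fs_upper α s hs k (by exact_mod_cast hk1) hks ?_
    intro n q hq
    by_contra hlt
    push Not at hlt
    exact fsPt_ne α n q hq (hX (fsPt α n) ⟨⟨n + q, rfl⟩, hlt⟩
      ⟨⟨n, rfl⟩, Metric.mem_ball_self hs⟩)
  · rintro ⟨C, hC, h⟩
    have hm0 : 0 < min 1 C := lt_min one_pos hC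
    refine ⟨min 1 C / 2, by positivity, ?_⟩
    rintro x _ ⟨⟨n, rfl⟩, hn⟩ _ ⟨⟨m, rfl⟩, hm⟩
    change fsPt α n ∈ _ at hn
    change fsPt α m ∈ _ at hm
    change fsPt α n = fsPt α m
    rw [Metric.mem_ball] at hn hm
    have hd : dist (fsPt α n) (fsPt α m) < min 1 C := by
      have := dist_triangle_right (fsPt α n) (fsPt α m) x
      linarith
    rcases lt_trichotomy n m with hlt | heq | hgt
    · have := fs_lower α C hC h n (m - n) (by omega)
      rw [Nat.add_sub_cancel' hlt.le, dist_comm] at this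
      linarith
    · rw [heq]
    · have := fs_lower α C hC h m (n - m) (by omega)
      rw [Nat.add_sub_cancel' hgt.le] at this
      linarith
end

section
/- Let α ∈ [0,1) be irrational. The set X(√t, α) = { √n · e^{2πi n α} : n ∈ ℕ } ⊂ ℂ is a Delone set if and only if α is badly approximable. -/
/-- `X ⊆ ℂ` is a Delone set: relatively dense and uniformly discrete. -/
def IsDeloneSet (X : Set ℂ) : Prop :=
  IsRelativelyDense X ∧ IsUniformlyDiscrete X

noncomputable def ee (x : ℝ) : ℂ := Complex.exp (Complex.I * ((2 * Real.pi * x : ℝ) : ℂ))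

lemma ee_add (x y : ℝ) : ee (x + y) = ee x * ee y := by
  unfold ee
  rw [← Complex.exp_add]; congr 1; push_cast; ring

lemma ee_int (k : ℤ) : ee k = 1 := by
  unfold ee
  rw [Complex.exp_eq_one_iff]
  exact ⟨k, by push_cast; ring⟩

lemma ee_norm (x : ℝ) : ‖ee x‖ = 1 := by
  unfold ee
  rw [mul_comm]; exact Complex.norm_exp_ofReal_mul_I _

lemma ee_sub_int (x : ℝ) (k : ℤ) : ee (x - k) = ee x := by
  have h := ee_add (x - k) k
  rw [ee_int, mul_one, sub_add_cancel] at h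
  exact h.symm

lemma ee_upper (x : ℝ) (k : ℤ) : ‖ee x - 1‖ ≤ 2 * Real.pi * |x - k| := by
  rw [← ee_sub_int x k]
  have h := Real.norm_exp_I_mul_ofReal_sub_one_le (x := 2 * Real.pi * (x - k))
  unfold ee
  refine h.trans (le_of_eq ?_)
  rw [Real.norm_eq_abs, abs_mul, abs_of_pos (by positivity)]

lemma ee_lower (x : ℝ) : 4 * |x - round x| ≤ ‖ee x - 1‖ := by
  rw [← ee_sub_int x (round x)]
  have hr := abs_sub_round x
  set y := x - round x
  have h := Complex.norm_exp_I_mul_ofReal_sub_one (2 * Real.pi * y)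
  unfold ee
  rw [h, Real.norm_eq_abs, abs_mul, abs_of_pos (by norm_num : (0:ℝ) < 2)]
  have hpi := Real.pi_pos
  have h3 : |2 * Real.pi * y / 2| = Real.pi * |y| := by
    rw [show 2 * Real.pi * y / 2 = Real.pi * y by ring, abs_mul, abs_of_pos hpi]
  have h2 : |2 * Real.pi * y / 2| ≤ Real.pi / 2 := by
    rw [h3]; nlinarith
  have h4 := Real.mul_abs_le_abs_sin h2
  rw [h3] at h4
  have : 2 / Real.pi * (Real.pi * |y|) = 2 * |y| := by field_simp
  linarith

noncomputable def zz (α : ℝ) (n : ℕ) : ℂ := (Real.sqrt n : ℂ) * ee (n * α)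

lemma mem_iff (α : ℝ) (z : ℂ) : z ∈ fermatSpiral α ↔ ∃ n : ℕ, z = zz α n := by
  have : ∀ n : ℕ, zz α n = Real.sqrt n * Complex.exp (2 * Real.pi * Complex.I * (n * α)) := by
    intro n
    unfold zz ee
    congr 2; push_cast; ring
  simp only [fermatSpiral, Set.mem_ofPred_eq, this]

lemma zz_norm (α : ℝ) (n : ℕ) : ‖zz α n‖ = Real.sqrt n := by
  unfold zz
  rw [norm_mul, ee_norm, mul_one, Complex.norm_real, Real.norm_eq_abs,
    abs_of_nonneg (Real.sqrt_nonneg _)]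

/-- Upper bound for the distance of two points in polar coordinates. -/
lemma polar_upper (a b x y : ℝ) (k : ℤ) (ha : 0 ≤ a) :
    ‖(b : ℂ) * ee y - a * ee x‖ ≤ |b - a| + a * (2 * Real.pi * |y - x - k|) := by
  have h1 : (b : ℂ) * ee y - a * ee x = ((b - a : ℝ) : ℂ) * ee y + a * (ee x * (ee (y - x) - 1)) := by
    rw [mul_sub, ← ee_add, add_sub_cancel]; push_cast; ring
  rw [h1]
  refine (norm_add_le _ _).trans ?_
  rw [norm_mul, norm_mul, norm_mul, ee_norm, ee_norm, Complex.norm_real, Complex.norm_real,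
    Real.norm_eq_abs, Real.norm_eq_abs, abs_of_nonneg ha, mul_one, one_mul]
  gcongr
  exact ee_upper _ _

lemma polar_eq (a b x y : ℝ) :
    ‖(b : ℂ) * ee y - a * ee x‖ ^ 2 = (b - a) ^ 2 + a * b * ‖ee (y - x) - 1‖ ^ 2 := by
  have h1 : (b : ℂ) * ee y - a * ee x = ee x * (b * ee (y - x) - a) := by
    have : ee y = ee x * ee (y - x) := by rw [← ee_add, add_sub_cancel]
    rw [this]; ring
  rw [h1, norm_mul, ee_norm, one_mul]
  have hw := ee_norm (y - x)
  set w := ee (y - x)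
  have hw2 : Complex.normSq w = 1 := by rw [Complex.normSq_eq_norm_sq, hw]; norm_num
  rw [← Complex.normSq_eq_norm_sq, ← Complex.normSq_eq_norm_sq]
  rw [Complex.normSq_apply] at hw2 ⊢
  rw [Complex.normSq_apply]
  simp
  linear_combination (b ^ 2 - a * b) * hw2

lemma ud_imp {α : ℝ} (h : IsUniformlyDiscrete (fermatSpiral α)) : IsBadlyApproximable α := by
  obtain ⟨s, hs, h⟩ := h
  obtain ⟨k, hk⟩ := exists_nat_gt (1 / s)
  have hk0 : (0:ℝ) < k := lt_trans (by positivity) hk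
  have hks : 1 / (k:ℝ) < s := by
    rw [div_lt_iff₀ hs] at hk
    rw [div_lt_iff₀ hk0]; linarith
  refine ⟨s / (4 * Real.pi * k), by positivity, ?_⟩
  intro p q hq
  have hq0 : (0:ℝ) < q := by exact_mod_cast hq
  set n := k ^ 2 * q ^ 2 with hn
  have hsn : Real.sqrt (n : ℝ) = k * q := by
    rw [hn]; push_cast
    rw [← mul_pow]; exact Real.sqrt_sq (by positivity)
  have hsm : Real.sqrt ((n + q : ℕ) : ℝ) ≤ k * q + 1 / (2 * k) := by
    apply Real.sqrt_le_iff.2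
    refine ⟨by positivity, ?_⟩
    rw [hn]; push_cast
    have : ((k:ℝ) * q + 1 / (2 * k)) ^ 2 = k ^ 2 * q ^ 2 + q + (1 / (2 * k)) ^ 2 := by
      field_simp; ring
    rw [this]
    have : (0:ℝ) ≤ (1 / (2 * k)) ^ 2 := by positivity
    linarith
  have hmono : Real.sqrt (n : ℝ) ≤ Real.sqrt ((n + q : ℕ) : ℝ) := by
    apply Real.sqrt_le_sqrt; push_cast; linarith
  have hd : s ≤ ‖zz α (n + q) - zz α n‖ := by
    by_contra hlt
    push Not at hlt
    have := @h (zz α n) (zz α (n + q)) ⟨(mem_iff _ _).2 ⟨_, rfl⟩, by rw [Metric.mem_ball, dist_eq_norm]; exact hlt⟩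
      (zz α n) ⟨(mem_iff _ _).2 ⟨_, rfl⟩, Metric.mem_ball_self hs⟩
    have h2 := congrArg norm this
    rw [zz_norm, zz_norm, Real.sqrt_inj (by positivity) (by positivity)] at h2
    push_cast at h2
    linarith
  have hu := polar_upper (Real.sqrt (n : ℝ)) (Real.sqrt ((n + q : ℕ) : ℝ)) (n * α) ((n + q : ℕ) * α) p (Real.sqrt_nonneg _)
  have hu2 := hd.trans hu
  rw [abs_of_nonneg (by linarith), show (((n + q : ℕ) : ℝ) * α - n * α - p) = q * α - p by push_cast; ring] at hu2
  rw [hsn] at hu2 hmono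
  have e1 : 1 / (2 * (k:ℝ)) = (1 / k) / 2 := by field_simp
  rw [e1] at hsm
  rw [div_le_iff₀ (by positivity)]
  nlinarith

lemma ba_ud {α : ℝ} (h : IsBadlyApproximable α) : IsUniformlyDiscrete (fermatSpiral α) := by
  obtain ⟨C, hC, h⟩ := h
  obtain ⟨d, hd, hd1, hd2⟩ : ∃ d : ℝ, 0 < d ∧ d ≤ 1 / 2 ∧ d ^ 2 ≤ C := by
    refine ⟨min (1/2) C, by positivity, min_le_left _ _, ?_⟩
    have h1 := min_le_left (1/2) C
    have h2 := min_le_right (1/2) C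
    have h3 : 0 < min (1/2) C := by positivity
    nlinarith
  have key : ∀ n q : ℕ, 1 ≤ q → d ≤ ‖zz α (n + q) - zz α n‖ := by
    intro n q hq
    have hq1 : (1:ℝ) ≤ q := by exact_mod_cast hq
    have hp := polar_eq (Real.sqrt (n : ℝ)) (Real.sqrt ((n + q : ℕ) : ℝ)) (n * α) ((n + q : ℕ) * α)
    have hz : ‖zz α (n + q) - zz α n‖ ^ 2 = _ := hp
    rw [show (((n + q : ℕ) : ℝ) * α - n * α) = q * α by push_cast; ring] at hz
    have hl := ee_lower (q * α)
    have hb := h (round (q * α)) q hq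
    have ha2 : Real.sqrt (n : ℝ) ^ 2 = n := Real.sq_sqrt (by positivity)
    have hb2 : Real.sqrt ((n + q : ℕ) : ℝ) ^ 2 = n + q := by
      rw [Real.sq_sqrt (by positivity)]; push_cast; ring
    have ha0 := Real.sqrt_nonneg (n : ℝ)
    have hb0 := Real.sqrt_nonneg ((n + q : ℕ) : ℝ)
    have hn0 : (0:ℝ) ≤ n := by positivity
    set a := Real.sqrt (n : ℝ)
    set b := Real.sqrt ((n + q : ℕ) : ℝ)
    set E := ‖ee (q * α) - 1‖
    have hqE : 4 * C ≤ q * E := by nlinarith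
    have hE0 : 0 ≤ E := norm_nonneg _
    refine le_of_sq_le_sq ?_ (norm_nonneg _)
    rw [hz]
    have hb1 : 1 ≤ b := by nlinarith
    by_cases hc : b ≤ 2 * a
    · have hab : b ≥ a := by nlinarith
      have h5 : (b - a) * (b + a) = q := by nlinarith
      have h6 : (q:ℝ) ≤ 2 * b * (b - a) := by nlinarith
      have h7 : 4 * C ≤ 2 * (b * E) * (b - a) := by
        have := mul_le_mul_of_nonneg_right h6 hE0
        linarith
      have h8 : (b * E) ^ 2 ≤ 2 * (a * b * E ^ 2) := by
        have : 0 ≤ b * E ^ 2 := by positivity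
        nlinarith
      have h9 := sq_nonneg (b * E - (b - a))
      have h10 := sq_nonneg (b - a)
      have h11 : (b * E - (b - a)) ^ 2 = (b * E) ^ 2 - 2 * (b * E) * (b - a) + (b - a) ^ 2 := by
        ring
      rw [h11] at h9
      linarith
    · push Not at hc
      have : 0 ≤ a * b * E ^ 2 := by positivity
      nlinarith
  have key2 : ∀ n m : ℕ, n < m → d ≤ ‖zz α m - zz α n‖ := by
    intro n m hnm
    have := key n (m - n) (by omega)
    rwa [show n + (m - n) = m by omega] at this
  refine ⟨d / 2, by positivity, ?_⟩
  rintro x u ⟨hu, hux⟩ v ⟨hv, hvx⟩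
  have huv : ‖u - v‖ < d := by
    rw [← dist_eq_norm]
    rw [Metric.mem_ball] at hux hvx
    linarith [dist_triangle_right u v x]
  obtain ⟨n, rfl⟩ := (mem_iff _ _).1 hu
  obtain ⟨m, rfl⟩ := (mem_iff _ _).1 hv
  rcases lt_trichotomy n m with hlt | heq | hlt
  · have := key2 n m hlt
    rw [norm_sub_rev] at this
    linarith
  · rw [heq]
  · linarith [key2 m n hlt]

/-- Any `Q` consecutive multiples of `α` are `K / Q`-dense modulo one. -/
lemma ba_cover {α C : ℝ} (hC : 0 < C)
    (h : ∀ (p : ℤ) (q : ℕ), 1 ≤ q → C ≤ (q : ℝ) * |(q : ℝ) * α - (p : ℝ)|)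
    (N Q : ℕ) (hQ : 0 < Q) (θ : ℝ) :
    ∃ n : ℕ, N ≤ n ∧ n ≤ N + Q ∧ ∃ k : ℤ, |(n : ℝ) * α - θ - k| ≤ (1 / C + 1) / Q := by
  obtain ⟨r, hr, hrQ⟩ := Real.exists_rat_abs_sub_le_and_den_le α hQ
  have hQ0 : (0:ℝ) < Q := by exact_mod_cast hQ
  have hq1 : 1 ≤ r.den := r.pos
  have hcop : IsCoprime r.num (r.den : ℤ) := by
    rw [Int.isCoprime_iff_nat_coprime]; simpa using r.reduced
  have hrr : (r : ℝ) = r.num / r.den := by exact_mod_cast (Rat.num_div_den r).symm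
  generalize r.num = p at *
  generalize r.den = q at *
  have hq0 : (0:ℝ) < q := by exact_mod_cast hq1
  rw [hrr] at hr
  have hqQ : C * Q ≤ q := by
    have h1 := h p q hq1
    have h2 : |(q:ℝ) * α - p| = q * |α - p / q| := by
      rw [show (q:ℝ) * α - p = q * (α - p / q) by field_simp, abs_mul, abs_of_pos hq0]
    rw [h2] at h1
    rw [le_div_iff₀ (by positivity)] at hr
    have h3 : 0 ≤ |α - p / q| := abs_nonneg _
    have h4 : C * (Q + 1) ≤ q * (q * |α - p / q|) * (Q + 1) := by gcongr
    nlinarith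
  set β := θ - N * α with hβ
  set t : ℤ := ⌊β * q⌋ with ht
  obtain ⟨u, v, huv⟩ := hcop
  -- j ≡ t * u mod q
  have hqz : (0:ℤ) < q := by exact_mod_cast hq1
  obtain ⟨j, hj⟩ : ∃ j : ℕ, (j : ℤ) = (t * u) % q := ⟨((t * u) % q).toNat, Int.toNat_of_nonneg (Int.emod_nonneg _ hqz.ne')⟩
  have hjq : (j : ℤ) < q := by rw [hj]; exact Int.emod_lt_of_pos _ hqz
  have hjq' : j < q := by exact_mod_cast hjq
  have hdiv := Int.emod_add_mul_ediv (t * u) q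
  rw [← hj] at hdiv
  set w := (t * u) / (q : ℤ)
  have hk : (j : ℤ) * p = t + (- t * v - w * p) * q := by
    linear_combination p * hdiv + t * huv
  set k : ℤ := - t * v - w * p
  refine ⟨N + j, by omega, by omega, k, ?_⟩
  have hkR : (j : ℝ) * p = t + k * q := by exact_mod_cast hk
  have e1 : ((N + j : ℕ) : ℝ) * α - θ - k = j * (α - p / q) + (t - β * q) / q := by
    have : (j : ℝ) * (p / q) = t / q + k := by
      field_simp; linarith
    push_cast
    rw [mul_sub, this, sub_div, mul_div_cancel_right₀ _ hq0.ne', hβ]; ring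
  rw [e1]
  refine (abs_add_le _ _).trans ?_
  have b1 : |(j:ℝ) * (α - p / q)| ≤ 1 / Q := by
    rw [abs_mul, Nat.abs_cast]
    have hjR : (j:ℝ) ≤ q := by exact_mod_cast hjq'.le
    calc (j:ℝ) * |α - p / q| ≤ q * (1 / ((Q + 1) * q)) := by gcongr
      _ = 1 / (Q + 1) := by field_simp
      _ ≤ 1 / Q := by gcongr; linarith
  have b2 : |((t:ℝ) - β * q) / q| ≤ 1 / (C * Q) := by
    rw [abs_div, abs_of_pos hq0]
    have : |(t:ℝ) - β * q| ≤ 1 := by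
      rw [abs_le]
      constructor <;> linarith [Int.floor_le (β * q), Int.lt_floor_add_one (β * q)]
    gcongr
  have : (1 / C + 1) / Q = 1 / Q + 1 / (C * Q) := by field_simp; ring
  linarith

lemma ba_rd {α : ℝ} (h : IsBadlyApproximable α) : IsRelativelyDense (fermatSpiral α) := by
  obtain ⟨C, hC, h⟩ := h
  refine ⟨3 + 2 * Real.pi * (1 / C + 1), by positivity, ?_⟩
  intro x
  set R := ‖x‖ with hR
  have hR0 : 0 ≤ R := norm_nonneg _
  set θ := x.arg / (2 * Real.pi) with hθ
  have hx : x = R * ee θ := by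
    have h1 := Complex.norm_mul_exp_arg_mul_I x
    have h2 : ee θ = Complex.exp (x.arg * Complex.I) := by
      unfold ee
      rw [hθ, mul_div_cancel₀ _ (by positivity), mul_comm]
    rw [h2]; exact h1.symm
  obtain ⟨n, hn1, hn2, k, hk⟩ := ba_cover hC h ⌈R ^ 2⌉₊ (⌈R⌉₊ + 1) (by omega) θ
  refine ⟨zz α n, (mem_iff _ _).2 ⟨n, rfl⟩, ?_⟩
  rw [Metric.mem_ball, dist_eq_norm]
  have hu := polar_upper R (Real.sqrt (n : ℝ)) θ (n * α) k hR0
  rw [← hx] at hu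
  refine lt_of_le_of_lt hu ?_
  have c1 := Nat.le_ceil (R ^ 2)
  have c2 := Nat.ceil_lt_add_one (a := R ^ 2) (by positivity)
  have c3 := Nat.le_ceil R
  have c4 := Nat.ceil_lt_add_one hR0
  have hn1' : ((⌈R ^ 2⌉₊ : ℕ) : ℝ) ≤ n := by exact_mod_cast hn1
  have hn2' : (n : ℝ) ≤ (⌈R ^ 2⌉₊ : ℕ) + ((⌈R⌉₊ : ℕ) + 1) := by exact_mod_cast hn2
  have s1 : R ≤ Real.sqrt n := Real.le_sqrt_of_sq_le (by linarith)
  have s2 : Real.sqrt n ≤ R + 2 := Real.sqrt_le_iff.2 ⟨by linarith, by nlinarith⟩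
  rw [abs_of_nonneg (by linarith)]
  push_cast at hk
  have hm : R * |(n : ℝ) * α - θ - k| ≤ 1 / C + 1 := by
    rw [le_div_iff₀ (by positivity)] at hk
    have : 0 ≤ |(n : ℝ) * α - θ - k| := abs_nonneg _
    nlinarith
  have hpi := Real.pi_pos
  have : R * (2 * Real.pi * |(n : ℝ) * α - θ - k|) ≤ 2 * Real.pi * (1 / C + 1) := by
    calc R * (2 * Real.pi * |(n : ℝ) * α - θ - k|) = 2 * Real.pi * (R * |(n : ℝ) * α - θ - k|) := by ring
      _ ≤ _ := by gcongr
  linarith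

/-- For irrational `α ∈ [0,1)`, the set `X(√t, α)` is a Delone set
if and only if `α` is badly approximable. -/
theorem fermatSpiral_delone_iff_badlyApproximable
    (α : ℝ) (hα : α ∈ Set.Ico (0 : ℝ) 1) (hirr : Irrational α) :
    IsDeloneSet (fermatSpiral α) ↔ IsBadlyApproximable α := by
  exact ⟨fun h => ud_imp h.2, fun h => ⟨ba_rd h, ba_ud h⟩⟩
end

section
/- Let α ∈ [0,1) be irrational with continued fraction expansion α = [0; a₁, a₂, a₃, …]. If all partial quotients satisfy aₖ ≤ B for a positive integer B, then the set X(√t, α) = { √n · e^{2πi n α} : n ∈ ℕ } ⊂ ℂ is 6√B-relatively dense. -/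
/-- Pairs (current, previous) of the continuant recursion. -/
def cfPair (b : ℕ → ℤ) (s : ℤ × ℤ) : ℕ → ℤ × ℤ
  | 0 => s
  | k + 1 => (b k * (cfPair b s k).1 + (cfPair b s k).2, (cfPair b s k).1)

theorem cover_aux (α : ℝ) (p q : ℤ) (hq : 1 ≤ q) (hc : IsCoprime p q) (θ : ℝ) (m : ℕ) :
    ∃ j : ℕ, (j : ℤ) < q ∧ ∃ l : ℤ,
      |((m + j : ℕ) : ℝ) * α - θ - l| ≤ 1 / (2 * q) + |q * α - p| / 2 := by
  obtain ⟨u, v, huv⟩ := hc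
  set δ : ℝ := q * α - p with hδ
  set y : ℝ := θ - m * α - δ / 2 with hy
  set t : ℤ := round (q * y) with ht
  have hround : |q * y - t| ≤ 1 / 2 := abs_sub_round _
  have h0 : 0 ≤ (t * u) % q := Int.emod_nonneg _ (by omega)
  have h1 : (t * u) % q < q := Int.emod_lt_of_pos _ (by omega)
  obtain ⟨j, hj⟩ := Int.eq_ofNat_of_zero_le h0
  refine ⟨j, by omega, -(t * v) - (t * u / q) * p, ?_⟩
  have hdiv := Int.emod_add_mul_ediv (t * u) q
  have hqR : (1 : ℝ) ≤ q := by exact_mod_cast hq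
  have hq0 : (0 : ℝ) < q := by linarith
  set d := t * u / q with hd
  have e1 : (j : ℝ) = t * u - q * d := by
    have : (j : ℤ) = t * u - q * d := by rw [← hj]; linarith
    exact_mod_cast this
  have e2 : (u : ℝ) * p + v * q = 1 := by exact_mod_cast huv
  have hjq : (j : ℝ) ≤ q := by
    have : (j : ℤ) ≤ q := by omega
    exact_mod_cast this
  have hj0 : (0 : ℝ) ≤ j := by positivity
  have key : q * (((m + j : ℕ) : ℝ) * α - θ - ((-(t * v) - d * p : ℤ) : ℝ))
      = -(q * y - t) + δ * (j - q / 2) := by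
    push_cast
    have e3 : (q : ℝ) * α = δ + p := by rw [hδ]; ring
    have e4 : (j : ℝ) * p = t - (t * v + d * p) * q := by
      rw [e1]; linear_combination (t : ℝ) * e2
    rw [hy]
    linear_combination (j : ℝ) * e3 + e4
  have hb : |q * (((m + j : ℕ) : ℝ) * α - θ - ((-(t * v) - d * p : ℤ) : ℝ))|
      ≤ 1 / 2 + |δ| * (q / 2) := by
    rw [key]
    refine (abs_add_le _ _).trans ?_
    rw [abs_neg, abs_mul]
    have : |(j : ℝ) - q / 2| ≤ q / 2 := by rw [abs_le]; constructor <;> linarith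
    gcongr
  rw [abs_mul, abs_of_pos hq0] at hb
  have : 1 / (2 * (q : ℝ)) + |δ| / 2 = (1 / 2 + |δ| * (q / 2)) / q := by field_simp
  rw [this, le_div_iff₀ hq0]
  linarith

theorem exp_aux (s t : ℝ) (l : ℤ) :
    ‖Complex.exp (2 * Real.pi * Complex.I * s) - Complex.exp (2 * Real.pi * Complex.I * t)‖
      ≤ 2 * Real.pi * |s - t - l| := by
  have h1 : Complex.exp (2 * Real.pi * Complex.I * s)
      = Complex.exp (2 * Real.pi * Complex.I * t)
        * Complex.exp (Complex.I * ((2 * Real.pi * (s - t - l) : ℝ) : ℂ)) := by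
    rw [← Complex.exp_add, Complex.exp_eq_exp_iff_exists_int]
    refine ⟨l, ?_⟩
    push_cast
    ring
  have h2 : ‖Complex.exp (2 * Real.pi * Complex.I * t)‖ = 1 := by
    have : 2 * Real.pi * Complex.I * (t : ℂ) = ((2 * Real.pi * t : ℝ) : ℂ) * Complex.I := by
      push_cast; ring
    rw [this, Complex.norm_exp_ofReal_mul_I]
  rw [h1, ← mul_sub_one, norm_mul, h2, one_mul]
  refine (Real.norm_exp_I_mul_ofReal_sub_one_le).trans ?_
  rw [Real.norm_eq_abs, abs_mul, abs_of_pos (by positivity)]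

/-- Convergent data at level `k`. -/
theorem cf_aux (b : ℕ → ℤ) (e : ℕ → ℝ) (α : ℝ)
    (h0 : e 0 = 1) (h1 : e 1 = α)
    (hrec : ∀ k, e k = b k * e (k + 1) + e (k + 2))
    (hb : ∀ k, 1 ≤ b k) (k : ℕ) :
    (k : ℤ) ≤ (cfPair b (1, 0) k).1 ∧ 1 ≤ (cfPair b (1, 0) k).1 ∧
    0 ≤ (cfPair b (1, 0) k).2 ∧ (1 ≤ k → 1 ≤ (cfPair b (1, 0) k).2) ∧
    (cfPair b (1, 0) k).2 ≤ (cfPair b (1, 0) k).1 ∧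
    ((cfPair b (1, 0) k).1 : ℝ) * e k + (cfPair b (1, 0) k).2 * e (k + 1) = 1 ∧
    ((cfPair b (1, 0) k).1 : ℝ) * α - (cfPair b (0, 1) k).1 = (-1) ^ k * e (k + 1) ∧
    ((cfPair b (1, 0) k).2 : ℝ) * α - (cfPair b (0, 1) k).2 = - (-1) ^ k * e k ∧
    (cfPair b (1, 0) k).1 * (cfPair b (0, 1) k).2 - (cfPair b (1, 0) k).2 * (cfPair b (0, 1) k).1
      = (-1) ^ k := by
  induction k with
  | zero => simp [cfPair, h0, h1]
  | succ k ih =>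
    obtain ⟨i1, i2, i3, i4, i5, i6, i7, i8, i9⟩ := ih
    simp only [cfPair]
    generalize (cfPair b (1, 0) k).1 = q at *
    generalize (cfPair b (1, 0) k).2 = q' at *
    generalize (cfPair b (0, 1) k).1 = p at *
    generalize (cfPair b (0, 1) k).2 = p' at *
    have hbk := hb k
    have hr := hrec k
    have hge : q ≤ b k * q := by nlinarith
    refine ⟨?_, by linarith, by linarith, fun _ => i2, by linarith, ?_, ?_, ?_, ?_⟩
    · rcases Nat.eq_zero_or_pos k with rfl | hk
      · push_cast; linarith
      · have := i4 hk
        push_cast; linarith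
    · push_cast
      linear_combination i6 - (q : ℝ) * hr
    · push_cast
      rw [pow_succ]
      linear_combination (b k : ℝ) * i7 + i8 - (-1) ^ k * hr
    · rw [pow_succ]
      linear_combination i7
    · rw [pow_succ]
      linear_combination - i9

/-- Let `α ∈ [0,1)` be irrational with continued fraction expansion
`α = [0; a₁, a₂, …]`, encoded by the Euclidean division data `η₋₁ = 1`, `η₀ = α`,
`η_{k-1} = a_{k+1} η_k + η_{k+1}` with `0 < η_{k+1} < η_k` for all `k ≥ 0`.
If all partial quotients satisfy `aₖ ≤ B` for a positive integer `B`, then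
`X(√t, α)` is `6√B`-relatively dense. -/
theorem fermatSpiral_relDense_of_bounded_partial_quotients
    (α : ℝ) (hα : α ∈ Set.Ico (0 : ℝ) 1) (hirr : Irrational α)
    (a : ℤ → ℤ) (η : ℤ → ℝ)
    (hη1 : η (-1) = 1) (hη0 : η 0 = α)
    (hrec : ∀ k : ℤ, 0 ≤ k → η (k - 1) = a (k + 1) * η k + η (k + 1))
    (hpos : ∀ k : ℤ, 0 ≤ k → 0 < η (k + 1) ∧ η (k + 1) < η k)
    (B : ℕ) (hB : 0 < B) (hbd : ∀ k : ℤ, 1 ≤ k → a k ≤ (B : ℤ)) :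
    ∀ x : ℂ, ∃ z ∈ fermatSpiral α, z ∈ Metric.ball x (6 * Real.sqrt B) := by
  intro x
  set r := ‖x‖ with hr
  have hBR : (1 : ℝ) ≤ B := by exact_mod_cast hB
  set S := Real.sqrt B with hS
  have hSS : S * S = B := Real.mul_self_sqrt (by positivity)
  have hS1 : 1 ≤ S := Real.one_le_sqrt.mpr hBR
  by_cases hsmall : r < 6 * S
  · refine ⟨0, ⟨0, by simp⟩, ?_⟩
    rw [Metric.mem_ball, dist_eq_norm]
    simpa using hsmall
  push Not at hsmall
  have hr0 : 0 < r := by linarith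
  -- continued fraction data
  let b : ℕ → ℤ := fun k => a (k + 1)
  let e : ℕ → ℝ := fun k => η ((k : ℤ) - 1)
  have he0 : e 0 = 1 := by simp [e, hη1]
  have he1 : e 1 = α := by simp [e, hη0]
  have herec : ∀ k, e k = b k * e (k + 1) + e (k + 2) := by
    intro k
    have := hrec k (by positivity)
    simp only [e, b]
    rw [this]
    congr 2
    · congr 1; push_cast; ring
    · push_cast; ring
  have hα0 : 0 < α := lt_of_le_of_ne hα.1 (by
    rintro rfl
    exact not_irrational_zero hirr)
  have hstep : ∀ k, 0 < e (k + 1) ∧ e (k + 1) < e k := by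
    intro k
    rcases k with _ | k
    · rw [he0, zero_add, he1]; exact ⟨hα0, hα.2⟩
    · have := hpos k (by positivity)
      have t1 : ((k + 1 + 1 : ℕ) : ℤ) - 1 = k + 1 := by push_cast; ring
      have t2 : ((k + 1 : ℕ) : ℤ) - 1 = k := by push_cast; ring
      simp only [e, t1, t2]
      exact this
  have hb1 : ∀ k, 1 ≤ b k := by
    intro k
    have hh := herec k
    have s1 := hstep k
    have s2 := hstep (k + 1)
    by_contra hcon
    have h' : b k ≤ 0 := by omega
    have h'' : (b k : ℝ) ≤ 0 := by exact_mod_cast h'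
    have := mul_nonpos_of_nonpos_of_nonneg h'' s1.1.le
    have s3 := s2.2
    have : e (k + 2) < e (k + 1) := s3
    linarith
  have hbB : ∀ k, b k ≤ B := fun k => hbd _ (by omega)
  have cf := cf_aux b e α he0 he1 herec hb1
  set Q : ℕ → ℤ := fun k => (cfPair b (1, 0) k).1 with hQ
  -- choice of the level
  have hex : ∃ k, 4 * S * r < (Q k : ℝ) := by
    obtain ⟨k, hk⟩ := exists_nat_gt (4 * S * r)
    refine ⟨k, hk.trans_le ?_⟩
    exact_mod_cast (cf k).1
  classical
  obtain ⟨k, hk1, hk2⟩ : ∃ k, (Q k : ℝ) ≤ 4 * S * r ∧ 4 * S * r < (Q (k + 1) : ℝ) := by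
    have hs := Nat.find_spec hex
    have hm := fun m => Nat.find_min hex (m := m)
    rcases hn : Nat.find hex with _ | k
    · rw [hn] at hs
      simp [hQ, cfPair] at hs
      nlinarith
    · rw [hn] at hs
      exact ⟨k, not_lt.mp (hm k (by omega)), hs⟩
  obtain ⟨-, c2, c3, -, c5, -, c7, -, c9⟩ := cf k
  obtain ⟨-, d2, -, -, -, d6, -, -, -⟩ := cf (k + 1)
  have hQs : Q (k + 1) ≤ (B + 1) * Q k := by
    have h1 : Q (k + 1) = b k * Q k + (cfPair b (1, 0) k).2 := rfl
    have h2 : (cfPair b (1, 0) k).2 ≤ Q k := c5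
    have h3 := hbB k
    have h4 : 1 ≤ Q k := c2
    rw [h1]; nlinarith
  have hek : e (k + 1) * Q (k + 1) ≤ 1 := by
    have h1 : (0 : ℝ) ≤ (cfPair b (1, 0) (k + 1)).2 * e (k + 1 + 1) := by
      have : (0 : ℝ) ≤ (cfPair b (1, 0) (k + 1)).2 := by
        exact_mod_cast (cf (k + 1)).2.2.1
      exact mul_nonneg this (hstep (k + 1)).1.le
    have h2 : (Q (k + 1) : ℝ) * e (k + 1) + (cfPair b (1, 0) (k + 1)).2 * e (k + 1 + 1) = 1 := d6
    linarith
  have hcop : IsCoprime (cfPair b (0, 1) k).1 (Q k) := by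
    refine ⟨-((-1) ^ k * (cfPair b (1, 0) k).2), (-1) ^ k * (cfPair b (0, 1) k).2, ?_⟩
    have hsq : ((-1 : ℤ) ^ k) * (-1) ^ k = 1 := by rw [← mul_pow]; simp
    simp only [hQ]
    linear_combination (-1) ^ k * c9 + hsq
  have hQ1 : 1 ≤ Q k := c2
  obtain ⟨j, hj, l, hl⟩ := cover_aux α _ (Q k) hQ1 hcop (Complex.arg x / (2 * Real.pi)) ⌈r ^ 2⌉₊
  have habs : |(Q k : ℝ) * α - (cfPair b (0, 1) k).1| = e (k + 1) := by
    have : (Q k : ℝ) * α - (cfPair b (0, 1) k).1 = (-1) ^ k * e (k + 1) := c7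
    rw [this, abs_mul, abs_pow, abs_neg, abs_one, one_pow, one_mul, abs_of_pos (hstep k).1]
  rw [habs] at hl
  set n : ℕ := ⌈r ^ 2⌉₊ + j with hn
  set θ := Complex.arg x / (2 * Real.pi) with hθ
  have hpi := Real.pi_pos
  have hx : x = r * Complex.exp (2 * Real.pi * Complex.I * θ) := by
    conv_lhs => rw [← Complex.norm_mul_exp_arg_mul_I x]
    congr 2
    rw [hθ]; push_cast
    have : (Real.pi : ℂ) ≠ 0 := by exact_mod_cast hpi.ne'
    field_simp
  refine ⟨_, ⟨n, rfl⟩, ?_⟩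
  rw [Metric.mem_ball, dist_eq_norm]
  -- radial estimate
  have hnlow : r ^ 2 ≤ n := by
    have := Nat.le_ceil (r ^ 2)
    rw [hn]; push_cast
    have : (0 : ℝ) ≤ j := by positivity
    linarith
  have hnup : (n : ℝ) ≤ r ^ 2 + Q k := by
    have h1 := (Nat.ceil_lt_add_one (sq_nonneg r)).le
    have h2 : (j : ℝ) + 1 ≤ Q k := by exact_mod_cast hj
    rw [hn]; push_cast
    linarith
  have hrad1 : r ≤ Real.sqrt n := Real.le_sqrt_of_sq_le hnlow
  have hrad2 : Real.sqrt n ≤ r + 2 * S := by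
    refine Real.sqrt_le_iff.mpr ⟨by positivity, ?_⟩
    nlinarith
  -- angular estimate
  have hang : 2 * Real.pi * |(n : ℝ) * α - θ - l| * r < 4 * S := by
    have hq0 : (0 : ℝ) < Q k := by exact_mod_cast hQ1
    have hq1 : (0 : ℝ) < Q (k + 1) := by
      have : 1 ≤ Q (k + 1) := d2
      exact_mod_cast this
    have g1 : 1 / (Q k : ℝ) ≤ (B + 1) / Q (k + 1) := by
      rw [div_le_div_iff₀ hq0 hq1]
      have : (Q (k + 1) : ℝ) ≤ (B + 1) * Q k := by exact_mod_cast hQs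
      linarith
    have g2 : e (k + 1) ≤ 1 / Q (k + 1) := by
      rw [le_div_iff₀ hq1]; exact hek
    have g3 : 1 / (2 * (Q k : ℝ)) = 1 / Q k / 2 := by field_simp
    have g4 : |(n : ℝ) * α - θ - l| ≤ (B + 2) / Q (k + 1) / 2 := by
      have : ((B : ℝ) + 2) / Q (k + 1) = (B + 1) / Q (k + 1) + 1 / Q (k + 1) := by ring
      rw [this]; linarith
    have g5 : r / Q (k + 1) ≤ 1 / (4 * S) := by
      rw [div_le_div_iff₀ hq1 (by positivity)]; linarith
    have g6 : ((B : ℝ) + 2) * (1 / (4 * S)) ≤ 3 / 4 * S := by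
      rw [mul_one_div, div_le_iff₀ (by positivity)]
      nlinarith
    have hpi4 := Real.pi_lt_four
    calc 2 * Real.pi * |(n : ℝ) * α - θ - l| * r
        ≤ 2 * Real.pi * ((B + 2) / Q (k + 1) / 2) * r := by gcongr
      _ = Real.pi * ((B + 2) * (r / Q (k + 1))) := by ring
      _ ≤ Real.pi * ((B + 2) * (1 / (4 * S))) := by gcongr
      _ ≤ Real.pi * (3 / 4 * S) := by gcongr
      _ < 4 * S := by nlinarith
  have hE := exp_aux ((n : ℝ) * α) θ l
  have hnorm : ‖Complex.exp (2 * Real.pi * Complex.I * ((n * α : ℝ) : ℂ))‖ = 1 := by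
    have : 2 * Real.pi * Complex.I * ((n * α : ℝ) : ℂ)
        = ((2 * Real.pi * (n * α) : ℝ) : ℂ) * Complex.I := by
      push_cast; ring
    rw [this, Complex.norm_exp_ofReal_mul_I]
  have hcast : ((n : ℂ) * (α : ℂ)) = ((n * α : ℝ) : ℂ) := by push_cast; rfl
  rw [hcast, hx]
  generalize Complex.exp (2 * Real.pi * Complex.I * ((n * α : ℝ) : ℂ)) = E1 at *
  generalize Complex.exp (2 * Real.pi * Complex.I * θ) = E2 at *
  have hsplit : (Real.sqrt n : ℂ) * E1 - r * E2
      = ((Real.sqrt n - r : ℝ) : ℂ) * E1 + (r : ℂ) * (E1 - E2) := by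
    push_cast; ring
  calc ‖(Real.sqrt n : ℂ) * E1 - r * E2‖
      = ‖((Real.sqrt n - r : ℝ) : ℂ) * E1 + (r : ℂ) * (E1 - E2)‖ := by rw [hsplit]
    _ ≤ ‖((Real.sqrt n - r : ℝ) : ℂ) * E1‖ + ‖(r : ℂ) * (E1 - E2)‖ := norm_add_le _ _
    _ = (Real.sqrt n - r) + r * ‖E1 - E2‖ := by
        rw [norm_mul, norm_mul, hnorm, Complex.norm_real, Complex.norm_real, mul_one,
          Real.norm_of_nonneg (by linarith), Real.norm_of_nonneg hr0.le]
    _ < 6 * S := by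
        have : r * ‖E1 - E2‖ ≤ r * (2 * Real.pi * |(n : ℝ) * α - θ - l|) := by gcongr
        linarith
end

section
/- Let α ∈ [0,1) be irrational with continued fraction expansion α = [0; a₁, a₂, a₃, …]. If the set X(√t, α) = { √n · e^{2πi n α} : n ∈ ℕ } ⊂ ℂ is r-relatively dense for some r > 1/2, then every partial quotient satisfies aₖ ≤ ⌊96 r²⌋; in particular α is badly approximable. -/
/-- `|sin (π y)| ≥ 2 |y - m|` for the nearest integer `m`. -/
theorem fs_sin_lower (y : ℝ) : 2 * |y - round y| ≤ |Real.sin (Real.pi * y)| := by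
  have h1 := abs_sub_round y
  have h2 : |Real.sin (Real.pi * y)| = |Real.sin (Real.pi * (y - round y))| := by
    have e : Real.pi * (y - round y) = Real.pi * y - (round y : ℤ) * Real.pi := by ring
    rw [e, Real.sin_sub_int_mul_pi, abs_mul, abs_zpow]
    simp
  rw [h2]
  have h3 : |Real.pi * (y - round y)| ≤ Real.pi / 2 := by
    rw [abs_mul, abs_of_pos Real.pi_pos]
    nlinarith [Real.pi_pos]
  have h4 := Real.mul_abs_le_abs_sin h3
  rw [abs_mul, abs_of_pos Real.pi_pos] at h4
  have : 2 / Real.pi * (Real.pi * |y - round y|) = 2 * |y - round y| := by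
    field_simp
  linarith

theorem fs_normSq (s R u v : ℝ) :
    ‖(s : ℂ) * Complex.exp (u * Complex.I) - R * Complex.exp (v * Complex.I)‖ ^ 2
      = (s - R) ^ 2 + 4 * (s * R) * Real.sin ((u - v) / 2) ^ 2 := by
  have hc : Real.cos (u - v) = 1 - 2 * Real.sin ((u - v) / 2) ^ 2 := by
    have := Real.cos_two_mul ((u - v) / 2)
    have h2 := Real.sin_sq_add_cos_sq ((u - v) / 2)
    rw [show 2 * ((u - v) / 2) = u - v by ring] at this
    linarith
  rw [Real.cos_sub] at hc
  rw [← Complex.normSq_eq_norm_sq, Complex.normSq_apply]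
  simp only [Complex.sub_re, Complex.sub_im, Complex.mul_re, Complex.mul_im,
    Complex.exp_ofReal_mul_I_re, Complex.exp_ofReal_mul_I_im, Complex.ofReal_re,
    Complex.ofReal_im]
  have h1 := Real.sin_sq_add_cos_sq u
  have h2 := Real.sin_sq_add_cos_sq v
  linear_combination s ^ 2 * h1 + R ^ 2 * h2 - 2 * s * R * hc

set_option maxHeartbeats 1000000 in
/-- The key estimate: relative density forces a lower bound on `q |qα - p|`. -/
theorem fs_key (α r : ℝ) (hr : 1 / 2 < r)
    (hdense : ∀ x : ℂ, ∃ z ∈ fermatSpiral α, z ∈ Metric.ball x r)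
    (p q : ℤ) (hq : 1 ≤ q) :
    1 ≤ 96 * r ^ 2 * (q * |q * α - p|) := by
  by_contra! hlt
  have hqR : (1 : ℝ) ≤ q := by exact_mod_cast hq
  have hq0 : (0 : ℝ) < q := by linarith
  obtain ⟨ε, hε⟩ : ∃ ε : ℝ, ε = α - p / q := ⟨_, rfl⟩
  have hα : α = p / q + ε := by rw [hε]; ring
  have hqe : (q : ℝ) * α - p = q * ε := by rw [hε]; field_simp
  rw [hqe, abs_mul, abs_of_pos hq0] at hlt
  obtain ⟨R, hR⟩ : ∃ R : ℝ, R = 2 * r * q := ⟨_, rfl⟩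
  obtain ⟨θ, hθ⟩ : ∃ θ : ℝ, θ = R ^ 2 * ε + 1 / (2 * q) := ⟨_, rfl⟩
  obtain ⟨z, ⟨n, hz⟩, hb⟩ := hdense (R * Complex.exp ((2 * Real.pi * θ : ℝ) * Complex.I))
  obtain ⟨s, hs⟩ : ∃ s : ℝ, s = Real.sqrt n := ⟨_, rfl⟩
  have hs2 : s ^ 2 = n := by rw [hs]; exact Real.sq_sqrt (Nat.cast_nonneg n)
  have hz' : z = s * Complex.exp ((2 * Real.pi * (n * α) : ℝ) * Complex.I) := by
    rw [hz, hs]; congr 2; push_cast; ring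
  rw [Metric.mem_ball, dist_eq_norm, hz'] at hb
  have hsq : (s - R) ^ 2 + 4 * (s * R) * Real.sin (Real.pi * (n * α - θ)) ^ 2 < r ^ 2 := by
    rw [show Real.pi * (n * α - θ) = (2 * Real.pi * (n * α) - 2 * Real.pi * θ) / 2 by ring,
      ← fs_normSq]
    exact pow_lt_pow_left₀ hb (norm_nonneg _) (by norm_num)
  have hs0 : 0 ≤ s := by rw [hs]; exact Real.sqrt_nonneg _
  have hr0 : 0 < r := by linarith
  have hRr : 2 * r ≤ R := by rw [hR]; nlinarith
  have hsR : |s - R| < r := by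
    refine abs_lt_of_sq_lt_sq ?_ hr0.le
    have : 0 ≤ 4 * (s * R) * Real.sin (Real.pi * (n * α - θ)) ^ 2 := by
      have : 0 ≤ R := by linarith
      positivity
    linarith
  obtain ⟨hl, hu⟩ := abs_lt.1 hsR
  -- bound on `n - R²`
  have hn : |(n : ℝ) - R ^ 2| ≤ 5 * r ^ 2 * q := by
    rw [← hs2, show s ^ 2 - R ^ 2 = (s - R) * (s + R) by ring, abs_mul,
      abs_of_nonneg (by linarith : 0 ≤ s + R)]
    calc |s - R| * (s + R) ≤ r * (2 * R + r) := by
          apply mul_le_mul hsR.le (by linarith) (by linarith) hr0.le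
      _ ≤ 5 * r ^ 2 * q := by rw [hR]; nlinarith [mul_pos hr0 hr0]
  obtain ⟨y, hy⟩ : ∃ y : ℝ, y = n * α - θ := ⟨_, rfl⟩
  obtain ⟨m, hm⟩ : ∃ m : ℤ, m = round y := ⟨_, rfl⟩
  have hsin := fs_sin_lower y
  rw [← hm] at hsin
  rw [← hy] at hsq
  have hφ : 2 * q * (y - m) = ((2 * (n * p - m * q) - 1 : ℤ) : ℝ) + 2 * q * ((n - R ^ 2) * ε) := by
    rw [hy, hθ, hα]; push_cast; field_simp; ring
  have hodd : (1 : ℝ) ≤ |((2 * (n * p - m * q) - 1 : ℤ) : ℝ)| := by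
    rw [← Int.cast_abs]
    exact_mod_cast Int.one_le_abs (by omega)
  have hsmall : |2 * q * ((n - R ^ 2) * ε)| ≤ 10 / 96 := by
    rw [abs_mul, abs_of_pos (by linarith : (0 : ℝ) < 2 * q), abs_mul]
    have : |(n : ℝ) - R ^ 2| * |ε| ≤ 5 * r ^ 2 * q * |ε| :=
      mul_le_mul_of_nonneg_right hn (abs_nonneg _)
    have h2 := mul_le_mul_of_nonneg_left this (by linarith : (0 : ℝ) ≤ 2 * q)
    linarith
  have hphi : 4 / 5 ≤ 2 * q * |y - m| := by
    have h1 : |((2 * (n * p - m * q) - 1 : ℤ) : ℝ)| ≤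
        |2 * q * (y - m)| + |2 * q * ((n - R ^ 2) * ε)| := by
      have e : ((2 * (n * p - m * q) - 1 : ℤ) : ℝ)
        = 2 * q * (y - m) - 2 * q * ((n - R ^ 2) * ε) := by rw [hφ]; ring
      rw [e]; exact abs_sub _ _
    rw [abs_mul (2 * (q : ℝ)), abs_of_pos (by linarith : (0 : ℝ) < 2 * q)] at h1
    linarith
  have hsq2 : 4 / 5 ≤ q * |Real.sin (Real.pi * y)| := by
    have := mul_le_mul_of_nonneg_left hsin hq0.le
    linarith
  have hsq3 : (4 / 5) ^ 2 ≤ (q * |Real.sin (Real.pi * y)|) ^ 2 :=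
    pow_le_pow_left₀ (by norm_num) hsq2 2
  rw [mul_pow, sq_abs] at hsq3
  have hsR2 : R ^ 2 / 2 ≤ s * R := by nlinarith
  have h5 : 4 * (R ^ 2 / 2) * Real.sin (Real.pi * y) ^ 2
      ≤ 4 * (s * R) * Real.sin (Real.pi * y) ^ 2 :=
    mul_le_mul_of_nonneg_right (by linarith) (sq_nonneg _)
  have h6 : 4 * (R ^ 2 / 2) * Real.sin (Real.pi * y) ^ 2
      = 8 * r ^ 2 * (q ^ 2 * Real.sin (Real.pi * y) ^ 2) := by rw [hR]; ring
  have h7 : 8 * r ^ 2 * (4 / 5) ^ 2 ≤ 8 * r ^ 2 * (q ^ 2 * Real.sin (Real.pi * y) ^ 2) :=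
    mul_le_mul_of_nonneg_left hsq3 (by positivity)
  have h8 : 0 < r ^ 2 := by positivity
  linarith [sq_nonneg (s - R)]

/-- Convergents from the Euclidean data. -/
theorem fs_convergents (α : ℝ) (hα : α < 1) (a : ℤ → ℤ) (η : ℤ → ℝ)
    (hη1 : η (-1) = 1) (hη0 : η 0 = α)
    (hrec : ∀ k : ℤ, 0 ≤ k → η (k - 1) = a (k + 1) * η k + η (k + 1))
    (hpos : ∀ k : ℤ, 0 ≤ k → 0 < η (k + 1) ∧ η (k + 1) < η k) (n : ℕ) :
    ∃ p q p' q' : ℤ, ∃ s : ℝ, (s = 1 ∨ s = -1) ∧ 1 ≤ q ∧ 0 ≤ q' ∧ 0 < η n ∧ η n < η (n - 1) ∧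
      q * α - p = s * η n ∧ q' * α - p' = -s * η (n - 1) ∧
      q * η (n - 1) + q' * η n = 1 := by
  induction n with
  | zero =>
    refine ⟨0, 1, 1, 0, 1, Or.inl rfl, le_refl _, le_refl _, ?_, ?_, ?_, ?_, ?_⟩
    · have := hpos 0 le_rfl
      simp only [Nat.cast_zero]; linarith [this.1, this.2]
    all_goals simp [hη1, hη0, hα]
  | succ n ih =>
    obtain ⟨p, q, p', q', s, hs, hq, hq', h0, h1, e1, e2, e3⟩ := ih
    have hr := hrec n (by positivity)
    obtain ⟨hp1, hp2⟩ := hpos n (by positivity)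
    have ha : 0 < a (n + 1) := by
      have : (0 : ℝ) < a (n + 1) := by
        by_contra! hc
        nlinarith
      exact_mod_cast this
    push_cast
    rw [show ((n : ℤ) + 1 - 1) = n by ring]
    refine ⟨a (n + 1) * p + p', a (n + 1) * q + q', p, q, -s, ?_, ?_, by linarith, hp1, hp2,
      ?_, ?_, ?_⟩
    · rcases hs with h | h <;> simp [h]
    · nlinarith
    · push_cast
      linear_combination (a (n + 1) : ℝ) * e1 + e2 - s * hr
    · linear_combination e1
    · push_cast
      linear_combination e3 - q * hr

/-- Let `α ∈ [0,1)` be irrational with continued fraction expansion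
`α = [0; a₁, a₂, …]`, encoded by the Euclidean division data `η₋₁ = 1`, `η₀ = α`,
`η_{k-1} = a_{k+1} η_k + η_{k+1}` with `0 < η_{k+1} < η_k` for all `k ≥ 0`.
If `X(√t, α)` is `r`-relatively dense for some `r > 1/2`, then every partial
quotient satisfies `aₖ ≤ ⌊96 r²⌋`; in particular `α` is badly approximable. -/
theorem bounded_partial_quotients_of_fermatSpiral_relDense
    (α : ℝ) (hα : α ∈ Set.Ico (0 : ℝ) 1) (hirr : Irrational α)
    (a : ℤ → ℤ) (η : ℤ → ℝ)
    (hη1 : η (-1) = 1) (hη0 : η 0 = α)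
    (hrec : ∀ k : ℤ, 0 ≤ k → η (k - 1) = a (k + 1) * η k + η (k + 1))
    (hpos : ∀ k : ℤ, 0 ≤ k → 0 < η (k + 1) ∧ η (k + 1) < η k)
    (r : ℝ) (hr : 1 / 2 < r)
    (hdense : ∀ x : ℂ, ∃ z ∈ fermatSpiral α, z ∈ Metric.ball x r) :
    (∀ k : ℤ, 1 ≤ k → a k ≤ ⌊96 * r ^ 2⌋) ∧ IsBadlyApproximable α := by
  have hr2 : 0 < 96 * r ^ 2 := by nlinarith
  constructor
  · intro k hk
    obtain ⟨n, hn⟩ : ∃ n : ℕ, k = n + 1 := ⟨(k - 1).toNat, by omega⟩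
    subst hn
    obtain ⟨p, q, p', q', s, hs, hq, hq', h0, h1, e1, e2, e3⟩ :=
      fs_convergents α hα.2 a η hη1 hη0 hrec hpos n
    have hkey := fs_key α r hr hdense p q hq
    have habs : |(q : ℝ) * α - p| = η n := by
      rw [e1, abs_mul, abs_of_pos h0]
      rcases hs with h | h <;> simp [h]
    rw [habs] at hkey
    have hrn := hrec n (by positivity)
    obtain ⟨hp1, hp2⟩ := hpos n (by positivity)
    have hqR : (1 : ℝ) ≤ q := by exact_mod_cast hq
    have hqR' : (0 : ℝ) ≤ q' := by exact_mod_cast hq'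
    rw [Int.le_floor]
    have hx : 0 < q * η n := by positivity
    have h2 : a (n + 1) * (q * η n) ≤ 1 := by
      have : 0 ≤ q' * η n := by positivity
      have : 0 ≤ q * η (n + 1) := by positivity
      rw [hrn] at e3
      nlinarith
    exact le_of_mul_le_mul_right (h2.trans hkey) hx
  · refine ⟨1 / (96 * r ^ 2), by positivity, fun p q hq => ?_⟩
    have := fs_key α r hr hdense p q (by exact_mod_cast hq)
    rw [div_le_iff₀ hr2]
    push_cast at this
    linarith
end

section
/- Let α ∈ [0,1) be irrational and suppose there is a constant C > 0 such that q·|qα − p| ≥ C for all (p,q) ∈ ℤ × ℕ with q ≥ 1. Then the set X(√t, α) = { √n · e^{2πi n α} : n ∈ ℕ } ⊂ ℂ is (√C / 2)-uniformly discrete. -/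
/-- Elementary inequality: here `d = √m - √n`, `s = √m + √n`, `t = ‖qα‖`. -/
lemma spiral_ineq (C d s t : ℝ) (hd : 0 ≤ d) (hds : d ≤ s) (ht : 0 ≤ t) (ht2 : t ≤ 1 / 2)
    (hC : C ≤ d * s * t) : C ≤ d ^ 2 + 4 * (s ^ 2 - d ^ 2) * t ^ 2 := by
  have hs : 0 ≤ s := hd.trans hds
  rcases le_total (1 / 4) t with h | h
  · have h1 : 0 ≤ d ^ 2 * (1 - 4 * t ^ 2) :=
      mul_nonneg (sq_nonneg d) (by nlinarith)
    have h2 : d * s * t ≤ s * s * t := by gcongr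
    have h3 : 0 ≤ s * s * t * (4 * t - 1) := mul_nonneg (by positivity) (by linarith)
    nlinarith
  · have h1 : 0 ≤ d ^ 2 * (1 / 4 - 4 * t ^ 2) :=
      mul_nonneg (sq_nonneg d) (by nlinarith)
    have h2 : 0 ≤ d * (s * t) := by positivity
    nlinarith [sq_nonneg (d - 2 * (s * t)), sq_nonneg d, sq_nonneg (s * t)]

lemma cos_bound (x : ℝ) (p : ℤ) (h : |x - p| ≤ 1 / 2) :
    Real.cos (2 * Real.pi * x) ≤ 1 - 8 * |x - p| ^ 2 := by
  have hpi := Real.pi_pos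
  have h1 : Real.cos (2 * Real.pi * x) = Real.cos (2 * (Real.pi * |x - p|)) := by
    have : 2 * (Real.pi * |x - p|) = |2 * Real.pi * x - p * (2 * Real.pi)| := by
      rw [show 2 * Real.pi * x - p * (2 * Real.pi) = (2 * Real.pi) * (x - p) by ring, abs_mul,
        abs_of_pos (by positivity : 0 < 2 * Real.pi)]
      ring
    rw [this, Real.cos_abs, Real.cos_sub_int_mul_two_pi]
  have h2 : 2 / Real.pi * (Real.pi * |x - p|) ≤ Real.sin (Real.pi * |x - p|) :=
    Real.mul_le_sin (by positivity) (by nlinarith)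
  have h3 : 2 / Real.pi * (Real.pi * |x - p|) = 2 * |x - p| := by field_simp
  rw [h3] at h2
  rw [h1, Real.cos_two_mul, Real.cos_sq']
  nlinarith [abs_nonneg (x - p)]

lemma spiral_dist (a b u v : ℝ) :
    Complex.normSq (a * Complex.exp (u * Complex.I) - b * Complex.exp (v * Complex.I))
      = a ^ 2 + b ^ 2 - 2 * (a * b) * Real.cos (u - v) := by
  rw [Complex.normSq_apply, Complex.sub_re, Complex.sub_im, Complex.re_ofReal_mul,
    Complex.re_ofReal_mul, Complex.im_ofReal_mul, Complex.im_ofReal_mul,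
    Complex.exp_ofReal_mul_I_re, Complex.exp_ofReal_mul_I_re,
    Complex.exp_ofReal_mul_I_im, Complex.exp_ofReal_mul_I_im, Real.cos_sub]
  linear_combination a ^ 2 * Real.sin_sq_add_cos_sq u + b ^ 2 * Real.sin_sq_add_cos_sq v

lemma spiral_sep (α C : ℝ)
    (hbad : ∀ (p : ℤ) (q : ℕ), 1 ≤ q → C ≤ (q : ℝ) * |(q : ℝ) * α - (p : ℝ)|)
    (m n : ℕ) (hmn : n < m) :
    Real.sqrt C ≤ dist
      (Real.sqrt m * Complex.exp (2 * Real.pi * Complex.I * (m * α)) : ℂ)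
      (Real.sqrt n * Complex.exp (2 * Real.pi * Complex.I * (n * α))) := by
  rw [Complex.dist_eq, Complex.norm_def]
  apply Real.sqrt_le_sqrt
  have e : ∀ k : ℕ, (2 * Real.pi * Complex.I * (k * α) : ℂ)
      = ((2 * Real.pi * (k * α) : ℝ) : ℂ) * Complex.I := by
    intro k; push_cast; ring
  rw [e, e, spiral_dist]
  have hb := hbad (round ((m - n : ℕ) * α)) (m - n) (by omega)
  have ht := abs_sub_round (((m - n : ℕ) : ℝ) * α)
  have hc := cos_bound _ _ ht
  have hq : ((m - n : ℕ) : ℝ) = m - n := by push_cast [hmn.le]; ring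
  have hlt : (n : ℝ) ≤ m := by exact_mod_cast hmn.le
  have hab := Real.sqrt_le_sqrt hlt
  have ha := Real.sq_sqrt (Nat.cast_nonneg (α := ℝ) m)
  have hb' := Real.sq_sqrt (Nat.cast_nonneg (α := ℝ) n)
  have hb0 := Real.sqrt_nonneg (n : ℝ)
  have ha0 := Real.sqrt_nonneg (m : ℝ)
  rw [show 2 * Real.pi * (m * α) - 2 * Real.pi * (n * α)
    = 2 * Real.pi * (((m - n : ℕ) : ℝ) * α) by rw [hq]; ring]
  have ht0 := abs_nonneg (((m - n : ℕ) : ℝ) * α - (round (((m - n : ℕ) : ℝ) * α) : ℤ))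
  generalize |((m - n : ℕ) : ℝ) * α - (round (((m - n : ℕ) : ℝ) * α) : ℤ)| = t at *
  have key := spiral_ineq C (√(m : ℝ) - √(n : ℝ)) (√(m : ℝ) + √(n : ℝ)) t
    (by linarith) (by linarith) ht0 ht (by
      refine hb.trans (le_of_eq ?_)
      rw [hq]
      linear_combination (-t) * ha + t * hb')
  have := mul_le_mul_of_nonneg_left hc (mul_nonneg ha0 hb0)
  nlinarith

/-- Let `α ∈ [0,1)` be irrational and suppose `C > 0` satisfies
`q·|qα − p| ≥ C` for all `p ∈ ℤ` and all integers `q ≥ 1`. Then `X(√t, α)` is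
`√C/2`-uniformly discrete: every open ball of radius `√C/2` contains at most one
of its points. -/
theorem fermatSpiral_uniformlyDiscrete_of_badlyApproximable
    (α : ℝ) (hα : α ∈ Set.Ico (0 : ℝ) 1) (hirr : Irrational α)
    (C : ℝ) (hC : 0 < C)
    (hbad : ∀ (p : ℤ) (q : ℕ), 1 ≤ q → C ≤ (q : ℝ) * |(q : ℝ) * α - (p : ℝ)|) :
    ∀ x : ℂ, Set.Subsingleton (fermatSpiral α ∩ Metric.ball x (Real.sqrt C / 2)) := by
  intro x y hy z hz
  obtain ⟨⟨m, rfl⟩, hy⟩ := hy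
  obtain ⟨⟨n, rfl⟩, hz⟩ := hz
  rw [Metric.mem_ball] at hy hz
  rcases lt_trichotomy n m with h | h | h
  · have h1 := spiral_sep α C hbad m n h
    have h2 := dist_triangle_right
      (Real.sqrt m * Complex.exp (2 * Real.pi * Complex.I * (m * α)) : ℂ)
      (Real.sqrt n * Complex.exp (2 * Real.pi * Complex.I * (n * α))) x
    linarith
  · rw [h]
  · have h1 := spiral_sep α C hbad n m h
    have h2 := dist_triangle_right
      (Real.sqrt n * Complex.exp (2 * Real.pi * Complex.I * (n * α)) : ℂ)
      (Real.sqrt m * Complex.exp (2 * Real.pi * Complex.I * (m * α))) x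
    linarith
end

section
/- Let α ∈ [0,1) be irrational. If the set X(√t, α) = { √n · e^{2πi n α} : n ∈ ℕ } ⊂ ℂ is s-uniformly discrete for some 0 < s < 2, then q·|qα − p| ≥ s²/53 for all (p,q) ∈ ℤ × ℕ with q ≥ 1; in particular α is badly approximable with constant C = s²/53. -/
/-- Let `α ∈ [0,1)` be irrational. If `X(√t, α)` is `s`-uniformly
discrete for some `0 < s < 2`, then `q·|qα − p| ≥ s²/53` for all `p ∈ ℤ` and all
integers `q ≥ 1`; in particular `α` is badly approximable with constant `C = s²/53`. -/
theorem badlyApproximable_of_fermatSpiral_uniformlyDiscrete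
    (α : ℝ) (hα : α ∈ Set.Ico (0 : ℝ) 1) (hirr : Irrational α)
    (s : ℝ) (hs0 : 0 < s) (hs2 : s < 2)
    (hdisc : ∀ x : ℂ, Set.Subsingleton (fermatSpiral α ∩ Metric.ball x s)) :
    (∀ (p : ℤ) (q : ℕ), 1 ≤ q → s ^ 2 / 53 ≤ (q : ℝ) * |(q : ℝ) * α - (p : ℝ)|) ∧
      IsBadlyApproximable α := by
  have key : ∀ (p : ℤ) (q : ℕ), 1 ≤ q →
      s ^ 2 / 53 ≤ (q : ℝ) * |(q : ℝ) * α - (p : ℝ)| := by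
    intro p q hq
    by_contra! hlt
    have hq' : (1 : ℝ) ≤ q := by exact_mod_cast hq
    obtain ⟨k, hk⟩ : ∃ k : ℕ, k = ⌈1 / s⌉₊ := ⟨_, rfl⟩
    have hk1 : 1 / s ≤ k := hk ▸ Nat.le_ceil _
    have hk2 : (k : ℝ) < 1 / s + 1 := hk ▸ Nat.ceil_lt_add_one (by positivity)
    have hk0 : (0 : ℝ) < k := lt_of_lt_of_le (by positivity) hk1
    have hks : 1 ≤ k * s := by rwa [div_le_iff₀ hs0] at hk1
    have hks2 : k * s < 1 + s := by
      have h := mul_lt_mul_of_pos_right hk2 hs0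
      have : (1 / s + 1) * s = 1 + s := by field_simp
      linarith
    set n : ℕ := (k * q) ^ 2 with hn
    set m : ℕ := n + q with hm
    set d : ℝ := (q : ℝ) * α - p with hd
    have hsn : Real.sqrt n = k * q := by
      rw [hn]; push_cast
      exact Real.sqrt_sq (by positivity)
    have hkq : (0 : ℝ) < k * q := by positivity
    have hsm1 : Real.sqrt n < Real.sqrt m :=
      Real.sqrt_lt_sqrt (by positivity) (by rw [hm]; push_cast; linarith)
    have hsm2 : Real.sqrt m ≤ k * q + s / 2 := by
      rw [Real.sqrt_le_left (by positivity)]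
      rw [hm, hn]; push_cast
      nlinarith [sq_nonneg s, mul_le_mul_of_nonneg_right hks (by positivity : (0:ℝ) ≤ q)]
    set A : ℂ := Complex.exp (2 * Real.pi * Complex.I * (n * α)) with hA
    set B : ℂ := Complex.exp (2 * Real.pi * Complex.I * (m * α)) with hB
    have nA : ‖A‖ = 1 := by
      have : 2 * Real.pi * Complex.I * (n * α) = ((2 * Real.pi * (n * α) : ℝ) : ℂ) * Complex.I := by
        push_cast; ring
      rw [hA, this, Complex.norm_exp_ofReal_mul_I]
    have nB : ‖B‖ = 1 := by
      have : 2 * Real.pi * Complex.I * (m * α) = ((2 * Real.pi * (m * α) : ℝ) : ℂ) * Complex.I := by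
        push_cast; ring
      rw [hB, this, Complex.norm_exp_ofReal_mul_I]
    have hBA : B = A * Complex.exp (Complex.I * ((2 * Real.pi * d : ℝ) : ℂ)) := by
      rw [hA, hB, ← Complex.exp_add, Complex.exp_eq_exp_iff_exists_int]
      refine ⟨p, ?_⟩
      rw [hm, hd]; push_cast; ring
    have hdiff : ‖B - A‖ ≤ 2 * Real.pi * |d| := by
      have : B - A = A * (Complex.exp (Complex.I * ((2 * Real.pi * d : ℝ) : ℂ)) - 1) := by
        rw [hBA]; ring
      rw [this, norm_mul, nA, one_mul]
      refine (Real.norm_exp_I_mul_ofReal_sub_one_le).trans ?_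
      rw [Real.norm_eq_abs, abs_mul, abs_of_pos (by positivity)]
    set x : ℂ := Real.sqrt n * A with hx
    set y : ℂ := Real.sqrt m * B with hy
    have hxm : x ∈ fermatSpiral α := ⟨n, rfl⟩
    have hym : y ∈ fermatSpiral α := ⟨m, rfl⟩
    have nx : ‖x‖ = Real.sqrt n := by
      rw [hx, norm_mul, nA, mul_one, Complex.norm_of_nonneg (Real.sqrt_nonneg _)]
    have ny : ‖y‖ = Real.sqrt m := by
      rw [hy, norm_mul, nB, mul_one, Complex.norm_of_nonneg (Real.sqrt_nonneg _)]
    have hne : x ≠ y := by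
      intro h
      rw [← nx, ← ny, h] at hsm1
      exact lt_irrefl _ hsm1
    have hdist : ‖y - x‖ < 2 * s := by
      have e : y - x = ((Real.sqrt m - Real.sqrt n : ℝ) : ℂ) * B + (Real.sqrt n : ℂ) * (B - A) := by
        rw [hx, hy]; push_cast; ring
      have h1 : ‖((Real.sqrt m - Real.sqrt n : ℝ) : ℂ) * B‖ ≤ s / 2 := by
        rw [norm_mul, nB, mul_one, Complex.norm_of_nonneg (by linarith)]
        linarith
      have h2 : ‖(Real.sqrt n : ℂ) * (B - A)‖ < s := by
        rw [norm_mul, Complex.norm_of_nonneg (Real.sqrt_nonneg _), hsn]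
        have hpi := Real.pi_lt_four
        have hpi0 := Real.pi_pos
        calc (k * q : ℝ) * ‖B - A‖ ≤ (k * q) * (2 * Real.pi * |d|) := by gcongr
          _ = 2 * Real.pi * k * (q * |d|) := by ring
          _ < 2 * Real.pi * k * (s ^ 2 / 53) := by gcongr
          _ = (2 * Real.pi) * ((k * s) * s / 53) := by ring
          _ ≤ (2 * 4) * (3 * s / 53) := by
            have : k * s ≤ 3 := by linarith
            gcongr
          _ < s := by linarith
      rw [e]
      have := norm_add_le (((Real.sqrt m - Real.sqrt n : ℝ) : ℂ) * B) ((Real.sqrt n : ℂ) * (B - A))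
      linarith
    apply hne
    refine hdisc ((x + y) / 2) ⟨hxm, ?_⟩ ⟨hym, ?_⟩
    · rw [Metric.mem_ball, dist_comm, dist_eq_norm]
      have : (x + y) / 2 - x = (y - x) / 2 := by ring
      rw [this, norm_div, Complex.norm_ofNat]; linarith
    · rw [Metric.mem_ball, dist_eq_norm]
      have : y - (x + y) / 2 = (y - x) / 2 := by ring
      rw [this, norm_div, Complex.norm_ofNat]; linarith
  exact ⟨key, s ^ 2 / 53, by positivity, key⟩
end

section
/- (Three distance theorem.) Let α ∈ (0,1) be irrational with continued fraction data: partial quotients a₁, a₂, …, convergents pₖ/qₖ (defined by p₋₁=1, p₀=0, q₋₁=0, q₀=1, p_{k+1}=a_{k+1}pₖ+p_{k−1}, q_{k+1}=a_{k+1}qₖ+q_{k−1}), and ηₖ = (−1)ᵏ(qₖα − pₖ). Let N ∈ ℕ be written uniquely as N = s·qₖ + q_{k−1} + r with 1 ≤ s ≤ a_{k+1} and 0 ≤ r < qₖ. Then the N+1 points {nα mod 1 : n = 0, 1, …, N} partition the circle ℝ/ℤ into N+1 intervals having at most three distinct lengths: exactly N+1−qₖ intervals of length ηₖ, exactly r+1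 intervals of length η_{k−1} − s·ηₖ, and exactly qₖ − (r+1) intervals of length η_{k−1} − (s−1)·ηₖ. -/
/-- The points `{nα mod 1 : n = 0, …, N}` on the circle `ℝ/ℤ ≃ [0,1)`. -/
noncomputable def torusPts (α : ℝ) (N : ℕ) : Finset ℝ :=
  (Finset.range (N + 1)).image fun n : ℕ => Int.fract ((n : ℝ) * α)

/-- For a finite set `T ⊆ [0,1)` of points on the circle `ℝ/ℤ` and `t ∈ T`, the
length of the subinterval of the circle starting at `t`, i.e. the (cyclic) distance
from `t` to the next point of `T`. -/
noncomputable def cyclicGap (T : Finset ℝ) (t : ℝ) : ℝ :=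
  sInf {d : ℝ | 0 < d ∧ Int.fract (t + d) ∈ T}

/-- The distance from the point with index `n` to its neighbour in the direction `(-1)^k`. -/
noncomputable def nbrDist (N Q Q' s : ℤ) (e e' : ℝ) (n : ℤ) : ℝ :=
  if n + Q ≤ N then e else if s * Q + Q' ≤ n then e' - s * e else e' - (s - 1) * e

theorem nbrDist_le (N Q Q' s r a : ℤ) (e e' : ℝ) (he : 0 < e) (ha : a * e < e')
    (hsa : s ≤ a) (hs1 : 1 ≤ s) (hQ : 0 < Q) (hQ' : 0 ≤ Q') (hrq : r < Q)
    (hN : N = s * Q + Q' + r) (n n' x y : ℤ) (hn0 : 0 ≤ n) (hnN : n ≤ N)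
    (hn0' : 0 ≤ n') (hnN' : n' ≤ N) (hM : n' - n = x * Q + y * Q')
    (hpos : 0 < x * e - y * e') : nbrDist N Q Q' s e e' n ≤ x * e - y * e' := by
  by_contra! hlt
  have ha1 : 1 ≤ a := by omega
  rcases lt_trichotomy y 0 with hy | hy | hy
  · -- negative y
    have key : ∀ c : ℤ, x * e - y * e' < e' - c * e → x + c ≤ (y + 1) * a - 1 := by
      intro c hc
      have h1 : ((x : ℝ) + c) * e < ((y : ℝ) + 1) * e' := by linarith
      have h2 : ((y : ℝ) + 1) * e' ≤ ((y : ℝ) + 1) * (a * e) := by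
        apply mul_le_mul_of_nonpos_left ha.le
        have : y + 1 ≤ 0 := by omega
        exact_mod_cast this
      have h3 : ((x : ℝ) + c) * e < (((y : ℝ) + 1) * a) * e := by linarith
      have h4 := lt_of_mul_lt_mul_right h3 he.le
      have h5 : x + c < (y + 1) * a := by exact_mod_cast h4
      omega
    have fin : ∀ c : ℤ, x + c ≤ (y + 1) * a - 1 → n' - n ≤ -(c + 1) * Q - Q' := by
      intro c hc
      have h1 : (y + 1) * a ≤ 0 := mul_nonpos_of_nonpos_of_nonneg (by omega) (by omega)
      have h2 : x * Q ≤ (-(c + 1)) * Q := mul_le_mul_of_nonneg_right (by omega) hQ.le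
      have h3 : y * Q' ≤ (-1) * Q' := mul_le_mul_of_nonneg_right (by omega) hQ'
      linarith
    unfold nbrDist at hlt
    split_ifs at hlt with c1 c2
    · have h1 : ((x : ℝ) - 1) * e < (y : ℝ) * e' := by linarith
      have h2 : (y : ℝ) * e' ≤ (y : ℝ) * (a * e) := by
        apply mul_le_mul_of_nonpos_left ha.le
        exact_mod_cast hy.le
      have h3 : ((x : ℝ) - 1) * e < ((y : ℝ) * a) * e := by linarith
      have h4 := lt_of_mul_lt_mul_right h3 he.le
      have h5 : x - 1 < y * a := by exact_mod_cast h4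
      have h6 : y * a ≤ (-1) * a := mul_le_mul_of_nonneg_right (by omega) (by omega)
      have h2 : x * Q ≤ (-s) * Q := mul_le_mul_of_nonneg_right (by omega) hQ.le
      have h3 : y * Q' ≤ (-1) * Q' := mul_le_mul_of_nonneg_right (by omega) hQ'
      linarith
    · have := fin s (key s hlt)
      linarith
    · have := fin (s - 1) (key (s - 1) (by push_cast; exact hlt))
      have h2 : -(s - 1 + 1) * Q = - (s * Q) := by ring
      omega
  · subst hy
    have hx : 0 < x := by
      have h : (0 : ℝ) * e < x * e := by simpa using hpos
      exact_mod_cast lt_of_mul_lt_mul_right h he.le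
    have hxQ : 1 * Q ≤ x * Q := mul_le_mul_of_nonneg_right (by omega) hQ.le
    unfold nbrDist at hlt
    split_ifs at hlt with c1 c2
    · have h : (x : ℝ) * e < 1 * e := by simpa using hlt
      have := lt_of_mul_lt_mul_right h he.le
      have : x < 1 := by exact_mod_cast this
      omega
    · linarith
    · linarith
  · have h2 : (y : ℝ) * (a * e) ≤ (y : ℝ) * e' := by
      apply mul_le_mul_of_nonneg_left ha.le
      exact_mod_cast hy.le
    have h3 : ((y : ℝ) * a) * e < x * e := by linarith
    have h4 := lt_of_mul_lt_mul_right h3 he.le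
    have h5 : y * a < x := by exact_mod_cast h4
    have h6 : 1 * a ≤ y * a := mul_le_mul_of_nonneg_right (by omega) (by omega)
    have h2 : (s + 1) * Q ≤ x * Q := mul_le_mul_of_nonneg_right (by omega) hQ.le
    have h3 : 1 * Q' ≤ y * Q' := mul_le_mul_of_nonneg_right (by omega) hQ'
    linarith

theorem nbrDist_exists (N Q Q' s r : ℤ) (e e' : ℝ) (hr0 : 0 ≤ r) (hrq : r < Q)
    (hs1 : 1 ≤ s) (hQ' : 0 ≤ Q') (hN : N = s * Q + Q' + r) (n : ℤ) (hn0 : 0 ≤ n) (hnN : n ≤ N) :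
    ∃ n' x y : ℤ, 0 ≤ n' ∧ n' ≤ N ∧ n' - n = x * Q + y * Q' ∧
      x * e - y * e' = nbrDist N Q Q' s e e' n := by
  have hsQ : 0 ≤ (s - 1) * Q := mul_nonneg (by omega) (by omega)
  unfold nbrDist
  split_ifs with c1 c2
  · exact ⟨n + Q, 1, 0, by omega, c1, by ring, by simp⟩
  · exact ⟨n - s * Q - Q', -s, -1, by omega, by linarith, by ring, by push_cast; ring⟩
  · exact ⟨n - (s - 1) * Q - Q', -(s - 1), -1, by linarith, by linarith, by ring,
      by push_cast; ring⟩

theorem nbrDist_pos (N Q Q' s a : ℤ) (e e' : ℝ) (he : 0 < e) (ha : a * e < e')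
    (hsa : s ≤ a) (n : ℤ) : 0 < nbrDist N Q Q' s e e' n := by
  have h : (s : ℝ) * e ≤ a * e := mul_le_mul_of_nonneg_right (by exact_mod_cast hsa) he.le
  unfold nbrDist
  split_ifs <;> linarith

theorem cyclicGap_eq (α : ℝ) (N m : ℕ) (D : ℝ) (hD : 0 < D)
    (hex : ∃ m' z : ℤ, 0 ≤ m' ∧ m' ≤ N ∧ ((m' : ℝ) - m) * α - z = D)
    (hle : ∀ m' z : ℤ, 0 ≤ m' → m' ≤ N → 0 < ((m' : ℝ) - m) * α - z →
      D ≤ ((m' : ℝ) - m) * α - z) :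
    cyclicGap (torusPts α N) (Int.fract ((m : ℝ) * α)) = D := by
  apply IsLeast.csInf_eq
  constructor
  · refine ⟨hD, ?_⟩
    obtain ⟨m', z, h0, h1, h2⟩ := hex
    lift m' to ℕ using h0
    rw [torusPts, Finset.mem_image]
    refine ⟨m', by simp; omega, ?_⟩
    rw [Int.fract_eq_fract]
    refine ⟨z + ⌊(m : ℝ) * α⌋, ?_⟩
    have := Int.floor_add_fract ((m : ℝ) * α)
    push_cast at h2 ⊢
    linarith
  · rintro d ⟨hd, hmem⟩
    rw [torusPts, Finset.mem_image] at hmem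
    obtain ⟨m', hm', h⟩ := hmem
    rw [Int.fract_eq_fract] at h
    obtain ⟨z, hz⟩ := h
    have := Int.floor_add_fract ((m : ℝ) * α)
    have hm'' : m' ≤ N := by simp at hm'; omega
    have hd' : (((m' : ℤ) : ℝ) - m) * α - ((z - ⌊(m : ℝ) * α⌋ : ℤ) : ℝ) = d := by
      push_cast
      linarith
    rw [← hd'] at hd ⊢
    exact hle _ _ (by omega) (by exact_mod_cast hm'') hd

theorem map_range_three (f : ℕ → ℝ) (A B C : ℕ) (u v w : ℝ)
    (hA : ∀ n < A, f n = u) (hB : ∀ n < B, f (A + n) = v) (hC : ∀ n < C, f (A + B + n) = w) :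
    (Multiset.range (A + B + C)).map f =
      Multiset.replicate A u + Multiset.replicate B v + Multiset.replicate C w := by
  have aux : ∀ (g : ℕ → ℝ) (n : ℕ) (c : ℝ), (∀ i < n, g i = c) →
      (Multiset.range n).map g = Multiset.replicate n c := by
    intro g n c h
    rw [Multiset.map_congr rfl (g := fun _ => c) (fun i hi => h i (Multiset.mem_range.1 hi))]
    simp
  rw [Multiset.range_add, Multiset.range_add, Multiset.map_add, Multiset.map_add,
    Multiset.map_map, Multiset.map_map, aux f A u hA, aux (f ∘ _) B v hB,
    aux (f ∘ _) C w hC]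

theorem torusPts_map (α : ℝ) (hirr : Irrational α) (N : ℕ) (g : ℝ → ℝ) :
    (torusPts α N).val.map g =
      (Multiset.range (N + 1)).map (fun n : ℕ => g (Int.fract ((n : ℝ) * α))) := by
  have hinj : Function.Injective (fun n : ℕ => Int.fract ((n : ℝ) * α)) := by
    intro m n h
    simp only [] at h
    rw [Int.fract_eq_fract] at h
    obtain ⟨z, hz⟩ := h
    by_contra hne
    have hne' : ((m : ℤ) - n) ≠ 0 := by omega
    have h1 := hirr.intCast_mul hne'
    apply h1.ne_int z
    push_cast
    linarith
  rw [torusPts, Finset.image_val_of_injOn (hinj.injOn), Multiset.map_map]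
  rfl

theorem cf_facts (α : ℝ) (hα : α ∈ Set.Ioo (0 : ℝ) 1)
    (a p q : ℤ → ℤ) (η : ℤ → ℝ)
    (hp : p (-1) = 1 ∧ p 0 = 0) (hq : q (-1) = 0 ∧ q 0 = 1)
    (hpq : ∀ k : ℤ, 0 ≤ k →
      p (k + 1) = a (k + 1) * p k + p (k - 1) ∧
      q (k + 1) = a (k + 1) * q k + q (k - 1))
    (hηdef : ∀ k : ℤ, -1 ≤ k → η k = (-1 : ℝ) ^ k * ((q k : ℝ) * α - (p k : ℝ)))
    (hpos : ∀ k : ℤ, 0 ≤ k → 0 < η (k + 1) ∧ η (k + 1) < η k) (k : ℤ) (hk : 0 ≤ k) :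
    0 < η k ∧ a (k + 1) * η k < η (k - 1) ∧ 0 < q k ∧ 0 ≤ q (k - 1) ∧
    ∃ ε : ℤ, (ε = 1 ∨ ε = -1) ∧ p k * q (k - 1) - p (k - 1) * q k = -ε ∧
      η k = ε * (q k * α - p k) ∧ η (k - 1) = -ε * (q (k - 1) * α - p (k - 1)) := by
  have hz1 : ∀ k : ℤ, (-1 : ℝ) ^ (k + 1) = - (-1 : ℝ) ^ k := fun k => by
    rw [zpow_add₀ (by norm_num)]; simp
  have hz2 : ∀ k : ℤ, (-1 : ℝ) ^ (k - 1) = - (-1 : ℝ) ^ k := fun k => by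
    rw [zpow_sub₀ (by norm_num), zpow_one, div_neg, div_one]
  have hηpos : ∀ k : ℤ, 0 ≤ k → 0 < η k := fun k hk => (hpos k hk).1.trans (hpos k hk).2
  have hrec : ∀ k : ℤ, 0 ≤ k → η (k - 1) = a (k + 1) * η k + η (k + 1) := by
    intro k hk
    rw [hηdef (k - 1) (by omega), hηdef k (by omega), hηdef (k + 1) (by omega), hz1, hz2,
      (hpq k hk).1, (hpq k hk).2]
    push_cast
    ring
  have hdec : ∀ k : ℤ, 0 ≤ k → η k < η (k - 1) := by
    intro k hk
    rcases hk.eq_or_lt with rfl | hk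
    · rw [hηdef 0 (by omega), hηdef (0 - 1) (by omega)]
      have := hα.2
      simp [hp, hq, this]
    · have := (hpos (k - 1) (by omega)).2
      simpa using this
  have ha1 : ∀ k : ℤ, 0 ≤ k → 1 ≤ a (k + 1) := by
    intro k hk
    have h1 := hrec k hk
    have h2 := hdec k hk
    have h3 := (hpos k hk).2
    have h4 := hηpos k hk
    have h5 : 0 * η k < a (k + 1) * η k := by linarith
    have h6 := lt_of_mul_lt_mul_right h5 h4.le
    have : 0 < a (k + 1) := by exact_mod_cast h6
    omega
  refine ⟨hηpos k hk, by linarith [hrec k hk, (hpos k hk).1], ?_⟩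
  have hind : ∀ j : ℕ, 0 < q (j : ℤ) ∧ 0 ≤ q ((j : ℤ) - 1) ∧
      ∃ ε : ℤ, (ε = 1 ∨ ε = -1) ∧ p j * q ((j : ℤ) - 1) - p ((j : ℤ) - 1) * q j = -ε ∧
        (ε : ℝ) = (-1 : ℝ) ^ (j : ℤ) := by
    intro j
    induction j with
    | zero => simp [hp, hq]
    | succ j ih =>
      obtain ⟨h1, h2, ε, h3, h4, h5⟩ := ih
      have hj := hpq j (by omega)
      have haj := ha1 j (by omega)
      push_cast
      rw [add_sub_cancel_right]
      refine ⟨?_, h1.le, -ε, by omega, ?_, ?_⟩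
      · rw [hj.2]
        have := mul_pos (show 0 < a ((j : ℤ) + 1) by omega) h1
        omega
      · rw [hj.1, hj.2]
        linear_combination -h4
      · rw [hz1, ← h5]; simp
  lift k to ℕ using hk
  obtain ⟨h1, h2, ε, h3, h4, h5⟩ := hind k
  refine ⟨h1, h2, ε, h3, h4, ?_, ?_⟩
  · rw [hηdef k (by omega), h5]
  · rw [hηdef _ (by omega), hz2, h5]

/-- **three distance theorem.** Let `α ∈ (0,1)` be irrational, with
partial quotients `a`, convergents `pₖ/qₖ` (`p₋₁ = 1`, `p₀ = 0`, `q₋₁ = 0`, `q₀ = 1`,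
`p_{k+1} = a_{k+1} pₖ + p_{k-1}`, `q_{k+1} = a_{k+1} qₖ + q_{k-1}`) and
`ηₖ = (−1)ᵏ (qₖ α − pₖ)`, which satisfy `η_{k-1} = a_{k+1} ηₖ + η_{k+1}` with
`0 < η_{k+1} < ηₖ`.  Write `N = s·qₖ + q_{k-1} + r` with `1 ≤ s ≤ a_{k+1}` and
`0 ≤ r < qₖ`.  Then the `N+1` points `{nα mod 1 : n = 0, …, N}` partition the circle
`ℝ/ℤ` into `N+1` intervals of at most three lengths: exactly `N+1−qₖ` intervals of
length `ηₖ`, exactly `r+1` intervals of length `η_{k-1} − s·ηₖ`, and exactly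
`qₖ−(r+1)` intervals of length `η_{k-1} − (s−1)·ηₖ`.  (The multiset of the lengths
of the `N+1` subintervals is computed by mapping `cyclicGap` over the points.) -/
theorem three_distance_theorem
    (α : ℝ) (hα : α ∈ Set.Ioo (0 : ℝ) 1) (hirr : Irrational α)
    (a p q : ℤ → ℤ) (η : ℤ → ℝ)
    (hp : p (-1) = 1 ∧ p 0 = 0) (hq : q (-1) = 0 ∧ q 0 = 1)
    (hpq : ∀ k : ℤ, 0 ≤ k →
      p (k + 1) = a (k + 1) * p k + p (k - 1) ∧
      q (k + 1) = a (k + 1) * q k + q (k - 1))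
    (hηdef : ∀ k : ℤ, -1 ≤ k → η k = (-1 : ℝ) ^ k * ((q k : ℝ) * α - (p k : ℝ)))
    (hpos : ∀ k : ℤ, 0 ≤ k → 0 < η (k + 1) ∧ η (k + 1) < η k)
    (N : ℕ) (k s r : ℤ) (hk : 0 ≤ k)
    (hN : (N : ℤ) = s * q k + q (k - 1) + r)
    (hs1 : 1 ≤ s) (hsa : s ≤ a (k + 1)) (hr0 : 0 ≤ r) (hrq : r < q k) :
    (torusPts α N).val.map (cyclicGap (torusPts α N)) =
      Multiset.replicate ((N + 1 - q k).toNat) (η k) +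
      Multiset.replicate ((r + 1).toNat) (η (k - 1) - (s : ℝ) * η k) +
      Multiset.replicate ((q k - (r + 1)).toNat) (η (k - 1) - ((s : ℝ) - 1) * η k) := by
  obtain ⟨he, hae, hQ, hQ', ε, hε, hdet, hη, hη'⟩ :=
    cf_facts α hα a p q η hp hq hpq hηdef hpos k hk
  set Q := q k
  set Q' := q (k - 1)
  set P := p k
  set P' := p (k - 1)
  set e := η k
  set e' := η (k - 1)
  have hεε : ε * ε = 1 := by rcases hε with rfl | rfl <;> rfl
  -- the displacement formula
  have hdisp : ∀ x y : ℤ, (ε : ℝ) * (((x * Q + y * Q' : ℤ) : ℝ) * α - ((x * P + y * P' : ℤ) : ℝ))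
      = x * e - y * e' := by
    intro x y
    rw [hη, hη']
    push_cast
    ring
  have hmin : ∀ n n' z : ℤ, 0 ≤ n → n ≤ N → 0 ≤ n' → n' ≤ N →
      0 < (ε : ℝ) * (((n' : ℝ) - n) * α - z) →
      nbrDist N Q Q' s e e' n ≤ (ε : ℝ) * (((n' : ℝ) - n) * α - z) := by
    intro n n' z h0 h1 h2 h3 h4
    obtain ⟨x, hx⟩ : ∃ x, x = ε * ((n' - n) * P' - z * Q') := ⟨_, rfl⟩
    obtain ⟨y, hy⟩ : ∃ y, y = -ε * ((n' - n) * P - z * Q) := ⟨_, rfl⟩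
    have hM : n' - n = x * Q + y * Q' := by
      rw [hx, hy]
      linear_combination (-(n' - n)) * hεε + (ε * (n' - n)) * hdet
    have hz : z = x * P + y * P' := by
      rw [hx, hy]
      linear_combination (-z) * hεε + (ε * z) * hdet
    have hval : (ε : ℝ) * (((n' : ℝ) - n) * α - z) = x * e - y * e' := by
      rw [← hdisp, ← hM, ← hz]
      push_cast
      ring
    rw [hval] at h4 ⊢
    exact nbrDist_le N Q Q' s r _ e e' he hae hsa hs1 hQ hQ' hrq hN n n' x y h0 h1 h2 h3 hM h4
  have hex : ∀ n : ℤ, 0 ≤ n → n ≤ N → ∃ n' z : ℤ, 0 ≤ n' ∧ n' ≤ N ∧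
      (ε : ℝ) * (((n' : ℝ) - n) * α - z) = nbrDist N Q Q' s e e' n := by
    intro n h0 h1
    obtain ⟨n', x, y, h2, h3, h4, h5⟩ :=
      nbrDist_exists N Q Q' s r e e' hr0 hrq hs1 hQ' hN n h0 h1
    refine ⟨n', x * P + y * P', h2, h3, ?_⟩
    rw [← h5, ← hdisp, ← h4]
    push_cast
    ring
  have hDpos : ∀ n : ℤ, 0 < nbrDist N Q Q' s e e' n :=
    nbrDist_pos N Q Q' s _ e e' he hae hsa
  have hsQ : 0 ≤ (s - 1) * Q := mul_nonneg (by omega) (by omega)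
  have hsQ' : (s - 1) * Q = s * Q - Q := by ring
  obtain ⟨A, hA⟩ : ∃ A : ℕ, (N + 1 - Q).toNat = A := ⟨_, rfl⟩
  obtain ⟨B, hB⟩ : ∃ B : ℕ, (Q - (r + 1)).toNat = B := ⟨_, rfl⟩
  obtain ⟨C, hC⟩ : ∃ C : ℕ, (r + 1).toNat = C := ⟨_, rfl⟩
  have hA' : (A : ℤ) = N + 1 - Q := by omega
  have hB' : (B : ℤ) = Q - (r + 1) := by omega
  have hC' : (C : ℤ) = r + 1 := by omega
  rw [hA, hB, hC, torusPts_map α hirr]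
  have hD1 : ∀ n : ℤ, n + Q ≤ N → nbrDist N Q Q' s e e' n = e := by
    intro n h; rw [nbrDist, if_pos h]
  have hD2 : ∀ n : ℤ, N < n + Q → s * Q + Q' ≤ n →
      nbrDist N Q Q' s e e' n = e' - s * e := by
    intro n h h'; rw [nbrDist, if_neg (by omega), if_pos h']
  have hD3 : ∀ n : ℤ, N < n + Q → n < s * Q + Q' →
      nbrDist N Q Q' s e e' n = e' - (s - 1) * e := by
    intro n h h'; rw [nbrDist, if_neg (by omega), if_neg (by omega)]
  rcases hε with rfl | rfl
  · have hgap : ∀ n ∈ Multiset.range (N + 1),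
        cyclicGap (torusPts α N) (Int.fract ((n : ℝ) * α)) = nbrDist N Q Q' s e e' n := by
      intro n hn
      have hn' : n ≤ N := by rw [Multiset.mem_range] at hn; omega
      apply cyclicGap_eq _ _ _ _ (hDpos _)
      · simpa using hex n (by omega) (by omega)
      · intro m' z h0 h1
        simpa using hmin n m' z (by omega) (by omega) h0 h1
    rw [Multiset.map_congr rfl hgap, show N + 1 = A + B + C by omega,
      map_range_three _ A B C e (e' - (s - 1) * e) (e' - s * e)]
    · abel
    · intro n hn; exact hD1 _ (by omega)
    · intro n hn; exact hD3 _ (by omega) (by omega)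
    · intro n hn; exact hD2 _ (by omega) (by omega)
  · have hgap : ∀ n ∈ Multiset.range (N + 1),
        cyclicGap (torusPts α N) (Int.fract ((n : ℝ) * α)) =
          nbrDist N Q Q' s e e' ((N : ℤ) - n) := by
      intro n hn
      have hn' : n ≤ N := by rw [Multiset.mem_range] at hn; omega
      apply cyclicGap_eq _ _ _ _ (hDpos _)
      · obtain ⟨m', z, h0, h1, h2⟩ := hex ((N : ℤ) - n) (by omega) (by omega)
        refine ⟨N - m', -z, by omega, by omega, ?_⟩
        rw [← h2]
        push_cast
        ring
      · intro m' z h0 h1 h2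
        have h3 := hmin ((N : ℤ) - n) (N - m') (-z) (by omega) (by omega) (by omega) (by omega)
        have h4 : (((-1 : ℤ) : ℝ)) * (((((N : ℤ) - m' : ℤ) : ℝ) - (((N : ℤ) - n : ℤ) : ℝ)) * α
            - ((-z : ℤ) : ℝ)) = ((m' : ℝ) - n) * α - z := by
          push_cast
          ring
        rw [h4] at h3
        exact h3 h2
    rw [Multiset.map_congr rfl hgap, show N + 1 = C + B + A by omega,
      map_range_three _ C B A (e' - s * e) (e' - (s - 1) * e) e]
    · abel
    · intro n hn; exact hD2 _ (by omega) (by omega)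
    · intro n hn; exact hD3 _ (by push_cast; omega) (by push_cast; omega)
    · intro n hn; exact hD1 _ (by push_cast; omega)
end

section
/- Let α ∈ (0,1) be irrational. Then α is badly approximable if and only if there exists a positive constant R such that for every N ∈ ℕ, the ratio between any two lengths of the subintervals into which the points {nα mod 1 : n = 0, 1, …, N} divide the circle ℝ/ℤ is bounded by R. -/
lemma mem_torusPts' {α : ℝ} {N : ℕ} {x : ℝ} :
    x ∈ torusPts α N ↔ ∃ n : ℕ, n ≤ N ∧ Int.fract ((n : ℝ) * α) = x := by
  simp [torusPts, Nat.lt_succ_iff]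

lemma gapSet_nonempty {α : ℝ} {N : ℕ} {t : ℝ} (ht : t ∈ torusPts α N) :
    {d : ℝ | 0 < d ∧ Int.fract (t + d) ∈ torusPts α N}.Nonempty := by
  refine ⟨1, one_pos, ?_⟩
  obtain ⟨n, hn, rfl⟩ := mem_torusPts'.1 ht
  simpa using ht

lemma gap_le {T : Finset ℝ} {t d : ℝ} (hd : 0 < d) (h : Int.fract (t + d) ∈ T) :
    cyclicGap T t ≤ d :=
  csInf_le ⟨0, fun _ hx => hx.1.le⟩ ⟨hd, h⟩

lemma zero_mem_pts (α : ℝ) (N : ℕ) : (0 : ℝ) ∈ torusPts α N :=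
  mem_torusPts'.2 ⟨0, Nat.zero_le _, by simp⟩

/-- Pigeonhole: the gaps cannot all be small. -/
lemma cover_bound {α : ℝ} {N : ℕ} {g : ℝ} (hg : 0 < g)
    (h : ∀ t ∈ torusPts α N, cyclicGap (torusPts α N) t < g) : 1 ≤ ((N : ℝ) + 1) * g := by
  have hcov : Set.Ico (0 : ℝ) 1 ⊆ ⋃ t ∈ torusPts α N, Set.Icc t (t + g) := by
    intro x hx
    have hne : ((torusPts α N).filter (· ≤ x)).Nonempty :=
      ⟨0, Finset.mem_filter.2 ⟨zero_mem_pts α N, hx.1⟩⟩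
    obtain ⟨t, ht, hmax⟩ := Finset.exists_max_image _ id hne
    obtain ⟨htT, htx⟩ := Finset.mem_filter.1 ht
    simp only [Set.mem_iUnion]
    refine ⟨t, htT, htx, ?_⟩
    obtain ⟨d, ⟨hd0, hdT⟩, hdg⟩ := exists_lt_of_csInf_lt (gapSet_nonempty htT) (h t htT)
    by_contra hcon
    have h1 : t + d ≤ x := by linarith
    have h0 : 0 ≤ t := by
      obtain ⟨n, -, rfl⟩ := mem_torusPts'.1 htT
      exact Int.fract_nonneg _
    have hf : Int.fract (t + d) = t + d :=
      Int.fract_eq_self.2 ⟨by linarith, by linarith [hx.2]⟩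
    rw [hf] at hdT
    have := hmax (t + d) (Finset.mem_filter.2 ⟨hdT, h1⟩)
    simp only [id] at this
    linarith
  have hv := (MeasureTheory.measure_mono (μ := MeasureTheory.volume) hcov).trans
    (MeasureTheory.measure_biUnion_finset_le _ _)
  simp only [Real.volume_Ico, Real.volume_Icc, add_sub_cancel_left, sub_zero,
    Finset.sum_const, nsmul_eq_mul] at hv
  have hc : (torusPts α N).card ≤ N + 1 := by
    simpa [torusPts] using (Finset.card_image_le (s := Finset.range (N + 1))
      (f := fun n : ℕ => Int.fract ((n : ℝ) * α)))
  rw [← ENNReal.ofReal_natCast, ← ENNReal.ofReal_mul (by positivity),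
    ENNReal.ofReal_le_ofReal_iff (by positivity)] at hv
  have hc' : ((torusPts α N).card : ℝ) ≤ N + 1 := by exact_mod_cast hc
  nlinarith

/-- Lower bound for the gaps. -/
lemma gap_lower {α C : ℝ} (hC : 0 < C) (hC1 : C ≤ 1)
    (h : ∀ (p : ℤ) (q : ℕ), 1 ≤ q → C ≤ (q : ℝ) * |(q : ℝ) * α - (p : ℝ)|)
    {N : ℕ} {u : ℝ} (hu : u ∈ torusPts α N) :
    C / (N + 1) ≤ cyclicGap (torusPts α N) u := by
  refine le_csInf (gapSet_nonempty hu) ?_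
  rintro d ⟨hd, hdT⟩
  obtain ⟨n, hn, rfl⟩ := mem_torusPts'.1 hu
  obtain ⟨m, hm, hmd⟩ := mem_torusPts'.1 hdT
  obtain ⟨z, hz⟩ := Int.fract_eq_fract.1 hmd
  have e1 := Int.floor_add_fract ((n : ℝ) * α)
  set a := ⌊(n : ℝ) * α⌋
  rw [div_le_iff₀ (by positivity)]
  have hnR : (n : ℝ) ≤ N := by exact_mod_cast hn
  have hmR : (m : ℝ) ≤ N := by exact_mod_cast hm
  have hn0 : (0 : ℝ) ≤ n := by positivity
  have hm0 : (0 : ℝ) ≤ m := by positivity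
  rcases lt_trichotomy m n with hlt | heq | hgt
  · have := h (-(z - a)) (n - m) (by omega)
    rw [Nat.cast_sub hlt.le] at this
    have e : ((n : ℝ) - m) * α - ((-(z - a) : ℤ) : ℝ) = -d := by push_cast; linarith
    rw [e, abs_neg, abs_of_pos hd] at this
    nlinarith
  · subst heq
    have e : d = ((a - z : ℤ) : ℝ) := by push_cast; linarith
    have h1 : (1 : ℝ) ≤ d := by
      rw [e] at hd ⊢
      have : (0 : ℤ) < a - z := by exact_mod_cast hd
      exact_mod_cast this
    nlinarith
  · have := h (z - a) (m - n) (by omega)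
    rw [Nat.cast_sub hgt.le] at this
    have e : ((m : ℝ) - n) * α - ((z - a : ℤ) : ℝ) = d := by push_cast; linarith
    rw [e, abs_of_pos hd] at this
    nlinarith

/-- Upper bound for the gaps. -/
lemma gap_upper {α C : ℝ} (hC : 0 < C) (hC1 : C ≤ 1)
    (h : ∀ (p : ℤ) (q : ℕ), 1 ≤ q → C ≤ (q : ℝ) * |(q : ℝ) * α - (p : ℝ)|)
    {N : ℕ} {t : ℝ} (ht : t ∈ torusPts α N) :
    cyclicGap (torusPts α N) t ≤ (1 / C + 2) / (N + 1) := by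
  rcases Nat.eq_zero_or_pos N with rfl | hN
  · have h1 : cyclicGap (torusPts α 0) t ≤ 1 := by
      refine gap_le one_pos ?_
      obtain ⟨n, hn, rfl⟩ := mem_torusPts'.1 ht
      simpa using ht
    have : 0 < 1 / C := by positivity
    simp only [Nat.cast_zero, zero_add, div_one] at *
    linarith
  obtain ⟨r, hr, hrN⟩ := Real.exists_rat_abs_sub_le_and_den_le α hN
  have hq : 0 < r.den := r.den_pos
  have hqR : (0 : ℝ) < r.den := by exact_mod_cast hq
  have hN1 : (0 : ℝ) < (N : ℝ) + 1 := by positivity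
  have hrr : (r.den : ℝ) * r = r.num := by
    have := Rat.den_mul_eq_num r
    exact_mod_cast this
  have hCq : 1 / (r.den : ℝ) ≤ 1 / C / (N + 1) := by
    have h2 := h r.num r.den hq
    have e : (r.den : ℝ) * α - r.num = r.den * (α - r) := by rw [mul_sub, hrr]
    rw [e, abs_mul, abs_of_pos hqR] at h2
    rw [le_div_iff₀ (by positivity)] at hr
    rw [div_div]
    apply one_div_le_one_div_of_le (by positivity)
    have h3 : C * ((N : ℝ) + 1) ≤ r.den * (r.den * |α - r|) * (N + 1) := by gcongr
    nlinarith
  set δ : ℝ := 1 / ((N : ℝ) + 1) with hδ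
  have hδ0 : 0 < δ := by positivity
  set j : ℤ := ⌊(r.den : ℝ) * (t + δ)⌋ + 1 with hj
  have hj1 : (r.den : ℝ) * (t + δ) < j := by
    rw [hj]; push_cast; exact Int.lt_floor_add_one _
  have hj2 : (j : ℝ) ≤ r.den * (t + δ) + 1 := by
    rw [hj]; push_cast; linarith [Int.floor_le ((r.den : ℝ) * (t + δ))]
  -- solve the congruence
  obtain ⟨m, l, hmq, hml⟩ : ∃ (m : ℕ) (l : ℤ), m < r.den ∧ (m : ℤ) * r.num = j + r.den * l := by
    have hcop : IsCoprime r.num (r.den : ℤ) := Rat.isCoprime_num_den r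
    obtain ⟨a, b, hab⟩ := hcop
    have hqz : (0 : ℤ) < r.den := by exact_mod_cast hq
    have hm0 := Int.emod_nonneg (j * a) hqz.ne'
    have hm1 := Int.emod_lt_of_pos (j * a) hqz
    have hm2 := Int.emod_add_mul_ediv (j * a) r.den
    refine ⟨((j * a) % r.den).toNat, -(j * b) - (j * a / r.den) * r.num, by omega, ?_⟩
    rw [Int.toNat_of_nonneg hm0]
    linear_combination r.num * hm2 + j * hab
  have hmlR : (m : ℝ) * r = j / r.den + l := by
    have h4 : (m : ℝ) * r.num = j + r.den * l := by exact_mod_cast hml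
    rw [← hrr] at h4
    field_simp
    linarith
  have hmα : |(m : ℝ) * α - m * r| ≤ δ := by
    rw [← mul_sub, abs_mul, abs_of_nonneg (by positivity)]
    have hmR : (m : ℝ) ≤ r.den := by exact_mod_cast hmq.le
    calc (m : ℝ) * |α - r| ≤ r.den * (1 / ((N + 1) * r.den)) := by gcongr
      _ = δ := by rw [hδ]; field_simp
  have hk1 : t + δ < j / r.den := by rw [lt_div_iff₀ hqR]; linarith
  have hk2 : (j : ℝ) / r.den ≤ t + δ + 1 / r.den := by
    rw [div_le_iff₀ hqR, add_mul, one_div_mul_cancel hqR.ne']; linarith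
  rw [abs_le] at hmα
  have hfin : cyclicGap (torusPts α N) t ≤ (m : ℝ) * α - l - t := by
    refine gap_le (by linarith) ?_
    refine mem_torusPts'.2 ⟨m, by omega, ?_⟩
    rw [add_sub_cancel, Int.fract_sub_intCast]
  have : (1 / C + 2) / ((N : ℝ) + 1) = 1 / C / (N + 1) + 2 * δ := by rw [hδ]; ring
  rw [this]
  linarith

/-- An irrational `α ∈ (0,1)` is badly approximable if and only if
there is a constant `R > 0` such that for every `N ∈ ℕ`, the ratio of any two of the
lengths of the subintervals into which the points `{nα mod 1 : n = 0, …, N}` divide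
the circle `ℝ/ℤ` is at most `R`. -/
theorem badlyApproximable_iff_bounded_gap_ratios
    (α : ℝ) (hα : α ∈ Set.Ioo (0 : ℝ) 1) (hirr : Irrational α) :
    IsBadlyApproximable α ↔
      ∃ R : ℝ, 0 < R ∧ ∀ N : ℕ, ∀ t ∈ torusPts α N, ∀ u ∈ torusPts α N,
        cyclicGap (torusPts α N) t ≤ R * cyclicGap (torusPts α N) u := by
  constructor
  · rintro ⟨C, hC, h⟩
    have hC1 : C ≤ 1 := by
      have := h 0 1 le_rfl
      simp only [Nat.cast_one, one_mul, Int.cast_zero, sub_zero, abs_of_pos hα.1] at this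
      linarith [hα.2]
    refine ⟨(1 / C + 2) / C, by positivity, fun N t ht u hu => ?_⟩
    calc cyclicGap (torusPts α N) t ≤ (1 / C + 2) / (N + 1) := gap_upper hC hC1 h ht
      _ = (1 / C + 2) / C * (C / (N + 1)) := by field_simp
      _ ≤ _ := by
        gcongr
        exact gap_lower hC hC1 h hu
  · rintro ⟨R, hR, h⟩
    refine ⟨1 / (4 * R), by positivity, fun p q hq => ?_⟩
    have hne : (q : ℝ) * α - p ≠ 0 := by
      intro h0
      have hq0 : (q : ℝ) ≠ 0 := by positivity
      apply hirr
      refine ⟨(p : ℚ) / q, ?_⟩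
      push_cast
      rw [div_eq_iff hq0]
      linarith
    set η := |(q : ℝ) * α - p| with hη
    have hη0 : 0 < η := abs_pos.2 hne
    have hqm : Int.fract ((q : ℝ) * α) ∈ torusPts α q := mem_torusPts'.2 ⟨q, le_rfl, rfl⟩
    obtain ⟨u, hu, hgu⟩ : ∃ u ∈ torusPts α q, cyclicGap (torusPts α q) u ≤ η := by
      rcases lt_or_gt_of_ne hne with hlt | hgt
      · refine ⟨_, hqm, gap_le hη0 ?_⟩
        have e : Int.fract ((q : ℝ) * α) + η = ((p - ⌊(q : ℝ) * α⌋ : ℤ) : ℝ) := by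
          rw [hη, abs_of_neg hlt, Int.fract]; push_cast; ring
        rw [e, Int.fract_intCast]
        exact zero_mem_pts α q
      · refine ⟨0, zero_mem_pts α q, gap_le hη0 ?_⟩
        rw [hη, abs_of_pos hgt, zero_add, Int.fract_sub_intCast]
        exact hqm
    have hb : 1 ≤ ((q : ℝ) + 1) * (2 * R * η) := by
      refine cover_bound (α := α) (by positivity) fun t ht => ?_
      have h1 := h q t ht u hu
      have h2 : R * cyclicGap (torusPts α q) u ≤ R * η := by gcongr
      have h3 : 0 < R * η := by positivity
      linarith
    rw [div_le_iff₀ (by positivity)]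
    have hq1 : (1 : ℝ) ≤ q := by exact_mod_cast hq
    have h3 : 0 < R * η := by positivity
    nlinarith
end

section
/- Let α ∈ (0,1) be irrational with partial quotients aₖ bounded by a positive integer B, and let R be the minimal constant bounding, for all N ∈ ℕ, the ratios of the lengths of the subintervals into which {nα mod 1 : n = 0,…,N} divide the circle ℝ/ℤ. Then B − 1 ≤ R ≤ B + 2. -/
lemma gap_le_aux (α : ℝ) (N : ℕ) (n m : ℤ) (hm : 0 ≤ m) (hmN : m ≤ N)
    (z : ℤ) (d : ℝ) (hd : 0 < d) (h : d = ((m : ℝ) - n) * α - z) :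
    cyclicGap (torusPts α N) (Int.fract ((n : ℝ) * α)) ≤ d := by
  unfold cyclicGap
  apply csInf_le
  · exact ⟨0, fun x hx => hx.1.le⟩
  · refine ⟨hd, ?_⟩
    unfold torusPts
    rw [Finset.mem_image]
    refine ⟨m.toNat, by rw [Finset.mem_range]; omega, ?_⟩
    have h1 : ((m.toNat : ℕ) : ℝ) = (m : ℝ) := by
      have : ((m.toNat : ℕ) : ℤ) = m := Int.toNat_of_nonneg hm
      exact_mod_cast this
    rw [h1, Int.fract_eq_fract]
    refine ⟨z + ⌊(n : ℝ) * α⌋, ?_⟩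
    have := Int.self_sub_floor ((n : ℝ) * α)
    push_cast
    rw [← this, h]; ring

lemma le_gap_aux (α : ℝ) (N : ℕ) (n : ℤ) (hn : 0 ≤ n) (hnN : n ≤ N) (c : ℝ)
    (h : ∀ m : ℤ, 0 ≤ m → m ≤ N → ∀ z : ℤ, 0 < ((m : ℝ) - n) * α - z →
      c ≤ ((m : ℝ) - n) * α - z) :
    c ≤ cyclicGap (torusPts α N) (Int.fract ((n : ℝ) * α)) := by
  unfold cyclicGap
  apply le_csInf
  · refine ⟨1, one_pos, ?_⟩
    rw [Int.fract_add_one, Int.fract_fract]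
    unfold torusPts
    rw [Finset.mem_image]
    refine ⟨n.toNat, by rw [Finset.mem_range]; omega, ?_⟩
    have h1 : ((n.toNat : ℕ) : ℝ) = (n : ℝ) := by
      have : ((n.toNat : ℕ) : ℤ) = n := Int.toNat_of_nonneg hn
      exact_mod_cast this
    rw [h1]
  · rintro d ⟨hd, hmem⟩
    unfold torusPts at hmem
    rw [Finset.mem_image] at hmem
    obtain ⟨m, hm, hmd⟩ := hmem
    rw [Finset.mem_range] at hm
    rw [Int.fract_eq_fract] at hmd
    obtain ⟨z, hz⟩ := hmd
    have := Int.self_sub_floor ((n : ℝ) * α)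
    have e : d = (((m : ℤ) : ℝ) - n) * α - ((z - ⌊(n : ℝ) * α⌋ : ℤ) : ℝ) := by
      push_cast
      linarith
    rw [e] at hd ⊢
    exact h m (by omega) (by omega) _ hd

lemma best_approx_aux (α e e' : ℝ) (q q' p p' δ j z : ℤ) (s : ℝ) (hs : s = 1 ∨ s = -1)
    (he : 0 < e) (he' : 0 < e') (h : q * α - p = s * e) (h' : q' * α - p' = -s * e')
    (hδ : δ * δ = 1) (hdet : q * p' - p * q' = δ) (hq : 0 ≤ q)
    (hj : j ≠ 0) (hjl : -q' < j) (hju : j < q') : e ≤ |j * α - z| := by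
  obtain ⟨u, hu⟩ : ∃ u, u = δ * (j * p' - z * q') := ⟨_, rfl⟩
  obtain ⟨v, hv⟩ : ∃ v, v = -δ * (j * p - z * q) := ⟨_, rfl⟩
  have e1 : j = u * q + v * q' := by
    rw [hu, hv]
    have : δ * (j * p' - z * q') * q + -δ * (j * p - z * q) * q' = δ * (q * p' - p * q') * j := by ring
    rw [this, hdet, hδ, one_mul]
  have e2 : z = u * p + v * p' := by
    rw [hu, hv]
    have : δ * (j * p' - z * q') * p + -δ * (j * p - z * q) * p' = δ * (q * p' - p * q') * z := by ring
    rw [this, hdet, hδ, one_mul]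
  have e3 : (j : ℝ) * α - z = s * (u * e - v * e') := by
    rw [e1, e2]; push_cast
    linear_combination (u : ℝ) * h + (v : ℝ) * h'
  have e4 : |(j : ℝ) * α - z| = |u * e - v * e'| := by
    rw [e3, abs_mul]
    rcases hs with rfl | rfl <;> simp
  rw [e4]
  have key : (1 ≤ u ∧ v ≤ 0) ∨ (u ≤ -1 ∧ 0 ≤ v) := by
    rcases lt_trichotomy v 0 with hv0 | hv0 | hv0
    · left
      refine ⟨?_, hv0.le⟩
      by_contra hc
      nlinarith
    · subst hv0
      rcases lt_trichotomy u 0 with h0 | h0 | h0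
      · right; omega
      · subst h0; exfalso; apply hj; rw [e1]; ring
      · left; omega
    · right
      refine ⟨?_, hv0.le⟩
      by_contra hc
      nlinarith
  rcases key with ⟨h1, h2⟩ | ⟨h1, h2⟩
  · have h1' : (1 : ℝ) ≤ u := by exact_mod_cast h1
    have h2' : (v : ℝ) ≤ 0 := by exact_mod_cast h2
    refine le_trans ?_ (le_abs_self _)
    nlinarith
  · have h1' : (u : ℝ) ≤ -1 := by exact_mod_cast h1
    have h2' : (0 : ℝ) ≤ v := by exact_mod_cast h2
    refine le_trans ?_ (neg_le_abs _)
    nlinarith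

/-- Convergent recursion, shifted by one: `cfRec A x y (n+1)` is the n-th continuant. -/
def cfRec (A : ℕ → ℤ) (x y : ℤ) : ℕ → ℤ
  | 0 => x
  | 1 => y
  | (n + 2) => A (n + 1) * cfRec A x y (n + 1) + cfRec A x y n

lemma int_pos_ge_aux (w : ℤ) (d x : ℝ) (hx : 0 ≤ x) (hx1 : x < 1) (hd : 0 < d) (h : d = w - x) :
    1 - x ≤ d := by
  have : (0 : ℝ) < w := by linarith
  have : (1 : ℤ) ≤ w := by have : 0 < w := by exact_mod_cast this
                           omega
  have : (1 : ℝ) ≤ w := by exact_mod_cast this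
  linarith

lemma mem_torusPts_aux (α : ℝ) (N : ℕ) (n : ℤ) (hn : 0 ≤ n) (hnN : n ≤ N) :
    Int.fract ((n : ℝ) * α) ∈ torusPts α N := by
  unfold torusPts
  rw [Finset.mem_image]
  refine ⟨n.toNat, by rw [Finset.mem_range]; omega, ?_⟩
  have h1 : ((n.toNat : ℕ) : ℝ) = (n : ℝ) := by
    have : ((n.toNat : ℕ) : ℤ) = n := Int.toNat_of_nonneg hn
    exact_mod_cast this
  rw [h1]


/-- Let `α ∈ (0,1)` be irrational with continued fraction
expansion `α = [0; a₁, a₂, …]`, encoded by the Euclidean division data `η₋₁ = 1`,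
`η₀ = α`, `η_{k-1} = a_{k+1} η_k + η_{k+1}` with `0 < η_{k+1} < η_k`.  Let `B` be
the least positive integer bounding all partial quotients `aₖ` (`k ≥ 1`), and let
`R` be the minimal constant bounding, over all `N ∈ ℕ`, the ratios of the lengths
of the subintervals into which `{nα mod 1 : n = 0, …, N}` divide the circle `ℝ/ℤ`.
Then `B − 1 ≤ R ≤ B + 2`. -/
theorem partial_quotient_bound_vs_gap_ratio_bound
    (α : ℝ) (hα : α ∈ Set.Ioo (0 : ℝ) 1) (hirr : Irrational α)
    (a : ℤ → ℤ) (η : ℤ → ℝ)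
    (hη1 : η (-1) = 1) (hη0 : η 0 = α)
    (hrec : ∀ k : ℤ, 0 ≤ k → η (k - 1) = a (k + 1) * η k + η (k + 1))
    (hpos : ∀ k : ℤ, 0 ≤ k → 0 < η (k + 1) ∧ η (k + 1) < η k)
    (B : ℤ)
    (hB : IsLeast {b : ℤ | 0 < b ∧ ∀ k : ℤ, 1 ≤ k → a k ≤ b} B)
    (R : ℝ)
    (hR : IsLeast {R' : ℝ | ∀ N : ℕ, ∀ t ∈ torusPts α N, ∀ u ∈ torusPts α N,
      cyclicGap (torusPts α N) t ≤ R' * cyclicGap (torusPts α N) u} R) :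
    (B : ℝ) - 1 ≤ R ∧ R ≤ (B : ℝ) + 2 := by
  obtain ⟨A, hA⟩ : ∃ A : ℕ → ℤ, A = fun n : ℕ => a n := ⟨_, rfl⟩
  obtain ⟨E, hE⟩ : ∃ E : ℕ → ℝ, E = fun n : ℕ => η ((n : ℤ) - 1) := ⟨_, rfl⟩
  obtain ⟨Q, hQ⟩ : ∃ Q : ℕ → ℤ, Q = cfRec A 0 1 := ⟨_, rfl⟩
  obtain ⟨P, hP⟩ : ∃ P : ℕ → ℤ, P = cfRec A 1 0 := ⟨_, rfl⟩
  have Q0 : Q 0 = 0 := by rw [hQ]; rfl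
  have Q1 : Q 1 = 1 := by rw [hQ]; rfl
  have P0 : P 0 = 1 := by rw [hP]; rfl
  have P1 : P 1 = 0 := by rw [hP]; rfl
  have QS : ∀ n, Q (n + 2) = A (n + 1) * Q (n + 1) + Q n := fun n => by rw [hQ]; rfl
  have PS : ∀ n, P (n + 2) = A (n + 1) * P (n + 1) + P n := fun n => by rw [hP]; rfl
  have E0 : E 0 = 1 := by rw [hE]; simpa using hη1
  have E1 : E 1 = α := by rw [hE]; simpa using hη0
  have ES : ∀ n, E n = A (n + 1) * E (n + 1) + E (n + 2) := fun n => by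
    have := hrec n (by omega)
    rw [hE, hA]
    simp only
    rw [this]; push_cast
    congr 2
    · congr 1; ring
    · congr 1; ring
  have Epos : ∀ n, 0 < E n := by
    intro n
    rcases n with _ | _ | n
    · rw [E0]; norm_num
    · rw [E1]; exact hα.1
    · have := (hpos n (by omega)).1
      rw [hE]; simp only
      convert this using 2; push_cast; ring
  have Elt : ∀ n, E (n + 1) < E n := by
    intro n
    rcases n with _ | n
    · rw [E0, E1]; exact hα.2
    · have := (hpos n (by omega)).2
      rw [hE]; simp only
      convert this using 2 <;> push_cast <;> ring
  have Ele1 : ∀ n, E n ≤ 1 := by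
    intro n
    induction n with
    | zero => rw [E0]
    | succ n ih => exact (Elt n).le.trans ih
  have Apos : ∀ n, 1 ≤ A (n + 1) := by
    intro n
    by_contra hc
    have : A (n + 1) ≤ 0 := by omega
    have : (A (n + 1) : ℝ) ≤ 0 := by exact_mod_cast this
    nlinarith [ES n, Elt n, Elt (n + 1), Epos (n + 1)]
  have Qge : ∀ n, 0 ≤ Q n ∧ 1 ≤ Q (n + 1) := by
    intro n
    induction n with
    | zero => simp [Q0, Q1]
    | succ n ih =>
      obtain ⟨h1, h2⟩ := ih
      have h5 := Apos n
      have h6 : Q (n + 1) ≤ A (n + 1) * Q (n + 1) := by nlinarith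
      have h7 := QS n
      exact ⟨by omega, by show 1 ≤ Q (n + 2); omega⟩
  have Qadd : ∀ n, Q (n + 1) + Q n ≤ Q (n + 2) := by
    intro n
    have h2 := (Qge n).2
    have h5 := Apos n
    have h6 : Q (n + 1) ≤ A (n + 1) * Q (n + 1) := by nlinarith
    have h7 := QS n
    omega
  have Qlin : ∀ n : ℕ, (n : ℤ) ≤ Q (n + 1) := by
    intro n
    induction n with
    | zero => simp [Q1]
    | succ n ih =>
      rcases n with _ | n
      · have := (Qge 1).2
        simpa using this
      · have h1 := Qadd (n + 1)
        have h2 := (Qge n).2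
        show _ ≤ Q (n + 1 + 2)
        push_cast at *
        have h3 : Q (n + 1 + 1) = Q (n + 2) := rfl
        omega
  have Qpos : ∀ n, 0 ≤ Q n ∧ 1 ≤ Q (n + 1) ∧ (n : ℤ) ≤ Q (n + 1) ∧ Q n ≤ Q (n + 1) := by
    intro n
    refine ⟨(Qge n).1, (Qge n).2, Qlin n, ?_⟩
    rcases n with _ | n
    · simp [Q0, Q1]
    · have h1 := Qadd n
      have h2 := (Qge n).1
      show _ ≤ Q (n + 2)
      omega
  obtain ⟨s, hs⟩ : ∃ s : ℕ → ℤ, s = fun n => (-1) ^ (n + 1) := ⟨_, rfl⟩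
  have s1 : ∀ n, s n = 1 ∨ s n = -1 := fun n => by rw [hs]; exact neg_one_pow_eq_or ℤ _
  have sS : ∀ n, s (n + 1) = - s n := fun n => by rw [hs]; simp only; ring
  have s0 : s 0 = -1 := by rw [hs]; norm_num
  have hθ : ∀ n, Q n * α - P n = s n * E n ∧ Q (n + 1) * α - P (n + 1) = s (n + 1) * E (n + 1) := by
    intro n
    induction n with
    | zero => simp [Q0, P0, Q1, P1, sS, s0, E0, E1]
    | succ n ih =>
      refine ⟨ih.2, ?_⟩
      show (Q (n + 2) : ℝ) * α - P (n + 2) = s (n + 1 + 1) * E (n + 2)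
      have e1 := ih.1
      have e2 := ih.2
      have e3 := ES n
      rw [QS, PS, sS, sS]
      rw [sS] at e2
      push_cast at *
      linear_combination e1 + (A (n + 1) : ℝ) * e2 + (s n : ℝ) * e3
  have hdet : ∀ n, Q n * P (n + 1) - P n * Q (n + 1) = s n := by
    intro n
    induction n with
    | zero => simp [Q0, P0, Q1, s0]
    | succ n ih =>
      show Q (n + 1) * P (n + 2) - P (n + 1) * Q (n + 2) = _
      rw [QS, PS, sS, ← ih]; ring
  have best : ∀ n (j z : ℤ), j ≠ 0 → -Q (n + 1) < j → j < Q (n + 1) → E n ≤ |j * α - z| := by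
    intro n j z h1 h2 h3
    refine best_approx_aux α (E n) (E (n + 1)) (Q n) (Q (n + 1)) (P n) (P (n + 1)) (s n) j z (s n)
      ?_ (Epos _) (Epos _) (hθ n).1 ?_ ?_ (hdet n) (Qpos n).1 h1 h2 h3
    · rcases s1 n with h | h <;> rw [h] <;> simp
    · rw [(hθ n).2, sS]; push_cast; ring
    · rcases s1 n with h | h <;> rw [h] <;> norm_num
  have ABle : ∀ n, A (n + 1) ≤ B := by
    intro n
    rw [hA]
    exact hB.1.2 _ (by push_cast; omega)
  have gap0 : cyclicGap (torusPts α 0) (Int.fract (((0 : ℤ) : ℝ) * α)) = 1 := by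
    apply le_antisymm
    · exact gap_le_aux α 0 0 0 le_rfl (by simp) (-1) 1 one_pos (by push_cast; ring)
    · refine le_gap_aux α 0 0 le_rfl (by simp) 1 ?_
      intro m hm hm' z hz
      obtain rfl : m = 0 := by push_cast at hm'; omega
      have := int_pos_ge_aux (-z) _ 0 le_rfl one_pos hz (by push_cast; ring)
      linarith
  constructor
  · have R1 : 1 ≤ R := by
      have h0 := mem_torusPts_aux α 0 0 le_rfl (by simp)
      have := hR.1 0 _ h0 _ h0
      rw [gap0] at this; linarith
    by_cases hB1 : B ≤ 1
    · have : (B : ℝ) ≤ 1 := by exact_mod_cast hB1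
      linarith
    · obtain ⟨n, hn⟩ : ∃ n : ℕ, B ≤ A (n + 1) := by
        by_contra hc
        push Not at hc
        have := hB.2 (show B - 1 ∈ _ from ⟨by omega, fun k hk => by
          have := hc (k - 1).toNat
          rw [hA] at this
          simp only at this
          have e : (((k - 1).toNat + 1 : ℕ) : ℤ) = k := by omega
          rw [e] at this
          omega⟩)
        omega
      -- index k = n, N = Q (n+1)
      have hq := Qpos n
      obtain ⟨N, hN⟩ : ∃ N : ℕ, (N : ℤ) = Q (n + 1) := ⟨(Q (n + 1)).toNat, by omega⟩
      obtain ⟨x, y, hx0, hxN, hy0, hyN, hxy⟩ : ∃ x y : ℤ, 0 ≤ x ∧ x ≤ N ∧ 0 ≤ y ∧ y ≤ N ∧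
          y - x = s (n + 1) * N := by
        rcases s1 (n + 1) with h | h
        · exact ⟨0, N, by omega, by omega, by omega, by omega, by rw [h]; ring⟩
        · exact ⟨N, 0, by omega, by omega, by omega, by omega, by rw [h]; ring⟩
      have hss : (s (n + 1) : ℝ) * s (n + 1) = 1 := by
        rcases s1 (n + 1) with h | h <;> rw [h] <;> norm_num
      have hyx : ((y : ℝ) - x) * α - ((s (n + 1) * P (n + 1) : ℤ) : ℝ) = E (n + 1) := by
        have h1 : (y : ℝ) - x = s (n + 1) * Q (n + 1) := by rw [hN] at hxy; exact_mod_cast hxy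
        rw [h1]; push_cast
        linear_combination (s (n + 1) : ℝ) * (hθ n).2 + E (n + 1) * hss
      have hsmall := gap_le_aux α N x y hy0 hyN (s (n + 1) * P (n + 1)) (E (n + 1)) (Epos _) hyx.symm
      have hbig : E n - E (n + 1) ≤ cyclicGap (torusPts α N) (Int.fract ((y : ℝ) * α)) := by
        refine le_gap_aux α N y hy0 hyN _ ?_
        intro m hm hmN z hz
        have hEn := Ele1 n
        have hEp := Epos (n + 1)
        have hEl := Elt n
        by_cases hmy : m = y
        · subst hmy
          have := int_pos_ge_aux (-z) _ 0 le_rfl one_pos hz (by push_cast; ring)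
          linarith
        by_cases hmx : m = x
        · subst hmx
          have := int_pos_ge_aux (-z - s (n + 1) * P (n + 1)) _ (E (n + 1)) hEp.le (by linarith) hz
            (by rw [← hyx]; push_cast; ring)
          linarith
        · have hr : -Q (n + 1) < m - y ∧ m - y < Q (n + 1) := by
            rcases s1 (n + 1) with h | h <;> rw [h] at hxy <;> constructor <;> omega
          have := best n (m - y) z (by omega) hr.1 hr.2
          push_cast at this
          rw [abs_of_pos hz] at this
          linarith
      have h1 := hR.1 N _ (mem_torusPts_aux α N y hy0 hyN) _ (mem_torusPts_aux α N x hx0 hxN)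
      have h2 : E n - E (n + 1) ≤ R * E (n + 1) :=
        hbig.trans (h1.trans (mul_le_mul_of_nonneg_left hsmall (by linarith)))
      have h3 : (B : ℝ) ≤ A (n + 1) := by exact_mod_cast hn
      have h4 := ES n
      have h5 := Epos (n + 1)
      have h6 := Epos (n + 2)
      by_contra hc
      push Not at hc
      nlinarith
  · apply hR.2
    intro N t ht u hu
    have hBpos : (0 : ℝ) < B := by exact_mod_cast hB.1.1
    unfold torusPts at ht hu
    rw [Finset.mem_image] at ht hu
    obtain ⟨t, htN, rfl⟩ := ht
    obtain ⟨u, huN, rfl⟩ := hu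
    rw [Finset.mem_range] at htN huN
    rcases Nat.eq_zero_or_pos N with rfl | hNpos
    · obtain rfl : t = 0 := by omega
      obtain rfl : u = 0 := by omega
      have e : ((0 : ℕ) : ℝ) = ((0 : ℤ) : ℝ) := by norm_num
      rw [e, gap0]; linarith
    -- find k
    obtain ⟨n, hn1, hn2⟩ : ∃ n : ℕ, Q (n + 1) ≤ N ∧ (N : ℤ) < Q (n + 2) := by
      by_contra hc
      push Not at hc
      have : ∀ n, Q (n + 1) ≤ N := by
        intro n
        induction n with
        | zero => rw [Q1]; omega
        | succ n ih => exact hc n ih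
      have h1 := this (N + 1)
      have h2 := (Qpos (N + 1)).2.2.1
      push_cast at h2
      omega
    have hq := Qpos n
    have hlow : E (n + 1) ≤ cyclicGap (torusPts α N) (Int.fract ((u : ℝ) * α)) := by
      have := le_gap_aux α N u (by omega) (by omega) (E (n + 1)) (by
        intro m hm hmN z hz
        by_cases hmu : m = u
        · subst hmu
          have := int_pos_ge_aux (-z) _ 0 le_rfl one_pos hz (by push_cast; ring)
          linarith [Ele1 (n + 1)]
        · have := best (n + 1) (m - u) z (by omega) (by show -Q (n + 2) < _; omega)
            (by show _ < Q (n + 2); omega)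
          push_cast at this hz ⊢
          rw [abs_of_pos hz] at this
          exact this)
      simpa using this
    have hup : cyclicGap (torusPts α N) (Int.fract ((t : ℝ) * α)) ≤ E n + E (n + 1) := by
      have hEn := Epos n
      have hEp := Epos (n + 1)
      have h1 := (hθ n).1
      have h2 := (hθ n).2
      have hsS := sS n
      suffices h : ∃ m z : ℤ, 0 ≤ m ∧ m ≤ N ∧ (((m : ℝ) - t) * α - z = E n ∨
          ((m : ℝ) - t) * α - z = E n + E (n + 1)) by
        obtain ⟨m, z, hm, hmN, h⟩ := h
        have e : ((t : ℕ) : ℝ) = ((t : ℤ) : ℝ) := by norm_num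
        rw [e] at h ⊢
        rcases h with h | h
        · have := gap_le_aux α N t m hm hmN z _ hEn h.symm
          linarith
        · exact gap_le_aux α N t m hm hmN z _ (by linarith) h.symm
      rcases s1 n with h | h
      · rw [hsS, h] at h2
        rw [h] at h1
        push_cast at h1 h2
        by_cases hc : t + Q n ≤ N
        · refine ⟨t + Q n, P n, by omega, hc, Or.inl ?_⟩
          push_cast; linarith
        · refine ⟨t + Q n - Q (n + 1), P n - P (n + 1), by omega, by omega, Or.inr ?_⟩
          push_cast; linarith
      · rw [hsS, h] at h2
        rw [h] at h1
        push_cast at h1 h2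
        by_cases hc : Q n ≤ t
        · refine ⟨t - Q n, - P n, by omega, by omega, Or.inl ?_⟩
          push_cast; linarith
        · refine ⟨t - Q n + Q (n + 1), P (n + 1) - P n, by omega, by omega, Or.inr ?_⟩
          push_cast; linarith
    have h3 : (A (n + 1) : ℝ) ≤ B := by exact_mod_cast ABle n
    have h4 := ES n
    have h5 := Epos (n + 1)
    have h6 := Elt (n + 1)
    have h7 : E n + E (n + 1) ≤ (B + 2) * E (n + 1) := by nlinarith
    exact hup.trans (h7.trans (mul_le_mul_of_nonneg_left hlow (by linarith)))
end

section
/- Let α ∈ (0,1) be irrational with continued fraction convergents pₖ/qₖ and ηₖ = (−1)ᵏ(qₖα − pₖ). For N = qₖ + q_{k−1} − 1, exactly two distinct lengths appear in the partition of the circle ℝ/ℤ by the points {nα mod 1 : n = 0, 1, …, N}, namely η_{k−1} and ηₖ. -/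
theorem gap_isLeast (α : ℝ) (N n : ℕ) (hn : n ≤ N) (e : ℝ)
    (he : 0 < e) (m : ℕ) (hm : m ≤ N) (z : ℤ) (hz : (m : ℝ) * α - n * α - z = e)
    (hmin : ∀ (m : ℕ) (z : ℤ), m ≤ N → 0 < (m : ℝ) * α - n * α - z →
      e ≤ (m : ℝ) * α - n * α - z) :
    cyclicGap (torusPts α N) (Int.fract ((n : ℝ) * α)) = e := by
  unfold cyclicGap
  apply IsLeast.csInf_eq
  constructor
  · refine ⟨he, ?_⟩
    unfold torusPts
    rw [Finset.mem_image]
    refine ⟨m, Finset.mem_range.mpr (by omega), ?_⟩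
    rw [Int.fract_eq_fract]
    refine ⟨z + ⌊(n : ℝ) * α⌋, ?_⟩
    have := Int.self_sub_floor ((n : ℝ) * α)
    push_cast
    linarith
  · rintro d ⟨hd, hmem⟩
    unfold torusPts at hmem
    rw [Finset.mem_image] at hmem
    obtain ⟨m', hm', h⟩ := hmem
    rw [Int.fract_eq_fract] at h
    obtain ⟨w, hw⟩ := h
    have hf := Int.self_sub_floor ((n : ℝ) * α)
    have hdeq : d = (m' : ℝ) * α - n * α - ((w - ⌊(n : ℝ) * α⌋ : ℤ) : ℝ) := by
      push_cast
      linarith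
    have := hmin m' (w - ⌊(n : ℝ) * α⌋) (by have := Finset.mem_range.mp hm'; omega)
      (by rw [← hdeq]; exact hd)
    rw [hdeq]; exact this

/-- Decomposition in a unimodular basis. -/
theorem decomp (α e f : ℝ) (u v r s D : ℤ) (hD : D = 1 ∨ D = -1) (hdet : u * s - v * r = D)
    (he : (u : ℝ) * α - r = e) (hf : (v : ℝ) * α - s = -f) (j i : ℤ) :
    ∃ x y : ℤ, j = x * u + y * v ∧ (j : ℝ) * α - i = x * e - y * f := by
  have hDD : D * D = 1 := by rcases hD with h | h <;> simp [h]
  have hj : j = (D * (j * s - i * v)) * u + (D * (i * u - j * r)) * v := by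
    have : (D * (j * s - i * v)) * u + (D * (i * u - j * r)) * v = D * j * (u * s - v * r) := by
      ring
    rw [this, hdet]; linear_combination (-j) * hDD
  have hi : i = (D * (j * s - i * v)) * r + (D * (i * u - j * r)) * s := by
    have : (D * (j * s - i * v)) * r + (D * (i * u - j * r)) * s = D * i * (u * s - v * r) := by
      ring
    rw [this, hdet]; linear_combination (-i) * hDD
  generalize D * (j * s - i * v) = x at hj hi
  generalize D * (i * u - j * r) = y at hj hi
  refine ⟨x, y, hj, ?_⟩
  have hj' : (j : ℝ) = x * u + y * v := by exact_mod_cast hj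
  have hi' : (i : ℝ) = x * r + y * s := by exact_mod_cast hi
  rw [hj', hi']
  linear_combination (x : ℝ) * he + (y : ℝ) * hf

theorem two_gaps (α e f : ℝ) (u v r s D : ℤ) (hD : D = 1 ∨ D = -1)
    (hdet : u * s - v * r = D) (hu : 1 ≤ u) (hv : 1 ≤ v)
    (he : (u : ℝ) * α - r = e) (hf : (v : ℝ) * α - s = -f) (he0 : 0 < e) (hf0 : 0 < f)
    (N : ℕ) (hN : (N : ℤ) = u + v - 1) :
    (torusPts α N).image (cyclicGap (torusPts α N)) = {e, f} := by
  -- sign analysis shared by both cases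
  have key : ∀ (n m : ℕ) (z : ℤ), n ≤ N → m ≤ N → 0 < (m : ℝ) * α - n * α - z →
      ∃ x y : ℤ, (m : ℤ) - n = x * u + y * v ∧ (m : ℝ) * α - n * α - z = x * e - y * f ∧
        0 ≤ x ∧ y ≤ 0 := by
    intro n m z hn hm hd
    obtain ⟨x, y, h1, h2⟩ := decomp α e f u v r s D hD hdet he hf ((m : ℤ) - n) z
    push_cast at h2
    have h3 : (m : ℝ) * α - n * α - z = x * e - y * f := by rw [← h2]; ring
    rw [h3] at hd
    refine ⟨x, y, h1, h3, ?_, ?_⟩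
    · by_contra! hx
      have hx' : x ≤ -1 := by omega
      have hy : y ≤ -1 := by
        by_contra! hy
        have hy' : (0 : ℝ) ≤ y := by exact_mod_cast (by omega : 0 ≤ y)
        have hx2 : (x : ℝ) ≤ 0 := by exact_mod_cast hx.le
        nlinarith [mul_nonneg hy' hf0.le, mul_nonneg (neg_nonneg.mpr hx2) he0.le]
      nlinarith
    · by_contra! hy
      have hx : 1 ≤ x := by
        by_contra! hx
        have hy' : (0 : ℝ) ≤ y := by exact_mod_cast hy.le
        have hx2 : (x : ℝ) ≤ 0 := by exact_mod_cast (by omega : x ≤ 0)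
        nlinarith [mul_nonneg hy' hf0.le, mul_nonneg (neg_nonneg.mpr hx2) he0.le]
      nlinarith
  have gap1 : ∀ n : ℕ, (n : ℤ) < v →
      cyclicGap (torusPts α N) (Int.fract ((n : ℝ) * α)) = e := by
    intro n hn
    have hnN : n ≤ N := by omega
    obtain ⟨m, hm⟩ := Int.eq_ofNat_of_zero_le (by omega : 0 ≤ (n : ℤ) + u)
    refine gap_isLeast α N n hnN e he0 m (by omega) r ?_ ?_
    · have : (m : ℝ) = n + u := by exact_mod_cast hm.symm
      rw [this]; linarith
    · intro m z hm hd
      obtain ⟨x, y, h1, h2, hx, hy⟩ := key n m z hnN hm hd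
      rw [h2]
      have hx1 : 1 ≤ x := by
        by_contra! hx1
        have hx0 : x = 0 := by omega
        subst hx0
        rcases hy.lt_or_eq with hy | hy
        · nlinarith
        · subst hy
          rw [h2] at hd
          simp at hd
      have hx' : (1 : ℝ) ≤ x := by exact_mod_cast hx1
      have hy' : (y : ℝ) ≤ 0 := by exact_mod_cast hy
      nlinarith [mul_nonneg (neg_nonneg.mpr hy') hf0.le]
  have gap2 : ∀ n : ℕ, n ≤ N → v ≤ (n : ℤ) →
      cyclicGap (torusPts α N) (Int.fract ((n : ℝ) * α)) = f := by
    intro n hnN hn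
    obtain ⟨m, hm⟩ := Int.eq_ofNat_of_zero_le (by omega : 0 ≤ (n : ℤ) - v)
    refine gap_isLeast α N n hnN f hf0 m (by omega) (-s) ?_ ?_
    · have : (m : ℝ) = n - v := by exact_mod_cast hm.symm
      rw [this]; push_cast; linarith
    · intro m z hm hd
      obtain ⟨x, y, h1, h2, hx, hy⟩ := key n m z hnN hm hd
      rw [h2]
      have hy1 : y ≤ -1 := by
        by_contra! hy1
        have hy0 : y = 0 := by omega
        subst hy0
        rcases hx.lt_or_eq with hx | hx
        · nlinarith
        · subst hx
          rw [h2] at hd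
          simp at hd
      have hx' : (0 : ℝ) ≤ x := by exact_mod_cast hx
      have hy' : (y : ℝ) ≤ -1 := by exact_mod_cast hy1
      nlinarith [mul_nonneg hx' he0.le]
  have mem : ∀ n : ℕ, n ≤ N → Int.fract ((n : ℝ) * α) ∈ torusPts α N := by
    intro n hn
    unfold torusPts
    exact Finset.mem_image.mpr ⟨n, Finset.mem_range.mpr (by omega), rfl⟩
  ext d
  rw [Finset.mem_image, Finset.mem_insert, Finset.mem_singleton]
  constructor
  · rintro ⟨t, ht, rfl⟩
    have ht' := ht
    unfold torusPts at ht'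
    obtain ⟨n, hn, rfl⟩ := Finset.mem_image.mp ht'
    have hn' := Finset.mem_range.mp hn
    rcases lt_or_ge (n : ℤ) v with h | h
    · left; exact gap1 n h
    · right; exact gap2 n (by omega) h
  · rintro (rfl | rfl)
    · exact ⟨_, mem 0 (by omega), gap1 0 (by omega)⟩
    · obtain ⟨m, hm⟩ := Int.eq_ofNat_of_zero_le (by omega : 0 ≤ v)
      exact ⟨_, mem m (by omega), gap2 m (by omega) (by omega)⟩

/-- Let `α ∈ (0,1)` be irrational with continued fraction
convergents `pₖ/qₖ` (`p₋₁ = 1`, `p₀ = 0`, `q₋₁ = 0`, `q₀ = 1`,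
`p_{k+1} = a_{k+1} pₖ + p_{k-1}`, `q_{k+1} = a_{k+1} qₖ + q_{k-1}`) and
`ηₖ = (−1)ᵏ (qₖ α − pₖ)`.  For `N = qₖ + q_{k-1} − 1` (with `k ≥ 1`), exactly two
distinct lengths appear in the partition of the circle `ℝ/ℤ` by the points
`{nα mod 1 : n = 0, …, N}`, namely `η_{k-1}` and `ηₖ`. -/
theorem two_lengths_at_special_N
    (α : ℝ) (hα : α ∈ Set.Ioo (0 : ℝ) 1) (hirr : Irrational α)
    (a p q : ℤ → ℤ) (η : ℤ → ℝ)
    (hp : p (-1) = 1 ∧ p 0 = 0) (hq : q (-1) = 0 ∧ q 0 = 1)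
    (hpq : ∀ k : ℤ, 0 ≤ k →
      p (k + 1) = a (k + 1) * p k + p (k - 1) ∧
      q (k + 1) = a (k + 1) * q k + q (k - 1))
    (hηdef : ∀ k : ℤ, -1 ≤ k → η k = (-1 : ℝ) ^ k * ((q k : ℝ) * α - (p k : ℝ)))
    (hpos : ∀ k : ℤ, 0 ≤ k → 0 < η (k + 1) ∧ η (k + 1) < η k)
    (N : ℕ) (k : ℤ) (hk : 1 ≤ k)
    (hN : (N : ℤ) = q k + q (k - 1) - 1) :
    (torusPts α N).image (cyclicGap (torusPts α N)) = {η (k - 1), η k} ∧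
      η (k - 1) ≠ η k := by
  have eta0 : η 0 = α := by
    rw [hηdef 0 (by norm_num), hq.2, hp.2]; simp
  have etam : η (-1) = 1 := by
    rw [hηdef (-1) (by norm_num), hq.1, hp.1]; norm_num
  have main : ∀ n : ℕ, 1 ≤ q n ∧ 0 ≤ q ((n : ℤ) - 1) ∧ 0 < η n ∧ η n < η ((n : ℤ) - 1) ∧
      (q n * p ((n : ℤ) - 1) - q ((n : ℤ) - 1) * p n = 1 ∨
        q n * p ((n : ℤ) - 1) - q ((n : ℤ) - 1) * p n = -1) := by
    intro n
    induction n with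
    | zero =>
      simp [hq.1, hq.2, hp.1, hp.2, eta0, etam, hα.1, hα.2]
    | succ n ih =>
      obtain ⟨h1, h2, h3, h4, h5⟩ := ih
      obtain ⟨hpn, hqn⟩ := hpq n (by omega)
      obtain ⟨g1, g2⟩ := hpos n (by omega)
      have e1 : η ((n : ℤ) + 1) = η ((n : ℤ) - 1) - a ((n : ℤ) + 1) * η n := by
        rw [hηdef _ (by omega), hηdef ((n : ℤ) - 1) (by omega), hηdef n (by omega), hpn, hqn,
          zpow_add₀ (by norm_num), zpow_sub₀ (by norm_num)]
        push_cast
        simp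
        ring
      have ha : 1 ≤ a ((n : ℤ) + 1) := by
        by_contra! ha
        have ha' : (a ((n : ℤ) + 1) : ℝ) ≤ 0 := by exact_mod_cast (by omega : a ((n : ℤ) + 1) ≤ 0)
        nlinarith [mul_nonneg (neg_nonneg.mpr ha') h3.le]
      have hs : ((n + 1 : ℕ) : ℤ) = (n : ℤ) + 1 := by push_cast; ring
      rw [hs, add_sub_cancel_right]
      refine ⟨?_, by omega, g1, g2, ?_⟩
      · rw [hqn]; nlinarith
      · rw [hqn, hpn]
        rcases h5 with h5 | h5
        · right; linear_combination (-1) * h5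
        · left; linear_combination (-1) * h5
  obtain ⟨n, rfl⟩ := Int.eq_ofNat_of_zero_le (by omega : 0 ≤ k)
  obtain ⟨m, hm⟩ := Int.eq_ofNat_of_zero_le (by omega : 0 ≤ (n : ℤ) - 1)
  obtain ⟨h1, h2, h3, h4, h5⟩ := main n
  obtain ⟨h1', -, h3', -, -⟩ := main m
  rw [← hm] at h1' h3'
  refine ⟨?_, h4.ne'⟩
  have E := hηdef n (by omega)
  have E' := hηdef ((n : ℤ) - 1) (by omega)
  rw [zpow_sub₀ (by norm_num)] at E'
  rcases Int.even_or_odd (n : ℤ) with ev | od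
  · rw [ev.neg_one_zpow] at E E'
    rw [Finset.pair_comm]
    exact two_gaps α _ _ (q n) (q ((n : ℤ) - 1)) (p n) (p ((n : ℤ) - 1)) _ h5 rfl h1 h1'
      (by rw [E]; ring) (by rw [E']; norm_num) h3 h3' N hN
  · rw [od.neg_one_zpow] at E E'
    refine two_gaps α _ _ (q ((n : ℤ) - 1)) (q n) (p ((n : ℤ) - 1)) (p n)
      (-(q n * p ((n : ℤ) - 1) - q ((n : ℤ) - 1) * p n)) ?_ (by ring) h1' h1
      (by rw [E']; norm_num) (by rw [E]; ring) h3' h3 N (by rw [hN]; ring)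
    rcases h5 with h5 | h5 <;> rw [h5] <;> simp
end

section
/- Let α ∈ [0,1) be irrational and r > 1/2. If the set X(√t, α) = { √n · e^{2πi n α} : n ∈ ℕ } ⊂ ℂ is r-relatively dense, then for every real m ≥ 16r² and every β ∈ [0,1) there exists n ∈ ℕ satisfying m − 3r√m ≤ n ≤ m + 3r√m and ‖nα − β‖ ≤ r/(2√m), where ‖x‖ denotes the distance from x to the nearest integer. -/
/-- `‖x‖`, the distance from the real number `x` to the nearest integer. -/
noncomputable def nearestIntDist (x : ℝ) : ℝ := |x - round x|

/-- Let `α ∈ [0,1)` be irrational and `r > 1/2`.  If `X(√t, α)`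
is `r`-relatively dense, then for every real `m ≥ 16r²` and every `β ∈ [0,1)` there
exists `n ∈ ℕ` with `m − 3r√m ≤ n ≤ m + 3r√m` and `‖nα − β‖ ≤ r/(2√m)`. -/
theorem solvable_of_fermatSpiral_relDense
    (α : ℝ) (hα : α ∈ Set.Ico (0 : ℝ) 1) (hirr : Irrational α)
    (r : ℝ) (hr : 1 / 2 < r)
    (hdense : ∀ x : ℂ, ∃ z ∈ fermatSpiral α, z ∈ Metric.ball x r) :
    ∀ m : ℝ, 16 * r ^ 2 ≤ m → ∀ β ∈ Set.Ico (0 : ℝ) 1, ∃ n : ℕ,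
      m - 3 * r * Real.sqrt m ≤ (n : ℝ) ∧
      (n : ℝ) ≤ m + 3 * r * Real.sqrt m ∧
      nearestIntDist ((n : ℝ) * α - β) ≤ r / (2 * Real.sqrt m) := by
  intro m hm β _
  set R := Real.sqrt m with hR
  have hm0 : 0 ≤ m := le_trans (by positivity) hm
  have hR2 : R ^ 2 = m := Real.sq_sqrt hm0
  have hR4 : 4 * r ≤ R := by
    apply Real.le_sqrt_of_sq_le
    nlinarith
  have hRpos : 0 < R := by linarith
  obtain ⟨z, ⟨n, hz⟩, hzb⟩ := hdense (⟨R * Real.cos (2 * Real.pi * β), R * Real.sin (2 * Real.pi * β)⟩ : ℂ)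
  set s := Real.sqrt (n : ℝ) with hs
  have hs0 : 0 ≤ s := Real.sqrt_nonneg _
  have hs2 : s ^ 2 = (n : ℝ) := Real.sq_sqrt (Nat.cast_nonneg n)
  have hz' : z = (s : ℂ) * Complex.exp (((2 * Real.pi * (n * α) : ℝ) : ℂ) * Complex.I) := by
    rw [hz]; push_cast; congr 2; ring
  have hre : z.re = s * Real.cos (2 * Real.pi * (n * α)) := by
    rw [hz', Complex.re_ofReal_mul, Complex.exp_ofReal_mul_I_re]
  have him : z.im = s * Real.sin (2 * Real.pi * (n * α)) := by
    rw [hz', Complex.im_ofReal_mul, Complex.exp_ofReal_mul_I_im]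
  set t : ℝ := (n : ℝ) * α - β with ht
  set φ : ℝ := 2 * Real.pi * (t - round t) with hφ
  have hcos : Real.cos φ = Real.cos (2 * Real.pi * (n * α)) * Real.cos (2 * Real.pi * β)
      + Real.sin (2 * Real.pi * (n * α)) * Real.sin (2 * Real.pi * β) := by
    rw [← Real.cos_sub, ← Real.cos_sub_int_mul_two_pi (2 * Real.pi * (n * α) - 2 * Real.pi * β) (round t)]
    congr 1
    rw [hφ, ht]; ring
  have hlt : s ^ 2 + R ^ 2 - 2 * s * R * Real.cos φ < r ^ 2 := by
    rw [Metric.mem_ball, Complex.dist_eq, Complex.norm_def] at hzb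
    rw [Real.sqrt_lt' (by linarith), Complex.normSq_apply] at hzb
    simp only [Complex.sub_re, Complex.sub_im, hre, him] at hzb
    have h1 := Real.sin_sq_add_cos_sq (2 * Real.pi * (n * α))
    have h2 := Real.sin_sq_add_cos_sq (2 * Real.pi * β)
    rw [hcos]
    linear_combination hzb - s ^ 2 * h1 - R ^ 2 * h2
  have hc1 := Real.cos_le_one φ
  have hsR : (s - R) ^ 2 < r ^ 2 := by
    have : 0 ≤ s * R * (1 - Real.cos φ) :=
      mul_nonneg (mul_nonneg hs0 hRpos.le) (by linarith)
    nlinarith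
  obtain ⟨hl, hu⟩ := abs_lt_of_sq_lt_sq' hsR (by linarith)
  have hcpos : 0 < Real.cos φ := by
    by_contra! h
    have : 0 ≤ s * R * (-Real.cos φ) :=
      mul_nonneg (mul_nonneg hs0 hRpos.le) (by linarith)
    nlinarith [sq_nonneg s]
  have hsin : |Real.sin φ| * R < r := by
    have h1 := Real.sin_sq_add_cos_sq φ
    have h2 : (|Real.sin φ| * R) ^ 2 < r ^ 2 := by
      rw [mul_pow, sq_abs]
      nlinarith [sq_nonneg (s - R * Real.cos φ)]
    exact lt_of_pow_lt_pow_left₀ 2 (by linarith) h2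
  have hpi := Real.pi_pos
  have habs : |φ| = 2 * Real.pi * |t - round t| := by
    rw [hφ, abs_mul, abs_of_pos (by positivity)]
  have hround := abs_sub_round t
  have hφ2 : |φ| ≤ Real.pi / 2 := by
    by_contra! h
    have := Real.cos_nonpos_of_pi_div_two_le_of_le h.le (by rw [habs]; nlinarith)
    rw [Real.cos_abs] at this
    linarith
  have hj := Real.mul_abs_le_abs_sin hφ2
  have h4 : 4 * |t - round t| ≤ |Real.sin φ| := by
    refine le_trans (le_of_eq ?_) hj
    rw [habs]; field_simp; ring
  refine ⟨n, ?_, ?_, ?_⟩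
  · rw [← hs2, ← hR2]
    nlinarith
  · rw [← hs2, ← hR2]
    nlinarith
  · rw [nearestIntDist, le_div_iff₀ (by positivity)]
    have := mul_le_mul_of_nonneg_right h4 hRpos.le
    nlinarith [mul_nonneg (abs_nonneg (t - round t)) hRpos.le]
end

section
/- Let α ∈ [0,1) be irrational and r > 1/2. Suppose that for every real m ≥ 16r² and every β ∈ [0,1) there exists n ∈ ℕ satisfying m − 3r√m ≤ n ≤ m + 3r√m and ‖nα − β‖ ≤ r/(2√m), where ‖x‖ denotes the distance from x to the nearest integer. Then the set X(√t, α) = { √n · e^{2πi n α} : n ∈ ℕ } ⊂ ℂ is 6r-relatively dense. -/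
/-- Let `α ∈ [0,1)` be irrational and `r > 1/2`.  Suppose that
for every real `m ≥ 16r²` and every `β ∈ [0,1)` there exists `n ∈ ℕ` with
`m − 3r√m ≤ n ≤ m + 3r√m` and `‖nα − β‖ ≤ r/(2√m)`.  Then `X(√t, α)` is
`6r`-relatively dense. -/
theorem fermatSpiral_relDense_of_solvable
    (α : ℝ) (hα : α ∈ Set.Ico (0 : ℝ) 1) (hirr : Irrational α)
    (r : ℝ) (hr : 1 / 2 < r)
    (hsolv : ∀ m : ℝ, 16 * r ^ 2 ≤ m → ∀ β ∈ Set.Ico (0 : ℝ) 1, ∃ n : ℕ,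
      m - 3 * r * Real.sqrt m ≤ (n : ℝ) ∧
      (n : ℝ) ≤ m + 3 * r * Real.sqrt m ∧
      nearestIntDist ((n : ℝ) * α - β) ≤ r / (2 * Real.sqrt m)) :
    ∀ x : ℂ, ∃ z ∈ fermatSpiral α, z ∈ Metric.ball x (6 * r) := by
  intro x
  rcases lt_or_ge ‖x‖ (6 * r) with hx | hx
  · refine ⟨0, ⟨0, by simp⟩, ?_⟩
    simpa [Metric.mem_ball, dist_eq_norm] using hx
  have hR : 0 < ‖x‖ := by linarith
  have hsq : Real.sqrt (‖x‖ ^ 2) = ‖x‖ := Real.sqrt_sq hR.le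
  obtain ⟨n, h1, h2, h3⟩ := hsolv (‖x‖ ^ 2) (by nlinarith)
    (Int.fract (x.arg / (2 * Real.pi))) ⟨Int.fract_nonneg _, Int.fract_lt_one _⟩
  rw [hsq] at h1 h2 h3
  refine ⟨_, ⟨n, rfl⟩, ?_⟩
  unfold nearestIntDist at h3
  set β := Int.fract (x.arg / (2 * Real.pi)) with hβ
  set k : ℤ := round ((n : ℝ) * α - β) with hk
  set δ : ℝ := (n : ℝ) * α - β - k with hδ
  set l : ℤ := ⌊x.arg / (2 * Real.pi)⌋ with hl
  have hpi := Real.pi_pos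
  have hβ' : β = x.arg / (2 * Real.pi) - l := rfl
  have hang : 2 * Real.pi * ((n : ℝ) * α) = x.arg + 2 * Real.pi * δ + (k - l : ℤ) * (2 * Real.pi) := by
    rw [hδ, hβ']; push_cast; field_simp; ring
  have hexp : Complex.exp (2 * Real.pi * Complex.I * (n * α))
      = Complex.exp (x.arg * Complex.I) * Complex.exp (Complex.I * ((2 * Real.pi * δ : ℝ) : ℂ)) := by
    rw [← Complex.exp_add, Complex.exp_eq_exp_iff_exists_int]
    refine ⟨k - l, ?_⟩
    have := congrArg (fun t : ℝ => (t : ℂ)) hang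
    push_cast at this ⊢
    linear_combination Complex.I * this
  have hs0 := Real.sqrt_nonneg (n : ℝ)
  have hss : Real.sqrt (n : ℝ) * Real.sqrt n = n := Real.mul_self_sqrt (Nat.cast_nonneg n)
  have hhalf : ‖x‖ / 2 ≤ Real.sqrt n := by
    apply Real.le_sqrt_of_sq_le
    nlinarith
  have hrad : |Real.sqrt n - ‖x‖| ≤ 2 * r := by
    rw [abs_le]
    constructor <;> by_contra! hc <;> nlinarith
  have hδb : 2 * Real.pi * |δ| * ‖x‖ ≤ Real.pi * r := by
    rw [le_div_iff₀ (by positivity)] at h3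
    nlinarith
  set E := Complex.exp (x.arg * Complex.I) with hE
  set F := Complex.exp (Complex.I * ((2 * Real.pi * δ : ℝ) : ℂ)) with hF
  have hxe : (‖x‖ : ℂ) * E = x := Complex.norm_mul_exp_arg_mul_I x
  have hEn : ‖E‖ = 1 := Complex.norm_exp_ofReal_mul_I _
  have hFn : ‖F‖ = 1 := by rw [hF, mul_comm]; exact Complex.norm_exp_ofReal_mul_I _
  have hF1 : ‖F - 1‖ ≤ 2 * Real.pi * |δ| := by
    have := Real.norm_exp_I_mul_ofReal_sub_one_le (x := 2 * Real.pi * δ)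
    rwa [Real.norm_eq_abs, abs_mul, abs_of_pos (by positivity : 0 < 2 * Real.pi)] at this
  rw [Metric.mem_ball, dist_eq_norm, hexp]
  have hdec : (Real.sqrt n : ℂ) * (E * F) - x
      = ((Real.sqrt n - ‖x‖ : ℝ) : ℂ) * (E * F) + (‖x‖ : ℂ) * (E * (F - 1)) := by
    push_cast
    linear_combination hxe
  have hle : ‖(Real.sqrt n : ℂ) * (E * F) - x‖ ≤ |Real.sqrt n - ‖x‖| + ‖x‖ * ‖F - 1‖ := by
    rw [hdec]
    refine (norm_add_le _ _).trans ?_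
    simp only [norm_mul, hEn, hFn, Complex.norm_real, Real.norm_eq_abs, abs_norm, mul_one, one_mul]
    exact le_rfl
  have hmul : ‖x‖ * ‖F - 1‖ ≤ ‖x‖ * (2 * Real.pi * |δ|) := mul_le_mul_of_nonneg_left hF1 hR.le
  have hpi4 := Real.pi_lt_four
  have : Real.pi * r < 4 * r := by
    apply mul_lt_mul_of_pos_right hpi4; linarith
  linarith
end

section
/- Let α ∈ [0,1) be irrational and 0 < s < 2. If the set X(√t, α) = { √n · e^{2πi n α} : n ∈ ℕ } ⊂ ℂ is not (s/2)-uniformly discrete, then there exists k ∈ ℕ with k ≥ 1 such that k·‖kα‖ < s², where ‖x‖ denotes the distance from x to the nearest integer. -/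
lemma fs_key_s17 (α s : ℝ) (n k : ℕ)
    (h : ‖(Real.sqrt (n + k : ℕ) * Complex.exp (2 * Real.pi * Complex.I * ((n + k : ℕ) * α)) : ℂ)
      - Real.sqrt n * Complex.exp (2 * Real.pi * Complex.I * (n * α))‖ < s) (hs0 : 0 < s) :
    (k : ℝ) * nearestIntDist ((k : ℝ) * α) < s ^ 2 := by
  have e : ∀ j : ℕ, (2 * Real.pi * Complex.I * (j * α) : ℂ)
      = ((2 * Real.pi * (j * α) : ℝ) : ℂ) * Complex.I := by
    intro j; push_cast; ring
  rw [e, e] at h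
  have h2 := pow_lt_pow_left₀ h (norm_nonneg _) (two_ne_zero)
  rw [← Complex.normSq_eq_norm_sq, Complex.normSq_apply] at h2
  simp only [Complex.sub_re, Complex.sub_im, Complex.re_ofReal_mul, Complex.im_ofReal_mul,
    Complex.exp_ofReal_mul_I_re, Complex.exp_ofReal_mul_I_im] at h2
  set A := 2 * Real.pi * (((n + k : ℕ) : ℝ) * α) with hA
  set B := 2 * Real.pi * ((n : ℝ) * α) with hB
  set y := (k : ℝ) * α - round ((k : ℝ) * α) with hy
  have hy2 : |y| ≤ 1 / 2 := abs_sub_round _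
  have hc : Real.cos (A - B) ≤ 1 - 8 * y ^ 2 := by
    have e1 : Real.cos (A - B) = Real.cos (2 * Real.pi * y) := by
      rw [← Real.cos_sub_int_mul_two_pi (A - B) (round ((k : ℝ) * α))]
      congr 1
      rw [hA, hB, hy]; push_cast; ring
    rw [e1]
    have := Real.cos_le_one_sub_mul_cos_sq (x := 2 * Real.pi * y) (by
      rw [abs_mul, abs_of_pos (by positivity)]
      nlinarith [Real.pi_pos])
    have e2 : 2 / Real.pi ^ 2 * (2 * Real.pi * y) ^ 2 = 8 * y ^ 2 := by
      field_simp [Real.pi_ne_zero]; ring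
    linarith
  rw [Real.cos_sub] at hc
  unfold nearestIntDist
  rw [← hy]
  set p := Real.sqrt ((n + k : ℕ) : ℝ) with hp
  set q := Real.sqrt (n : ℝ) with hq
  have hp0 : 0 ≤ p := Real.sqrt_nonneg _
  have hq0 : 0 ≤ q := Real.sqrt_nonneg _
  have hk : (k : ℝ) = (p - q) * (p + q) := by
    have h1 : p ^ 2 = n + k := by rw [hp, Real.sq_sqrt (by positivity)]; push_cast; ring
    have h3 : q ^ 2 = n := by rw [hq, Real.sq_sqrt (by positivity)]
    linarith
  have hmain : (p - q) ^ 2 + 16 * (p * q) * y ^ 2 < s ^ 2 := by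
    have := mul_le_mul_of_nonneg_left hc (mul_nonneg hp0 hq0)
    have hA1 : p ^ 2 * (Real.sin A ^ 2 + Real.cos A ^ 2) = p ^ 2 := by
      rw [Real.sin_sq_add_cos_sq, mul_one]
    have hB1 : q ^ 2 * (Real.sin B ^ 2 + Real.cos B ^ 2) = q ^ 2 := by
      rw [Real.sin_sq_add_cos_sq, mul_one]
    linarith
  have hyy : y ^ 2 ≤ 1 / 4 := by
    rw [← sq_abs]; nlinarith [abs_nonneg y]
  have ha : (p - q) ^ 2 ≤ s ^ 2 := by
    nlinarith [mul_nonneg (mul_nonneg hp0 hq0) (sq_nonneg y)]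
  apply lt_of_pow_lt_pow_left₀ 2 (by positivity)
  rw [mul_pow, sq_abs, hk]
  have hs4 : 0 < (s ^ 2) ^ 2 := by positivity
  have g1 := mul_le_mul_of_nonneg_left hyy (sq_nonneg ((p - q) ^ 2))
  have g2 := mul_le_mul_of_nonneg_left hmain.le (sq_nonneg (p - q))
  have g3 := mul_le_mul_of_nonneg_right ha (sq_nonneg s)
  have e3 : ((p - q) * (p + q)) ^ 2 * y ^ 2
      = ((p - q) ^ 2) ^ 2 * y ^ 2 + (p - q) ^ 2 * (16 * (p * q) * y ^ 2) / 4 := by ring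
  rw [e3]
  nlinarith

/-- Let `α ∈ [0,1)` be irrational and `0 < s < 2`.  If `X(√t, α)`
is not `(s/2)`-uniformly discrete (some open ball of radius `s/2` contains two
distinct points of it), then there exists an integer `k ≥ 1` with `k·‖kα‖ < s²`. -/
theorem small_denominator_of_not_uniformly_discrete
    (α : ℝ) (hα : α ∈ Set.Ico (0 : ℝ) 1) (hirr : Irrational α)
    (s : ℝ) (hs0 : 0 < s) (hs2 : s < 2)
    (hnot : ¬ ∀ x : ℂ, Set.Subsingleton (fermatSpiral α ∩ Metric.ball x (s / 2))) :
    ∃ k : ℕ, 1 ≤ k ∧ (k : ℝ) * nearestIntDist ((k : ℝ) * α) < s ^ 2 := by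
  push Not at hnot
  obtain ⟨x, hx⟩ := hnot
  obtain ⟨z, ⟨⟨m, hm⟩, hzb⟩, w, ⟨⟨n, hn⟩, hwb⟩, hne⟩ := hx
  have hd : ‖z - w‖ < s := by
    rw [← dist_eq_norm]
    have := dist_triangle_right z w x
    rw [Metric.mem_ball] at hzb hwb
    linarith
  have hmn : m ≠ n := by
    rintro rfl; exact hne (hm.trans hn.symm)
  rcases lt_or_gt_of_ne hmn with hlt | hlt
  · obtain ⟨k, rfl⟩ := Nat.exists_eq_add_of_lt hlt
    refine ⟨k + 1, by omega, fs_key_s17 α s m (k + 1) ?_ hs0⟩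
    rw [norm_sub_rev, hm, hn] at hd
    exact hd
  · obtain ⟨k, rfl⟩ := Nat.exists_eq_add_of_lt hlt
    refine ⟨k + 1, by omega, fs_key_s17 α s n (k + 1) ?_ hs0⟩
    rw [hm, hn] at hd
    exact hd
end

section
/- Let α ∈ [0,1) be irrational and 0 < s < 2. If there exists k ∈ ℕ with k ≥ 1 such that ‖kα‖ < s²/k, where ‖x‖ denotes the distance from x to the nearest integer, then the set X(√t, α) = { √n · e^{2πi n α} : n ∈ ℕ } ⊂ ℂ is not (1/4 + π√5)·s-uniformly discrete; that is, there exist two distinct points of X(√t, α) lying in a common open ball of radius (1/4 + π√5)·s. -/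
/-- Let `α ∈ [0,1)` be irrational and `0 < s < 2`.  If there is an
integer `k ≥ 1` with `‖kα‖ < s²/k`, then `X(√t, α)` is not
`(1/4 + π√5)·s`-uniformly discrete: two distinct points of `X(√t, α)` lie in a
common open ball of radius `(1/4 + π√5)·s`. -/
theorem not_uniformly_discrete_of_small_denominator
    (α : ℝ) (hα : α ∈ Set.Ico (0 : ℝ) 1) (hirr : Irrational α)
    (s : ℝ) (hs0 : 0 < s) (hs2 : s < 2)
    (hk : ∃ k : ℕ, 1 ≤ k ∧ nearestIntDist ((k : ℝ) * α) < s ^ 2 / (k : ℝ)) :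
    ∃ x : ℂ, ∃ z ∈ fermatSpiral α, ∃ w ∈ fermatSpiral α, z ≠ w ∧
      z ∈ Metric.ball x ((1 / 4 + Real.pi * Real.sqrt 5) * s) ∧
      w ∈ Metric.ball x ((1 / 4 + Real.pi * Real.sqrt 5) * s) := by
  obtain ⟨k, hk1, hk⟩ := hk
  unfold nearestIntDist at hk
  have hkpos : (1 : ℝ) ≤ k := by exact_mod_cast hk1
  have hk0 : (0 : ℝ) < k := by linarith
  set d : ℝ := (k : ℝ) * α - round ((k : ℝ) * α) with hd
  set n : ℕ := ⌈((k : ℝ) / s) ^ 2⌉₊ with hn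
  have hc0 : 0 < (k : ℝ) / s := by positivity
  have hc : 1 / 2 < (k : ℝ) / s := by
    rw [lt_div_iff₀ hs0]; linarith
  have hn1 : ((k : ℝ) / s) ^ 2 ≤ n := Nat.le_ceil _
  have hn2 : (n : ℝ) < ((k : ℝ) / s) ^ 2 + 1 := Nat.ceil_lt_add_one (by positivity)
  have hn3 : (n : ℝ) ≤ 5 * ((k : ℝ) / s) ^ 2 := by nlinarith
  have hr1 : (k : ℝ) / s ≤ √n := Real.le_sqrt_of_sq_le hn1
  have hr2 : √(n : ℝ) ≤ √5 * (k / s) := by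
    rw [← Real.sqrt_sq hc0.le, ← Real.sqrt_mul (by norm_num)]
    exact Real.sqrt_le_sqrt hn3
  have hr0 : 0 < √(n : ℝ) := lt_of_lt_of_le hc0 hr1
  have hlt : √(n : ℝ) < √((n + k : ℕ) : ℝ) := by
    apply Real.sqrt_lt_sqrt (by positivity)
    push_cast; linarith
  have hrad : √((n + k : ℕ) : ℝ) - √(n : ℝ) ≤ s / 2 := by
    have h1 : √((n + k : ℕ) : ℝ) ^ 2 = n + k := by
      rw [Real.sq_sqrt (by positivity)]; push_cast; ring
    have h2 : √(n : ℝ) ^ 2 = n := Real.sq_sqrt (by positivity)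
    have h3 : (k : ℝ) ≤ s * √n := by
      rw [div_le_iff₀ hs0] at hr1; linarith
    have h4 : √((n + k : ℕ) : ℝ) ≤ √n + s / 2 := by
      refine (sq_le_sq₀ (by positivity) (by positivity)).1 ?_
      nlinarith [sq_nonneg s]
    linarith
  have hang : √(n : ℝ) * (2 * Real.pi * |d|) < 2 * Real.pi * √5 * s := by
    calc √(n : ℝ) * (2 * Real.pi * |d|) < √(n : ℝ) * (2 * Real.pi * (s ^ 2 / k)) := by
          have := Real.pi_pos
          gcongr
      _ ≤ (√5 * (k / s)) * (2 * Real.pi * (s ^ 2 / k)) := by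
          have := Real.pi_pos
          gcongr
      _ = _ := by field_simp
  have hE : ∀ m : ℕ, ‖Complex.exp (2 * Real.pi * Complex.I * (m * α))‖ = 1 := by
    intro m
    rw [show (2 * Real.pi * Complex.I * (m * α) : ℂ) = ((2 * Real.pi * (m * α) : ℝ) : ℂ) * Complex.I by
      push_cast; ring]
    exact Complex.norm_exp_ofReal_mul_I _
  have hnorm : ∀ m : ℕ, ‖(√(m : ℝ) : ℂ) * Complex.exp (2 * Real.pi * Complex.I * (m * α))‖
      = √(m : ℝ) := by
    intro m
    rw [norm_mul, hE, mul_one, Complex.norm_real, Real.norm_of_nonneg (Real.sqrt_nonneg _)]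
  set e : ℕ → ℂ := fun m => Complex.exp (2 * Real.pi * Complex.I * (m * α)) with he
  have hed : e (n + k) = e n * Complex.exp (Complex.I * ((2 * Real.pi * d : ℝ) : ℂ)) := by
    simp only [he]
    rw [← Complex.exp_add, Complex.exp_eq_exp_iff_exists_int]
    refine ⟨round ((k : ℝ) * α), ?_⟩
    rw [hd]; push_cast; ring
  have hdist : dist ((√((n + k : ℕ) : ℝ) : ℂ) * e (n + k)) ((√(n : ℝ) : ℂ) * e n)
      < 2 * ((1 / 4 + Real.pi * √5) * s) := by
    rw [dist_eq_norm, hed]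
    set f := Complex.exp (Complex.I * ((2 * Real.pi * d : ℝ) : ℂ)) with hf
    have hf1 : ‖f‖ = 1 := by
      rw [hf, mul_comm]; exact Complex.norm_exp_ofReal_mul_I _
    have hf2 : ‖f - 1‖ ≤ 2 * Real.pi * |d| := by
      have := Real.norm_exp_I_mul_ofReal_sub_one_le (x := 2 * Real.pi * d)
      rwa [Real.norm_eq_abs, abs_mul, abs_of_pos (by positivity : 0 < 2 * Real.pi)] at this
    have hen : ‖e n‖ = 1 := hE n
    have hsplit : (√((n + k : ℕ) : ℝ) : ℂ) * (e n * f) - (√(n : ℝ) : ℂ) * e n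
        = ((√((n + k : ℕ) : ℝ) - √(n : ℝ) : ℝ) : ℂ) * (e n * f)
          + (√(n : ℝ) : ℂ) * (e n * (f - 1)) := by
      push_cast; ring
    rw [hsplit]
    refine lt_of_le_of_lt (norm_add_le _ _) ?_
    rw [norm_mul, norm_mul, norm_mul, norm_mul, hen, hf1, Complex.norm_real, Complex.norm_real,
      Real.norm_of_nonneg hr0.le, Real.norm_of_nonneg (by linarith)]
    have := mul_le_mul_of_nonneg_left hf2 hr0.le
    linarith
  refine ⟨midpoint ℝ ((√((n + k : ℕ) : ℝ) : ℂ) * e (n + k)) ((√(n : ℝ) : ℂ) * e n),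
    (√((n + k : ℕ) : ℝ) : ℂ) * e (n + k), ⟨n + k, rfl⟩, (√(n : ℝ) : ℂ) * e n, ⟨n, rfl⟩, ?_, ?_, ?_⟩
  · intro h
    have h' := congrArg norm h
    rw [hnorm, hnorm] at h'
    linarith
  · rw [Metric.mem_ball, dist_left_midpoint, Real.norm_of_nonneg (by norm_num)]
    linarith
  · rw [Metric.mem_ball, dist_right_midpoint, Real.norm_of_nonneg (by norm_num)]
    linarith
end
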